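/- arXiv:1007.4584 — 3 statements merged into one kernel-verified Lean document; each statement's English description precedes it below -/
import Mathlib

section
/- For n ≥ 1 and n-1 ≤ k ≤ 2n-3, the number of non-crossing connected graphs on 2n vertices (in convex position) with 2k or 2k-1 edges that are invariant under rotation by π (i.e., under the antipodal map i ↦ i+n mod 2n), summed over these two edge counts, equals binom(3n-1, n+k)*binom(k-1, n-1). -/
/-- Two chords of the circle (with vertices `0 < 1 < ⋯ < n-1` in convex position)
cross iff their endpoints interleave. -/
def Crosses {n : ℕ} (e f : Sym2 (Fin n)) : Prop :=
  ∃ a b c d : Fin n, e = s(a, b) ∧ f = s(c, d) ∧ a < c ∧ c < b ∧ b < d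

/-- A set of edges is non-crossing (and has no loops). -/
def IsNC {n : ℕ} (E : Finset (Sym2 (Fin n))) : Prop :=
  (∀ e ∈ E, ¬ e.IsDiag) ∧ ∀ e ∈ E, ∀ f ∈ E, ¬ Crosses e f

/-- The simple graph on `Fin n` determined by an edge set. -/
def graphOf {n : ℕ} (E : Finset (Sym2 (Fin n))) : SimpleGraph (Fin n) :=
  SimpleGraph.fromEdgeSet (↑E)

/-- Non-crossing connected graph. -/
def IsNCC {n : ℕ} (E : Finset (Sym2 (Fin n))) : Prop :=
  IsNC E ∧ (graphOf E).Connected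

/-- Number of non-crossing connected graphs on `n` vertices with `k` edges. -/
noncomputable def ncc (n k : ℕ) : ℕ :=
  Nat.card {E : Finset (Sym2 (Fin n)) // IsNCC E ∧ E.card = k}

/-- The edge set contains the edge `{1, n}` (in `Fin n` coordinates, `{0, n-1}`). -/
def HasEdge1n {n : ℕ} (E : Finset (Sym2 (Fin n))) : Prop :=
  ∃ a b : Fin n, (a : ℕ) = 0 ∧ (b : ℕ) = n - 1 ∧ s(a, b) ∈ E

/-- Number of non-crossing connected graphs on `n` vertices with `k` edges
containing the edge `{1, n}`. -/
noncomputable def nccEdge (n k : ℕ) : ℕ :=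
  Nat.card {E : Finset (Sym2 (Fin n)) // IsNCC E ∧ E.card = k ∧ HasEdge1n E}

/-- Rotation of the circle of `n` vertices by `m` positions. -/
def rotMap (n m : ℕ) : Fin n → Fin n := fun i => ⟨(i.1 + m) % n, Nat.mod_lt _ i.pos⟩

/-- The edge set is fixed under rotation by `m` positions. -/
def RotInv (n m : ℕ) (E : Finset (Sym2 (Fin n))) : Prop :=
  ∀ e ∈ E, Sym2.map (rotMap n m) e ∈ E

/-- Number of non-crossing connected graphs on `n` vertices with `k` edges fixed
under rotation by `m` positions. -/
noncomputable def nccRot (n k m : ℕ) : ℕ :=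
  Nat.card {E : Finset (Sym2 (Fin n)) // IsNCC E ∧ E.card = k ∧ RotInv n m E}

section NCLinear
open Classical Finset

/-- Connected (via interval cuts) noncrossing arc sets on `[0,n]`. -/
def IsC (n : ℕ) (E : Finset (ℕ × ℕ)) : Prop :=
  (∀ a b, (a, b) ∈ E → a < b ∧ b ≤ n) ∧
  (∀ a b c d, (a, b) ∈ E → (c, d) ∈ E → ¬ (a < c ∧ c < b ∧ b < d)) ∧
  (∀ x y, x ≤ y → y ≤ n → (0 < x ∨ y < n) →
    ∃ a b, (a, b) ∈ E ∧ ((x ≤ a ∧ a ≤ y ∧ y < b) ∨ (a < x ∧ x ≤ b ∧ b ≤ y)))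

/-- Visible vertices. -/
noncomputable def Vs (n : ℕ) (E : Finset (ℕ × ℕ)) : Finset ℕ :=
  (range (n + 1)).filter (fun v => ∀ a b, (a, b) ∈ E → ¬ (a < v ∧ v < b))

lemma mem_Vs {n : ℕ} {E : Finset (ℕ × ℕ)} {v : ℕ} :
    v ∈ Vs n E ↔ v ≤ n ∧ ∀ a b, (a, b) ∈ E → ¬ (a < v ∧ v < b) := by
  simp [Vs]

noncomputable def Sall (n k : ℕ) : Finset (Finset (ℕ × ℕ)) :=
  ((range (n + 1) ×ˢ range (n + 1)).powerset).filter (fun E => IsC n E ∧ E.card = k)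

lemma mem_Sall {n k : ℕ} {E : Finset (ℕ × ℕ)} : E ∈ Sall n k ↔ IsC n E ∧ E.card = k := by
  simp only [Sall, mem_filter, mem_powerset, and_iff_right_iff_imp]
  rintro ⟨h, -⟩ ⟨a, b⟩ hab
  have := h.1 a b hab
  simp; omega

noncomputable def Sm (n k m : ℕ) : Finset (Finset (ℕ × ℕ)) :=
  (Sall n k).filter (fun E => (Vs n E).card = m + 1)

noncomputable def Nm (n k m : ℕ) : ℕ := (Sm n k m).card

/-- number of visible vertices above `b` -/
noncomputable def above (V : Finset ℕ) (b : ℕ) : Finset ℕ := V.filter (fun v => b < v)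

lemma above_inj {V : Finset ℕ} {b c : ℕ} (hb : b ∈ V) (hc : c ∈ V)
    (h : (above V b).card = (above V c).card) : b = c := by
  have key : ∀ {b c : ℕ}, c ∈ V → b < c → (above V c).card < (above V b).card := by
    intro b c hc hbc
    apply card_lt_card
    refine ⟨fun x hx => ?_, fun hs => ?_⟩
    · simp only [above, mem_filter] at hx ⊢
      exact ⟨hx.1, by omega⟩
    · have : c ∈ above V c := hs (by simp [above, hc, hbc])
      simp [above] at this
  rcases lt_trichotomy b c with h1 | h1 | h1
  · have := key hc h1; omega
  · exact h1
  · have := key hb h1; omega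

lemma above_exists {V : Finset ℕ} {m : ℕ} (hm : m < V.card) : ∃ b ∈ V, (above V b).card = m := by
  have hsub : V.image (fun b => (above V b).card) ⊆ range V.card := by
    intro x hx
    simp only [mem_image] at hx
    obtain ⟨b, hb, rfl⟩ := hx
    simp only [mem_range]
    apply card_lt_card
    refine ⟨filter_subset _ _, fun hs => ?_⟩
    have := hs hb
    simp [above] at this
  have hcard : (V.image (fun b => (above V b).card)).card = V.card :=
    card_image_of_injOn (fun b hb c hc h => above_inj hb hc h)
  have := eq_of_subset_of_card_le hsub (by simp [hcard])
  have hm' : m ∈ V.image (fun b => (above V b).card) := by rw [this]; simpa using hm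
  simpa [mem_image] using hm'

lemma above_filter {V : Finset ℕ} {m : ℕ} :
    (V.filter (fun b => (above V b).card = m)).card = if m < V.card then 1 else 0 := by
  split_ifs with h
  · obtain ⟨b, hb, hm⟩ := above_exists h
    rw [card_eq_one]
    refine ⟨b, ?_⟩
    ext c
    simp only [mem_filter, mem_singleton]
    constructor
    · rintro ⟨hc, h2⟩
      exact above_inj hc hb (by omega)
    · rintro rfl; exact ⟨hb, hm⟩
  · rw [card_eq_zero, filter_eq_empty_iff]
    intro b hb hm
    have : (above V b).card < V.card := by
      apply card_lt_card
      refine ⟨filter_subset _ _, fun hs => ?_⟩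
      have := hs hb
      simp [above] at this
    omega

lemma card_above_add {V : Finset ℕ} (b : ℕ) :
    (V.filter (fun v => v ≤ b)).card + (above V b).card = V.card := by
  have := card_filter_add_card_filter_not (s := V) (fun v => v ≤ b)
  simpa [above] using this

def TopE (E : Finset (ℕ × ℕ)) (b : ℕ) : Prop := (0, b) ∈ E ∧ ∀ c, (0, c) ∈ E → c ≤ b

lemma TopE.unique {E : Finset (ℕ × ℕ)} {b c : ℕ} (h : TopE E b) (h' : TopE E c) : b = c :=
  le_antisymm (h'.2 _ h.1) (h.2 _ h'.1)

lemma exists_TopE {n : ℕ} {E : Finset (ℕ × ℕ)} (h : IsC (n + 1) E) : ∃ b, TopE E b := by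
  obtain ⟨a, b, hab, hh⟩ := h.2.2 0 0 le_rfl (by omega) (by omega)
  have ha : a = 0 := by omega
  subst ha
  have hne : (E.filter (fun p => p.1 = 0)).Nonempty := ⟨(0, b), by simp [hab]⟩
  obtain ⟨p, hp, hmax⟩ := exists_max_image _ (fun p => p.2) hne
  simp only [mem_filter] at hp hmax
  refine ⟨p.2, ?_, fun c hc => hmax (0, c) ⟨hc, rfl⟩⟩
  rw [← hp.2]; exact hp.1

lemma zero_mem_Vs (n : ℕ) (E) : 0 ∈ Vs n E := by simp [mem_Vs]

lemma last_mem_Vs {n : ℕ} {E} (h : IsC n E) : n ∈ Vs n E := by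
  rw [mem_Vs]
  refine ⟨le_rfl, fun a b hab hh => ?_⟩
  have := h.1 a b hab
  omega

lemma TopE.mem_Vs {n : ℕ} {E : Finset (ℕ × ℕ)} {b : ℕ} (h : IsC n E) (hb : TopE E b) : b ∈ Vs n E := by
  rw [_root_.mem_Vs]
  refine ⟨(h.1 _ _ hb.1).2, fun c d hcd hh => ?_⟩
  rcases Nat.eq_zero_or_pos c with rfl | hc
  · have := hb.2 d hcd; omega
  · exact h.2.1 _ _ _ _ hb.1 hcd ⟨hc, hh.1, hh.2⟩

lemma TopE.card_Vs {n : ℕ} {E : Finset (ℕ × ℕ)} {b : ℕ} (h : IsC n E) (hb : TopE E b) :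
    (Vs n E).card = (above (Vs n E) b).card + 2 := by
  have h1 := card_above_add (V := Vs n E) b
  have hpos := (h.1 _ _ hb.1).1
  have h2 : (Vs n E).filter (fun v => v ≤ b) = {0, b} := by
    ext v
    simp only [mem_filter, mem_insert, mem_singleton]
    constructor
    · rintro ⟨hv, hvb⟩
      by_contra hcon
      exact (_root_.mem_Vs.1 hv).2 _ _ hb.1 (by omega)
    · rintro (rfl | rfl)
      · exact ⟨zero_mem_Vs _ _, by omega⟩
      · exact ⟨TopE.mem_Vs h hb, le_rfl⟩
  rw [h2, card_pair (by omega)] at h1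
  omega

lemma above_congr {V W : Finset ℕ} {b : ℕ} (h : ∀ v, b < v → (v ∈ V ↔ v ∈ W)) :
    above V b = above W b := by
  ext v
  simp only [above, mem_filter]
  constructor
  · rintro ⟨h1, h2⟩; exact ⟨(h v h2).1 h1, h2⟩
  · rintro ⟨h1, h2⟩; exact ⟨(h v h2).2 h1, h2⟩

/-! ### Part A : removing the top edge keeps the graph connected -/

lemma isC_insert {n : ℕ} {E : Finset (ℕ × ℕ)} {b : ℕ} (h : IsC n E) (hb : b ∈ Vs n E) (h0 : 0 < b) :
    IsC n (insert (0, b) E) := by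
  rw [mem_Vs] at hb
  refine ⟨?_, ?_, ?_⟩
  · intro a c hac
    rw [mem_insert, Prod.mk.injEq] at hac
    rcases hac with ⟨rfl, rfl⟩ | hac
    · exact ⟨h0, hb.1⟩
    · exact h.1 _ _ hac
  · intro a b' c d h1 h2 hh
    rw [mem_insert, Prod.mk.injEq] at h1 h2
    rcases h1 with ⟨rfl, rfl⟩ | h1 <;> rcases h2 with ⟨rfl, rfl⟩ | h2
    · omega
    · exact hb.2 _ _ h2 hh.2
    · omega
    · exact h.2.1 _ _ _ _ h1 h2 hh
  · intro x y hxy hy hp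
    obtain ⟨a, c, hac, hh⟩ := h.2.2 x y hxy hy hp
    exact ⟨a, c, mem_insert_of_mem hac, hh⟩

lemma top_insert {n : ℕ} {E : Finset (ℕ × ℕ)} {b : ℕ} (h0 : 0 < b) (hb : b ∈ Vs n E) :
    TopE (insert (0, b) E) b := by
  refine ⟨mem_insert_self _ _, fun c hc => ?_⟩
  rw [mem_insert, Prod.mk.injEq] at hc
  rcases hc with ⟨_, rfl⟩ | hc
  · exact le_rfl
  · have := (mem_Vs.1 hb).2 _ _ hc
    omega

lemma above_insert {n : ℕ} {E : Finset (ℕ × ℕ)} {b : ℕ} :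
    above (Vs n (insert (0, b) E)) b = above (Vs n E) b := by
  apply above_congr
  intro v hv
  simp only [mem_Vs, mem_insert, Prod.mk.injEq]
  constructor
  · rintro ⟨h1, h2⟩
    exact ⟨h1, fun a c hac => h2 a c (Or.inr hac)⟩
  · rintro ⟨h1, h2⟩
    refine ⟨h1, ?_⟩
    rintro a c (⟨rfl, rfl⟩ | hac)
    · omega
    · exact h2 a c hac

noncomputable def PA (n k m : ℕ) : Finset (Σ _ : Finset (ℕ × ℕ), ℕ) :=
  (Sall n k).sigma (fun E => (Vs n E).filter
    (fun b => (above (Vs n E) b).card = m ∧ 0 < b ∧ (0, b) ∉ E))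

lemma card_A (n k m : ℕ) :
    ((Sm (n + 1) (k + 1) (m + 1)).filter
      (fun E => ∃ b, TopE E b ∧ IsC (n + 1) (E.erase (0, b)))).card = (PA (n + 1) k m).card := by
  symm
  refine card_bij (fun p _ => insert (0, p.2) p.1) ?_ ?_ ?_
  · rintro ⟨E, b⟩ hp
    simp only [PA, mem_sigma, mem_filter, mem_Sall] at hp
    obtain ⟨⟨hE, hk⟩, hb, hm, h0, hn⟩ := hp
    have hI := isC_insert hE hb h0
    have hT := top_insert h0 hb
    simp only [Sm, mem_filter, mem_Sall]
    refine ⟨⟨⟨hI, ?_⟩, ?_⟩, b, hT, ?_⟩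
    · rw [card_insert_of_notMem hn, hk]
    · rw [TopE.card_Vs hI hT, above_insert, hm]
    · rw [erase_insert hn]; exact hE
  · rintro ⟨E, b⟩ hp ⟨E', b'⟩ hp' heq
    simp only [PA, mem_sigma, mem_filter, mem_Sall] at hp hp'
    obtain ⟨⟨hE, hk⟩, hb, hm, h0, hn⟩ := hp
    obtain ⟨⟨hE', hk'⟩, hb', hm', h0', hn'⟩ := hp'
    simp only at heq
    have hT := top_insert h0 hb
    have hT' := top_insert h0' hb'
    rw [← heq] at hT'
    obtain rfl := TopE.unique hT hT'
    have : E = E' := by rw [← erase_insert hn, heq, erase_insert hn']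
    rw [this]
  · intro E hE
    simp only [Sm, mem_filter, mem_Sall] at hE
    obtain ⟨⟨⟨hE, hk⟩, hV⟩, b, hT, hI⟩ := hE
    have hins : insert (0, b) (E.erase (0, b)) = E := insert_erase hT.1
    refine ⟨⟨E.erase (0, b), b⟩, ?_, hins⟩
    simp only [PA, mem_sigma, mem_filter, mem_Sall]
    refine ⟨⟨hI, ?_⟩, ?_, ?_, (hE.1 _ _ hT.1).1, by simp⟩
    · rw [card_erase_of_mem hT.1, hk]; rfl
    · have := TopE.mem_Vs hE hT
      rw [mem_Vs] at this ⊢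
      exact ⟨this.1, fun a c hac => this.2 a c (mem_of_mem_erase hac)⟩
    · have := TopE.card_Vs hE hT
      rw [← above_insert, hins]
      omega

lemma fiber_A {n m : ℕ} {E : Finset (ℕ × ℕ)} (h : IsC (n + 1) E) :
    ((Vs (n + 1) E).filter (fun b => (above (Vs (n + 1) E) b).card = m ∧ 0 < b ∧ (0, b) ∉ E)).card
      = if m + 2 < (Vs (n + 1) E).card then 1 else 0 := by
  obtain ⟨t, hT⟩ := exists_TopE h
  have htV := TopE.mem_Vs h hT
  have htc := TopE.card_Vs h hT
  have ht0 := (h.1 _ _ hT.1).1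
  split_ifs with hm
  · have h1 := above_filter (V := Vs (n + 1) E) (m := m)
    rw [if_pos (by omega)] at h1
    refine Eq.trans ?_ h1
    congr 1
    apply filter_congr
    intro b hb
    simp only [and_iff_left_iff_imp]
    intro hbm
    have htb : t < b := by
      by_contra hcon
      have hsub : above (Vs (n+1) E) t ⊆ above (Vs (n+1) E) b := by
        intro x hx
        simp only [above, mem_filter] at hx ⊢
        exact ⟨hx.1, by omega⟩
      have := card_le_card hsub
      omega
    refine ⟨by omega, fun hb0 => ?_⟩
    have := hT.2 _ hb0
    omega
  · rw [card_eq_zero, filter_eq_empty_iff]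
    rintro b hb ⟨hbm, hb0, hbE⟩
    rcases lt_trichotomy t b with h1 | h1 | h1
    · have hsub : above (Vs (n+1) E) b ⊆ (above (Vs (n+1) E) t).erase b := by
        intro x hx
        simp only [above, mem_filter, mem_erase] at hx ⊢
        exact ⟨by omega, hx.1, by omega⟩
      have h2 := card_le_card hsub
      have hbm' : b ∈ above (Vs (n+1) E) t := by simp [above, hb, h1]
      have h3 := card_pos.2 ⟨b, hbm'⟩
      rw [card_erase_of_mem hbm'] at h2
      omega
    · subst h1; exact hbE hT.1
    · exact (mem_Vs.1 hb).2 _ _ hT.1 ⟨hb0, h1⟩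

end NCLinear
section NCSplit
open Classical Finset

def spl (g : ℕ) (p : ℕ × ℕ) : ℕ × ℕ := if p.2 ≤ g then p else (p.1 + 1, p.2 + 1)

lemma spl_inj (g : ℕ) : Function.Injective (spl g) := by
  rintro ⟨a, b⟩ ⟨c, d⟩ h
  simp only [spl] at h
  split_ifs at h with h1 h2 h2
  · exact h
  all_goals
    simp only [Prod.mk.injEq] at h
    simp only [Prod.mk.injEq]
    omega

lemma mem_split {g : ℕ} {E : Finset (ℕ × ℕ)} {c d : ℕ} :
    (c, d) ∈ E.image (spl g) ↔
      (d ≤ g ∧ (c, d) ∈ E) ∨ (∃ c' d', c = c' + 1 ∧ d = d' + 1 ∧ g < d' ∧ (c', d') ∈ E) := by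
  simp only [mem_image, spl, Prod.exists]
  constructor
  · rintro ⟨a, b, hab, h⟩
    split_ifs at h with h1
    · simp only [Prod.mk.injEq] at h
      obtain ⟨rfl, rfl⟩ := h
      exact Or.inl ⟨h1, hab⟩
    · simp only [Prod.mk.injEq] at h
      exact Or.inr ⟨a, b, by omega, by omega, by omega, hab⟩
  · rintro (⟨h1, h2⟩ | ⟨a, b, rfl, rfl, h1, h2⟩)
    · exact ⟨c, d, h2, by simp [h1]⟩
    · exact ⟨a, b, h2, by simp [not_le.2 h1]⟩

lemma mem_split_of {g n : ℕ} {E : Finset (ℕ × ℕ)} {c d : ℕ} (hg : g ∈ Vs n E) (h : (c, d) ∈ E) :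
    (d ≤ g ∧ (c, d) ∈ E.image (spl g)) ∨ (g ≤ c ∧ g < d ∧ (c + 1, d + 1) ∈ E.image (spl g)) := by
  have := (mem_Vs.1 hg).2 _ _ h
  by_cases hd : d ≤ g
  · exact Or.inl ⟨hd, mem_split.2 (Or.inl ⟨hd, h⟩)⟩
  · exact Or.inr ⟨by omega, by omega, mem_split.2 (Or.inr ⟨c, d, rfl, rfl, by omega, h⟩)⟩

/-- the graph obtained by splitting at `g` and adding the edge `(0, b+1)`. -/
noncomputable def spi (g b : ℕ) (E : Finset (ℕ × ℕ)) : Finset (ℕ × ℕ) :=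
  insert (0, b + 1) (E.image (spl g))

lemma mem_spi {g b n : ℕ} {E : Finset (ℕ × ℕ)} (hg : g ∈ Vs n E) {c d : ℕ} :
    (c, d) ∈ spi g b E ↔ (c = 0 ∧ d = b + 1) ∨ (d ≤ g ∧ (c, d) ∈ E) ∨
      (∃ c' d', c = c' + 1 ∧ d = d' + 1 ∧ g ≤ c' ∧ g < d' ∧ (c', d') ∈ E) := by
  rw [spi, mem_insert, Prod.mk.injEq, mem_split]
  constructor
  · rintro (h | h | ⟨c', d', h1, h2, h3, h4⟩)
    · exact Or.inl h
    · exact Or.inr (Or.inl h)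
    · have := (mem_Vs.1 hg).2 _ _ h4
      exact Or.inr (Or.inr ⟨c', d', h1, h2, by omega, h3, h4⟩)
  · rintro (h | h | ⟨c', d', h1, h2, h3, h4, h5⟩)
    · exact Or.inl h
    · exact Or.inr (Or.inl h)
    · exact Or.inr (Or.inr ⟨c', d', h1, h2, h4, h5⟩)

lemma notMem_split {g b n : ℕ} {E : Finset (ℕ × ℕ)} (hg : g ∈ Vs n E) (hgb : g ≤ b) :
    (0, b + 1) ∉ E.image (spl g) := by
  rw [mem_split]
  rintro (⟨h1, h2⟩ | ⟨c', d', h1, h2, h3, h4⟩) <;> omega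

lemma spi_isC {n g b : ℕ} {E : Finset (ℕ × ℕ)} (h : IsC n E) (hg : g ∈ Vs n E) (hb : b ∈ Vs n E)
    (hgb : g ≤ b) : IsC (n + 1) (spi g b E) := by
  have hbn := (mem_Vs.1 hb).1
  have hbv := (mem_Vs.1 hb).2
  obtain ⟨H1, H2, H3⟩ := h
  have lowm : ∀ {c d}, (c, d) ∈ E → d ≤ g → (c, d) ∈ spi g b E := fun h1 h2 =>
    (mem_spi hg).2 (Or.inr (Or.inl ⟨h2, h1⟩))
  have highm : ∀ {c d}, (c, d) ∈ E → g ≤ c → (c + 1, d + 1) ∈ spi g b E := fun {c d} h1 h2 =>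
    (mem_spi hg).2 (Or.inr (Or.inr ⟨c, d, rfl, rfl, h2, by have := H1 _ _ h1; omega, h1⟩))
  have dich : ∀ {c d}, (c, d) ∈ E → d ≤ g ∨ g ≤ c := fun {c d} h1 => by
    have := (mem_Vs.1 hg).2 _ _ h1; omega
  have root : (0, b + 1) ∈ spi g b E := (mem_spi hg).2 (Or.inl ⟨rfl, rfl⟩)
  refine ⟨?_, ?_, ?_⟩
  · intro c d hcd
    rw [mem_spi hg] at hcd
    rcases hcd with ⟨h1, h2⟩ | ⟨h1, h2⟩ | ⟨c', d', h1, h2, h3, h4, h5⟩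
    · omega
    · have := H1 _ _ h2; omega
    · have := H1 _ _ h5; omega
  · intro a b' c d hab hcd hh
    rw [mem_spi hg] at hab hcd
    rcases hab with ⟨h1, h2⟩ | ⟨h1, h2⟩ | ⟨c', d', h1, h2, h3, h4, h5⟩ <;>
    rcases hcd with ⟨k1, k2⟩ | ⟨k1, k2⟩ | ⟨c'', d'', k1, k2, k3, k4, k5⟩
    · omega
    · omega
    · have := hbv _ _ k5; omega
    · omega
    · exact H2 _ _ _ _ h2 k2 hh
    · omega
    · omega
    · omega
    · exact H2 _ _ _ _ h5 k5 (by omega)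
  · intro x y hxy hy hp
    by_cases hyg : y < g
    · obtain ⟨c, d, hcd, hh⟩ := H3 x y hxy (by omega) (by omega)
      have := H1 _ _ hcd
      rcases dich hcd with h1 | h1
      · exact ⟨c, d, lowm hcd h1, hh⟩
      · omega
    by_cases hxg : g + 1 < x
    · obtain ⟨c, d, hcd, hh⟩ := H3 (x - 1) (y - 1) (by omega) (by omega) (by omega)
      have := H1 _ _ hcd
      rcases dich hcd with h1 | h1
      · omega
      · exact ⟨c + 1, d + 1, highm hcd h1, by omega⟩
    by_cases hyg' : y = g
    · by_cases hx0 : x = 0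
      · exact ⟨0, b + 1, root, by omega⟩
      · obtain ⟨c, d, hcd, hh⟩ := H3 x n (by omega) (by omega) (by omega)
        have := H1 _ _ hcd
        rcases dich hcd with h1 | h1
        · exact ⟨c, d, lowm hcd h1, by omega⟩
        · omega
    by_cases hxg' : x = g + 1
    · by_cases hyn : y = n + 1
      · exact ⟨0, b + 1, root, by omega⟩
      · obtain ⟨c, d, hcd, hh⟩ := H3 0 (y - 1) (by omega) (by omega) (by omega)
        have := H1 _ _ hcd
        rcases dich hcd with h1 | h1
        · omega
        · exact ⟨c + 1, d + 1, highm hcd h1, by omega⟩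
    · obtain ⟨c, d, hcd, hh⟩ := H3 x (y - 1) (by omega) (by omega) (by omega)
      have := H1 _ _ hcd
      rcases dich hcd with h1 | h1
      · exact ⟨c, d, lowm hcd h1, by omega⟩
      · exact ⟨c + 1, d + 1, highm hcd h1, by omega⟩

lemma spi_top {n g b : ℕ} {E : Finset (ℕ × ℕ)} (hg : g ∈ Vs n E) (hgb : g ≤ b) :
    TopE (spi g b E) (b + 1) := by
  refine ⟨(mem_spi hg).2 (Or.inl ⟨rfl, rfl⟩), fun c hc => ?_⟩
  rw [mem_spi hg] at hc
  rcases hc with ⟨_, h⟩ | ⟨h, _⟩ | ⟨c', d', h1, h2, h3, h4, h5⟩ <;> omega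

lemma spi_above {n g b : ℕ} {E : Finset (ℕ × ℕ)} (hg : g ∈ Vs n E) (hgb : g ≤ b) :
    (above (Vs (n + 1) (spi g b E)) (b + 1)).card = (above (Vs n E) b).card := by
  symm
  refine card_bij (fun v _ => v + 1) ?_ (fun _ _ _ _ h => by omega) ?_
  · intro v hv
    simp only [above, mem_filter, mem_Vs] at hv ⊢
    obtain ⟨⟨h1, h2⟩, h3⟩ := hv
    refine ⟨⟨by omega, ?_⟩, by omega⟩
    intro c d hcd
    rw [mem_spi hg] at hcd
    rcases hcd with ⟨_, h⟩ | ⟨h, _⟩ | ⟨c', d', k1, k2, k3, k4, k5⟩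
    · omega
    · omega
    · have := h2 _ _ k5; omega
  · intro v hv
    simp only [above, mem_filter, mem_Vs] at hv
    obtain ⟨⟨h1, h2⟩, h3⟩ := hv
    refine ⟨v - 1, ?_, by omega⟩
    simp only [above, mem_filter, mem_Vs]
    refine ⟨⟨by omega, fun c d hcd hh => ?_⟩, by omega⟩
    have h5 := (mem_Vs.1 hg).2 _ _ hcd
    have := h2 (c + 1) (d + 1) ((mem_spi hg).2 (Or.inr (Or.inr ⟨c, d, rfl, rfl, by omega, by omega, hcd⟩)))
    omega

/-- uncovered gap of the split graph is unique -/
lemma split_gap {n g x : ℕ} {E : Finset (ℕ × ℕ)} (h : IsC n E) (hg : g ∈ Vs n E) (hx : x ≤ n)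
    (hc : ∀ c d, (c, d) ∈ E.image (spl g) → ¬ (c ≤ x ∧ x < d)) : x = g := by
  by_contra hne
  have hgn := (mem_Vs.1 hg).1
  rcases lt_or_gt_of_ne hne with h1 | h1
  · obtain ⟨c, d, hcd, hh⟩ := h.2.2 0 x (by omega) (by omega) (by omega)
    rcases mem_split_of hg hcd with ⟨k1, k2⟩ | ⟨k1, k2, k3⟩
    · have := hc _ _ k2; omega
    · omega
  · obtain ⟨c, d, hcd, hh⟩ := h.2.2 0 (x - 1) (by omega) (by omega) (by omega)
    rcases mem_split_of hg hcd with ⟨k1, k2⟩ | ⟨k1, k2, k3⟩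
    · omega
    · have := hc _ _ k3; omega

lemma split_gap_self {n g : ℕ} {E : Finset (ℕ × ℕ)} (hg : g ∈ Vs n E) :
    ∀ c d, (c, d) ∈ E.image (spl g) → ¬ (c ≤ g ∧ g < d) := by
  intro c d hcd
  rw [mem_split] at hcd
  rcases hcd with ⟨h, _⟩ | ⟨c', d', k1, k2, k4, k5⟩
  · omega
  · have := (mem_Vs.1 hg).2 _ _ k5; omega

/-- existence of a gap -/
lemma exists_gap {n b : ℕ} {E : Finset (ℕ × ℕ)} (h : IsC n E) (hT : TopE E b)
    (hn : ¬ IsC n (E.erase (0, b))) :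
    ∃ g, g < b ∧ ∀ c d, (c, d) ∈ E.erase (0, b) → ¬ (c ≤ g ∧ g < d) := by
  obtain ⟨H1, H2, H3⟩ := h
  have hcut : ¬ (∀ x y, x ≤ y → y ≤ n → (0 < x ∨ y < n) →
    ∃ a c, (a, c) ∈ E.erase (0, b) ∧ ((x ≤ a ∧ a ≤ y ∧ y < c) ∨ (a < x ∧ x ≤ c ∧ c ≤ y))) := by
    intro hc
    exact hn ⟨fun a c hac => H1 _ _ (mem_of_mem_erase hac),
      fun a c d e h1 h2 => H2 _ _ _ _ (mem_of_mem_erase h1) (mem_of_mem_erase h2), hc⟩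
  push Not at hcut
  obtain ⟨x, y, hxy, hy, hp, hno⟩ := hcut
  obtain ⟨a, c, hac, hh⟩ := H3 x y hxy hy hp
  have hroot : a = 0 ∧ c = b := by
    by_contra hcon
    have := hno a c (mem_erase.2 ⟨by simpa using hcon, hac⟩)
    omega
  obtain ⟨rfl, rfl⟩ := hroot
  by_cases hx0 : x = 0
  · refine ⟨y, by omega, fun a' d had => ?_⟩
    have := hno a' d had
    omega
  by_cases hyn : y = n
  · refine ⟨x - 1, by omega, fun a' d had => ?_⟩
    have := hno a' d had
    have := H1 _ _ (mem_of_mem_erase had)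
    omega
  exfalso
  obtain ⟨a', d, had, hh'⟩ := H3 0 y (by omega) hy (by omega)
  have h1 : ¬ (a' = 0 ∧ d = c) := by omega
  have h2 := hno a' d (mem_erase.2 ⟨by simpa using h1, had⟩)
  rcases Nat.eq_zero_or_pos a' with rfl | ha'
  · have := hT.2 _ had; omega
  · have := H2 _ _ _ _ hT.1 had; omega

/-- contraction -/
noncomputable def contr (g : ℕ) (E : Finset (ℕ × ℕ)) : Finset (ℕ × ℕ) :=
  E.preimage (spl g) (spl_inj g).injOn

lemma contr_split {g n : ℕ} {E : Finset (ℕ × ℕ)} (hE : ∀ a b, (a, b) ∈ E → a < b ∧ b ≤ n + 1)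
    (hg : ∀ c d, (c, d) ∈ E → ¬ (c ≤ g ∧ g < d)) : (contr g E).image (spl g) = E := by
  rw [contr, image_preimage, filter_true_of_mem]
  rintro ⟨c, d⟩ hcd
  have h1 := hE _ _ hcd
  have h2 := hg _ _ hcd
  by_cases hd : d ≤ g
  · exact ⟨(c, d), by simp [spl, hd]⟩
  · refine ⟨(c - 1, d - 1), ?_⟩
    simp only [spl]
    rw [if_neg (by omega)]
    simp only [Prod.mk.injEq]
    omega

lemma mem_contr {g : ℕ} {E : Finset (ℕ × ℕ)} {c d : ℕ} :
    (c, d) ∈ contr g E ↔ (d ≤ g ∧ (c, d) ∈ E) ∨ (g < d ∧ (c + 1, d + 1) ∈ E) := by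
  rw [contr, mem_preimage, spl]
  split_ifs with h
  · simp only at h
    constructor
    · exact fun h' => Or.inl ⟨h, h'⟩
    · rintro (⟨_, h'⟩ | ⟨h', _⟩)
      · exact h'
      · omega
  · simp only at h
    constructor
    · exact fun h' => Or.inr ⟨by omega, h'⟩
    · rintro (⟨h', _⟩ | ⟨_, h'⟩)
      · omega
      · exact h'

lemma contr_isC {n g b : ℕ} {E : Finset (ℕ × ℕ)} (h : IsC (n + 1) E) (hT : TopE E (b + 1))
    (hgb : g ≤ b) (hgap : ∀ c d, (c, d) ∈ E.erase (0, b + 1) → ¬ (c ≤ g ∧ g < d)) :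
    IsC n (contr g (E.erase (0, b + 1))) ∧ g ∈ Vs n (contr g (E.erase (0, b + 1))) ∧
      b ∈ Vs n (contr g (E.erase (0, b + 1))) := by
  obtain ⟨H1, H2, H3⟩ := h
  have hbn := (H1 _ _ hT.1).2
  have cross := fun {c d : ℕ} => H2 0 (b + 1) c d hT.1
  -- cuts not seen by the root edge
  have cut : ∀ x y, x ≤ y → y ≤ n + 1 → (0 < x ∨ y < n + 1) →
      ((0 < x ∧ (b + 1 < x ∨ y < b + 1)) ∨ (x = 0 ∧ b + 1 ≤ y)) →
      ∃ c d, (c, d) ∈ E ∧ (c, d) ∈ E.erase (0, b + 1) ∧ (d ≤ g ∨ g < c) ∧ c < d ∧ d ≤ n + 1 ∧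
        ((x ≤ c ∧ c ≤ y ∧ y < d) ∨ (c < x ∧ x ≤ d ∧ d ≤ y)) := by
    intro x y h1 h2 h3 h4
    obtain ⟨c, d, hcd, hh⟩ := H3 x y h1 h2 h3
    have hne : (c, d) ∈ E.erase (0, b + 1) := by
      refine mem_erase.2 ⟨?_, hcd⟩
      rw [Ne, Prod.mk.injEq]
      omega
    have h5 := hgap _ _ hne
    have h6 := H1 _ _ hcd
    exact ⟨c, d, hcd, hne, by omega, h6.1, h6.2, hh⟩
  have lowm : ∀ {c d}, (c, d) ∈ E.erase (0, b + 1) → d ≤ g → (c, d) ∈ contr g (E.erase (0, b + 1)) :=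
    fun h1 h2 => mem_contr.2 (Or.inl ⟨h2, h1⟩)
  have highm : ∀ {c d}, (c, d) ∈ E.erase (0, b + 1) → g < c → c < d →
      (c - 1, d - 1) ∈ contr g (E.erase (0, b + 1)) := fun {c d} h1 h2 h3 =>
    mem_contr.2 (Or.inr ⟨by omega, by
      rw [show c - 1 + 1 = c by omega, show d - 1 + 1 = d by omega]; exact h1⟩)
  refine ⟨⟨?_, ?_, ?_⟩, ?_, ?_⟩
  · intro c d hcd
    rcases mem_contr.1 hcd with ⟨h1, h2⟩ | ⟨h1, h2⟩
    · have := H1 _ _ (mem_of_mem_erase h2); omega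
    · have := H1 _ _ (mem_of_mem_erase h2); omega
  · intro a b' c d hab hcd hh
    rcases mem_contr.1 hab with ⟨h1, h2⟩ | ⟨h1, h2⟩ <;>
    rcases mem_contr.1 hcd with ⟨k1, k2⟩ | ⟨k1, k2⟩
    · exact H2 _ _ _ _ (mem_of_mem_erase h2) (mem_of_mem_erase k2) hh
    · have := hgap _ _ k2; omega
    · omega
    · exact H2 _ _ _ _ (mem_of_mem_erase h2) (mem_of_mem_erase k2) (by omega)
  · intro x y hxy hy hp
    by_cases hyg : y < g
    · by_cases hx0 : x = 0
      · obtain ⟨c, d, hE, hcd, hd, hlt, hdn, hh⟩ := cut (y + 1) g (by omega) (by omega) (by omega) (by omega)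
        exact ⟨c, d, lowm hcd (by omega), by omega⟩
      · obtain ⟨c, d, hE, hcd, hd, hlt, hdn, hh⟩ := cut x y (by omega) (by omega) (by omega) (by omega)
        exact ⟨c, d, lowm hcd (by omega), by omega⟩
    by_cases hxg : g < x
    · by_cases hb : x ≤ b ∧ b ≤ y
      · obtain ⟨c, d, hE, hcd, hd, hlt, hdn, hh⟩ := cut (g + 1) x (by omega) (by omega) (by omega) (by omega)
        have := cross hE
        exact ⟨c - 1, d - 1, highm hcd (by omega) hlt, by omega⟩
      · obtain ⟨c, d, hE, hcd, hd, hlt, hdn, hh⟩ :=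
          cut (x + 1) (y + 1) (by omega) (by omega) (by omega) (by omega)
        exact ⟨c - 1, d - 1, highm hcd (by omega) hlt, by omega⟩
    by_cases h1 : 0 < x ∧ b ≤ y
    · obtain ⟨c, d, hE, hcd, hd, hlt, hdn, hh⟩ := cut x g (by omega) (by omega) (by omega) (by omega)
      exact ⟨c, d, lowm hcd (by omega), by omega⟩
    by_cases h2 : x = 0 ∧ y < b
    · obtain ⟨c, d, hE, hcd, hd, hlt, hdn, hh⟩ :=
        cut (g + 1) (y + 1) (by omega) (by omega) (by omega) (by omega)
      exact ⟨c - 1, d - 1, highm hcd (by omega) hlt, by omega⟩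
    · obtain ⟨c, d, hE, hcd, hd, hlt, hdn, hh⟩ := cut x (y + 1) (by omega) (by omega) (by omega) (by omega)
      rcases hd with hd | hd
      · exact ⟨c, d, lowm hcd (by omega), by omega⟩
      · exact ⟨c - 1, d - 1, highm hcd (by omega) hlt, by omega⟩
  · rw [mem_Vs]
    refine ⟨by omega, fun c d hcd hh => ?_⟩
    rcases mem_contr.1 hcd with ⟨h1, h2⟩ | ⟨h1, h2⟩
    · omega
    · have := hgap _ _ h2; omega
  · rw [mem_Vs]
    refine ⟨by omega, fun c d hcd hh => ?_⟩
    rcases mem_contr.1 hcd with ⟨h1, h2⟩ | ⟨h1, h2⟩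
    · omega
    · have := cross (mem_of_mem_erase h2); omega

noncomputable def PB (n k m : ℕ) : Finset (Σ _ : Finset (ℕ × ℕ), ℕ × ℕ) :=
  (Sall n k).sigma (fun E => ((Vs n E) ×ˢ (Vs n E)).filter
    (fun q => (above (Vs n E) q.2).card = m ∧ q.1 ≤ q.2))

lemma card_B (n k m : ℕ) :
    ((Sm (n + 1) (k + 1) (m + 1)).filter
      (fun E => ¬ ∃ b, TopE E b ∧ IsC (n + 1) (E.erase (0, b)))).card = (PB n k m).card := by
  symm
  refine card_bij (fun p _ => spi p.2.1 p.2.2 p.1) ?_ ?_ ?_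
  · rintro ⟨E, g, b⟩ hp
    simp only [PB, mem_sigma, mem_filter, mem_Sall, mem_product] at hp
    obtain ⟨⟨hE, hk⟩, ⟨hg, hb⟩, hm, hgb⟩ := hp
    have hI := spi_isC hE hg hb hgb
    have hT := spi_top hg hgb
    have hnm := notMem_split hg hgb
    simp only [Sm, mem_filter, mem_Sall]
    refine ⟨⟨⟨hI, ?_⟩, ?_⟩, ?_⟩
    · rw [spi, card_insert_of_notMem hnm, card_image_of_injective _ (spl_inj g), hk]
    · rw [TopE.card_Vs hI hT, spi_above hg hgb, hm]
    · rintro ⟨b', hT', hI'⟩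
      obtain rfl := TopE.unique hT hT'
      rw [spi, erase_insert hnm] at hI'
      have hgn := (mem_Vs.1 hg).1
      obtain ⟨c, d, hcd, hh⟩ := hI'.2.2 0 g (by omega) (by omega) (by omega)
      have := split_gap_self hg c d hcd
      omega
  · rintro ⟨E, g, b⟩ hp ⟨E', g', b'⟩ hp' heq
    simp only [PB, mem_sigma, mem_filter, mem_Sall, mem_product] at hp hp'
    obtain ⟨⟨hE, hk⟩, ⟨hg, hb⟩, hm, hgb⟩ := hp
    obtain ⟨⟨hE', hk'⟩, ⟨hg', hb'⟩, hm', hgb'⟩ := hp'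
    simp only at heq
    have hT := spi_top hg hgb
    have hT' := spi_top hg' hgb'
    rw [← heq] at hT'
    have hbb := TopE.unique hT hT'
    obtain rfl : b = b' := by omega
    have him : E.image (spl g) = E'.image (spl g') := by
      rw [← erase_insert (notMem_split hg hgb), ← erase_insert (notMem_split hg' hgb')]
      exact congrArg (fun s => s.erase (0, b + 1)) heq
    have hgg : g = g' := split_gap hE' hg' (mem_Vs.1 hg).1 (by
      rw [← him]; exact split_gap_self hg)
    subst hgg
    have := image_injective (spl_inj g) him
    rw [this]
  · intro E hE
    simp only [Sm, mem_filter, mem_Sall] at hE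
    obtain ⟨⟨⟨hE, hk⟩, hV⟩, hno⟩ := hE
    obtain ⟨t, hT⟩ := exists_TopE hE
    have hno' : ¬ IsC (n + 1) (E.erase (0, t)) := fun h => hno ⟨t, hT, h⟩
    obtain ⟨g, hgt, hgap⟩ := exists_gap hE hT hno'
    obtain ⟨b, rfl⟩ : ∃ b, t = b + 1 := ⟨t - 1, by omega⟩
    obtain ⟨hC, hgV, hbV⟩ := contr_isC hE hT (by omega) hgap
    have hsp : (contr g (E.erase (0, b + 1))).image (spl g) = E.erase (0, b + 1) :=
      contr_split (fun a c hac => hE.1 a c (mem_of_mem_erase hac)) hgap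
    have hspi : spi g b (contr g (E.erase (0, b + 1))) = E := by
      rw [spi, hsp, insert_erase hT.1]
    refine ⟨⟨contr g (E.erase (0, b + 1)), g, b⟩, ?_, hspi⟩
    simp only [PB, mem_sigma, mem_filter, mem_Sall, mem_product]
    refine ⟨⟨hC, ?_⟩, ⟨hgV, hbV⟩, ?_, by omega⟩
    · rw [← card_image_of_injective _ (spl_inj g), hsp, card_erase_of_mem hT.1, hk]; rfl
    · have h1 := TopE.card_Vs hE hT
      have h2 := spi_above (b := b) hgV (by omega)
      rw [hspi] at h2
      omega

lemma fiber_B (V : Finset ℕ) (m : ℕ) :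
    ((V ×ˢ V).filter (fun q => (above V q.2).card = m ∧ q.1 ≤ q.2)).card = V.card - m := by
  by_cases hm : m < V.card
  · obtain ⟨b, hb, hbm⟩ := above_exists hm
    have := card_above_add (V := V) b
    rw [show V.card - m = (V.filter (fun v => v ≤ b)).card by omega]
    refine card_bij (fun q _ => q.1) ?_ ?_ ?_
    · rintro ⟨x, y⟩ hq
      simp only [mem_filter, mem_product] at hq ⊢
      obtain rfl := above_inj hq.1.2 hb (by omega)
      exact ⟨hq.1.1, hq.2.2⟩
    · rintro ⟨x, y⟩ hq ⟨x', y'⟩ hq' h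
      simp only [mem_filter, mem_product] at hq hq' h
      obtain rfl := above_inj hq.1.2 hq'.1.2 (by omega)
      rw [h]
    · intro v hv
      simp only [mem_filter] at hv
      exact ⟨(v, b), by simp [hv, hb, hbm], rfl⟩
  · rw [show V.card - m = 0 by omega, card_eq_zero, filter_eq_empty_iff]
    rintro ⟨x, y⟩ hxy ⟨h1, h2⟩
    simp only [mem_product] at hxy
    have h3 := card_above_add (V := V) y
    have : 0 < (V.filter (fun v => v ≤ y)).card := card_pos.2 ⟨y, by simp [hxy.2]⟩
    simp only at h1
    omega

lemma card_Vs_le (n : ℕ) (E) : (Vs n E).card ≤ n + 1 := by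
  have := card_le_card (filter_subset (fun v => ∀ a b, (a, b) ∈ E → ¬ (a < v ∧ v < b)) (range (n + 1)))
  simpa [Vs] using this

lemma sum_Sall (n k : ℕ) (f : ℕ → ℕ) :
    ∑ E ∈ Sall n k, f (Vs n E).card = ∑ r ∈ range (n + 1), Nm n k r * f (r + 1) := by
  have hmaps : ∀ E ∈ Sall n k, (Vs n E).card - 1 ∈ range (n + 1) := by
    intro E _
    have := card_Vs_le n E
    simp; omega
  rw [← sum_fiberwise_of_maps_to hmaps]
  apply sum_congr rfl
  intro r _
  have : (Sall n k).filter (fun E => (Vs n E).card - 1 = r) = Sm n k r := by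
    rw [Sm]
    apply filter_congr
    intro E _
    have := card_pos.2 ⟨0, zero_mem_Vs n E⟩
    omega
  rw [this, Nm, ← smul_eq_mul, ← sum_const]
  apply sum_congr rfl
  intro E hE
  simp only [Sm, mem_filter] at hE
  rw [hE.2]

theorem Nm_rec (n k m : ℕ) :
    Nm (n + 1) (k + 1) (m + 1) =
      (∑ r ∈ range (n + 2), Nm (n + 1) k r * (if m + 2 ≤ r then 1 else 0)) +
      ∑ s ∈ range (n + 1), Nm n k s * (s + 1 - m) := by
  rw [Nm, ← card_filter_add_card_filter_not
    (fun E => ∃ b, TopE E b ∧ IsC (n + 1) (E.erase (0, b))), card_A, card_B]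
  congr 1
  · rw [PA, card_sigma]
    have h1 := sum_Sall (n + 1) k (fun c => if m + 2 < c then 1 else 0)
    rw [sum_congr rfl (fun E hE => fiber_A (mem_Sall.1 hE).1), h1]
    apply sum_congr rfl
    intro r _
    congr 2
    simp only [eq_iff_iff]; omega
  · rw [PB, card_sigma, ← sum_Sall n k (fun c => c - m)]
    exact sum_congr rfl (fun E _ => fiber_B _ _)

lemma Nm_zero_k (n m : ℕ) : Nm (n + 1) 0 m = 0 := by
  rw [Nm, card_eq_zero, Sm, filter_eq_empty_iff]
  intro E hE
  rw [mem_Sall] at hE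
  obtain ⟨b, hb⟩ := exists_TopE hE.1
  have := card_pos.2 ⟨_, hb.1⟩
  omega

lemma Nm_m_zero (n k : ℕ) : Nm (n + 1) k 0 = 0 := by
  rw [Nm, card_eq_zero, Sm, filter_eq_empty_iff]
  intro E hE
  rw [mem_Sall] at hE
  obtain ⟨b, hb⟩ := exists_TopE hE.1
  have := TopE.card_Vs hE.1 hb
  omega

lemma Nm_zero_succ (k m : ℕ) : Nm 0 (k + 1) m = 0 := by
  rw [Nm, card_eq_zero, Sm, filter_eq_empty_iff]
  intro E hE
  rw [mem_Sall] at hE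
  obtain ⟨⟨a, b⟩, hab⟩ := card_pos.1 (show 0 < E.card by omega)
  have := hE.1.1 _ _ hab
  omega

lemma Nm_zero_zero (m : ℕ) : Nm 0 0 m = if m = 0 then 1 else 0 := by
  have hS : Sall 0 0 = {∅} := by
    ext E
    rw [mem_Sall, mem_singleton]
    constructor
    · rintro ⟨_, h⟩; exact card_eq_zero.1 h
    · rintro rfl
      refine ⟨⟨by simp, by simp, fun x y h1 h2 h3 => by omega⟩, rfl⟩
  have hV : (Vs 0 ∅).card = 1 := by simp [Vs]
  rw [Nm, Sm, hS, filter_singleton, hV]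
  split_ifs with h1 h2 h2 <;> first | rfl | omega

end NCSplit
section NCClosed
open Finset

lemma sum_solve (M : ℕ) (g a b : ℕ → ℚ) (hg : ∀ m, M ≤ m → g m = 0) (ha : ∀ m, M ≤ m → a m = 0)
    (hb : ∀ m, M ≤ m → b m = 0)
    (hrec : ∀ m, g m - 2 * g (m + 1) + g (m + 2) = a (m + 2) - a (m + 3) + b m) (m : ℕ) :
    g m = (∑ r ∈ range M, a r * ((if m + 2 ≤ r then 1 else 0 : ℕ) : ℚ)) +
      ∑ s ∈ range M, b s * ((s + 1 - m : ℕ) : ℚ) := by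
  set R : ℕ → ℚ := fun m => (∑ r ∈ range M, a r * ((if m + 2 ≤ r then 1 else 0 : ℕ) : ℚ)) +
      ∑ s ∈ range M, b s * ((s + 1 - m : ℕ) : ℚ) with hR
  have pick : ∀ (c : ℕ → ℚ), (∀ m, M ≤ m → c m = 0) → ∀ j,
      c j = ∑ r ∈ range M, c r * (if r = j then 1 else 0) := by
    intro c hc j
    by_cases hj : j < M
    · simp [hj]
    · simp [hj, hc j (by omega)]
  have hRrec : ∀ m, R m - 2 * R (m + 1) + R (m + 2) = a (m + 2) - a (m + 3) + b m := by
    intro m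
    rw [pick a ha (m + 2), pick a ha (m + 3), pick b hb m]
    simp only [hR]
    have e1 : ∀ x y z u v w : ℚ, (x + y) - 2 * (z + u) + (v + w) =
      (x - 2 * z + v) + (y - 2 * u + w) := by intros; ring
    rw [e1]
    simp only [mul_sum, ← sum_sub_distrib, ← sum_add_distrib]
    apply sum_congr rfl
    intro r _
    have i1 : ((if m + 2 ≤ r then 1 else 0 : ℕ) : ℚ) - 2 * ((if m + 1 + 2 ≤ r then 1 else 0 : ℕ) : ℚ)
        + ((if m + 2 + 2 ≤ r then 1 else 0 : ℕ) : ℚ) =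
        (if r = m + 2 then 1 else 0) - (if r = m + 3 then 1 else 0) := by
      split_ifs <;> first | omega | norm_num
    have i2 : ((r + 1 - m : ℕ) : ℚ) - 2 * ((r + 1 - (m + 1) : ℕ) : ℚ) + ((r + 1 - (m + 2) : ℕ) : ℚ) =
        (if r = m then 1 else 0) := by
      rcases lt_trichotomy r m with h | h | h
      · rw [show r + 1 - m = 0 by omega, show r + 1 - (m + 1) = 0 by omega,
          show r + 1 - (m + 2) = 0 by omega, if_neg (by omega)]; norm_num
      · subst h
        rw [show r + 1 - r = 1 by omega, show r + 1 - (r + 1) = 0 by omega,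
          show r + 1 - (r + 2) = 0 by omega, if_pos rfl]; norm_num
      · obtain ⟨t, rfl⟩ : ∃ t, r = m + 1 + t := ⟨r - m - 1, by omega⟩
        rw [show m + 1 + t + 1 - m = t + 2 by omega, show m + 1 + t + 1 - (m + 1) = t + 1 by omega,
          show m + 1 + t + 1 - (m + 2) = t by omega, if_neg (by omega)]; push_cast; ring
    linear_combination a r * i1 + b r * i2
  have hRz : ∀ m, M ≤ m → R m = 0 := by
    intro m hm
    simp only [hR]
    rw [sum_eq_zero, sum_eq_zero, add_zero]
    · intro s hs
      rw [mem_range] at hs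
      rw [show s + 1 - m = 0 by omega]; simp
    · intro s hs
      rw [mem_range] at hs
      rw [if_neg (by omega)]; simp
  have main : ∀ t m, M ≤ m + t → g m = R m ∧ g (m + 1) = R (m + 1) := by
    intro t
    induction t with
    | zero => intro m hm; exact ⟨by rw [hg m hm, hRz m hm], by
        rw [hg _ (by omega), hRz _ (by omega)]⟩
    | succ t ih =>
      intro m hm
      obtain ⟨h1, h2⟩ := ih (m + 1) (by omega)
      refine ⟨?_, h1⟩
      have k1 := hrec m
      have k2 := hRrec m
      rw [← k2, h1, show m + 2 = m + 1 + 1 by ring, h2] at k1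
      linarith
  exact (main M m (by omega)).1

/-- closed form -/
noncomputable def cf (n k m : ℕ) : ℚ :=
  m * (k.choose n : ℚ) * ((3 * n + 2 - m).choose (n + k + 1) : ℚ) / (n + 1)

lemma cf_zero {n k m : ℕ} (h : n + 2 ≤ m) : cf n k m = 0 := by
  unfold cf
  by_cases hk : k < n
  · rw [Nat.choose_eq_zero_of_lt hk]; simp
  · rw [Nat.choose_eq_zero_of_lt (show 3 * n + 2 - m < n + k + 1 by omega)]; simp

lemma cf_rec (n k m : ℕ) :
    cf (n + 1) (k + 1) (m + 1) - 2 * cf (n + 1) (k + 1) (m + 1 + 1) + cf (n + 1) (k + 1) (m + 2 + 1) =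
      cf (n + 1) k (m + 2) - cf (n + 1) k (m + 3) + cf n k m := by
  by_cases hm : n + 2 ≤ m
  · rw [cf_zero, cf_zero, cf_zero, cf_zero, cf_zero, cf_zero] <;> first | omega | norm_num
  obtain ⟨T, hT⟩ : ∃ T, T = 3 * n + 2 - m := ⟨_, rfl⟩
  have hTQ : (T : ℚ) = 3 * n + 2 - m := by
    rw [hT, Nat.cast_sub (by omega)]; push_cast; ring
  unfold cf
  rw [show 3 * (n + 1) + 2 - (m + 1) = T + 2 by omega, show 3 * (n + 1) + 2 - (m + 1 + 1) = T + 1 by omega,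
    show 3 * (n + 1) + 2 - (m + 2 + 1) = T by omega, ← hT]
  have hrel : (T.choose (n + k + 2) : ℚ) * (n + k + 2) = T.choose (n + k + 1) * (2 * n + 1 - m - k) := by
    have h1 := Nat.choose_succ_right_eq T (n + k + 1)
    by_cases hle : n + k + 1 ≤ T
    · have h2 : ((T.choose (n + k + 1 + 1) * (n + k + 1 + 1) : ℕ) : ℚ) =
        ((T.choose (n + k + 1) * (T - (n + k + 1)) : ℕ) : ℚ) := by exact_mod_cast h1
      rw [Nat.cast_mul, Nat.cast_mul, Nat.cast_sub hle, hTQ] at h2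
      push_cast at h2
      linear_combination h2
    · rw [Nat.choose_eq_zero_of_lt (show T < n + k + 1 by omega),
        Nat.choose_eq_zero_of_lt (show T < n + k + 2 by omega)]; simp
  have hrel2 : (k.choose (n + 1) : ℚ) * (n + 1) = k.choose n * (k - n) := by
    have h1 := Nat.choose_succ_right_eq k n
    by_cases hle : n ≤ k
    · have h2 : ((k.choose (n + 1) * (n + 1) : ℕ) : ℚ) = ((k.choose n * (k - n) : ℕ) : ℚ) := by
        exact_mod_cast h1
      rw [Nat.cast_mul, Nat.cast_mul, Nat.cast_sub hle] at h2
      push_cast at h2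
      linear_combination h2
    · rw [Nat.choose_eq_zero_of_lt (show k < n by omega),
        Nat.choose_eq_zero_of_lt (show k < n + 1 by omega)]; simp
  rw [show n + 1 + (k + 1) + 1 = n + k + 3 by ring, show n + 1 + k + 1 = n + k + 2 by ring]
  have p1 : ((T + 1).choose (n + k + 3) : ℚ) = T.choose (n + k + 2) + T.choose (n + k + 3) := by
    exact_mod_cast Nat.choose_succ_succ T (n + k + 2)
  have p2 : ((T + 1).choose (n + k + 2) : ℚ) = T.choose (n + k + 1) + T.choose (n + k + 2) := by
    exact_mod_cast Nat.choose_succ_succ T (n + k + 1)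
  have p3 : ((T + 2).choose (n + k + 3) : ℚ) = (T + 1).choose (n + k + 2) + (T + 1).choose (n + k + 3) := by
    exact_mod_cast Nat.choose_succ_succ (T + 1) (n + k + 2)
  have p4 : ((k + 1).choose (n + 1) : ℚ) = k.choose n + k.choose (n + 1) := by
    exact_mod_cast Nat.choose_succ_succ k n
  rw [p3, p1, p2, p4]
  generalize (T.choose (n + k + 1) : ℚ) = A at *
  generalize (T.choose (n + k + 2) : ℚ) = B at *
  generalize (T.choose (n + k + 3) : ℚ) = C at *
  have hn1 : (n : ℚ) + 1 ≠ 0 := by positivity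
  have hn2 : (n : ℚ) + 1 + 1 ≠ 0 := by positivity
  have hQ : (k.choose (n + 1) : ℚ) = k.choose n * (k - n) / (n + 1) := by
    rw [eq_div_iff hn1]; exact hrel2
  rw [hQ]
  generalize (k.choose n : ℚ) = P at *
  push_cast
  field_simp
  linear_combination (-P) * hrel

theorem Nm_closed (k : ℕ) : ∀ n m, (Nm (n + 1) (k + 1) m : ℚ) = cf n k m := by
  induction k with
  | zero =>
    intro n m
    rcases m with _ | m
    · rw [Nm_m_zero]; simp [cf]
    rw [Nm_rec]
    have h1 : ∑ r ∈ range (n + 2), Nm (n + 1) 0 r * (if m + 2 ≤ r then 1 else 0) = 0 :=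
      sum_eq_zero (fun r _ => by rw [Nm_zero_k, zero_mul])
    rw [h1, zero_add]
    rcases n with _ | n
    · simp only [zero_add, sum_range_one, Nm_zero_zero]
      rcases m with _ | m
      · simp [cf]
      · rw [cf_zero (by omega)]; simp
    · rw [sum_eq_zero (fun r _ => by rw [Nm_zero_k, zero_mul])]
      simp [cf]
  | succ k ih =>
    intro n m
    rcases m with _ | m
    · rw [Nm_m_zero]; simp [cf]
    rw [Nm_rec]
    rcases n with _ | n
    · have h2 : ∑ s ∈ range (0 + 1), Nm 0 (k + 1) s * (s + 1 - m) = 0 :=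
        sum_eq_zero (fun r _ => by rw [Nm_zero_succ, zero_mul])
      rw [h2]
      push_cast
      rw [sum_eq_zero]
      · unfold cf
        rw [Nat.choose_eq_zero_of_lt (show 3 * 0 + 2 - (m + 1) < 0 + (k + 1) + 1 by omega)]; simp
      · intro r _
        split_ifs with h
        · rw [ih, cf_zero (by omega)]; simp
        · simp
    · have := sum_solve (n + 3) (fun m => cf (n + 1) (k + 1) (m + 1)) (cf (n + 1) k) (cf n k)
        (fun m hm => cf_zero (by omega)) (fun m hm => cf_zero (by omega)) (fun m hm => cf_zero (by omega))
        (fun m => cf_rec n k m) m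
      rw [this]
      rw [sum_range_succ (fun s => cf n k s * ((s + 1 - m : ℕ) : ℚ)) (n + 2),
        cf_zero (show n + 2 ≤ n + 2 by omega), zero_mul, add_zero]
      push_cast [ih]
      rfl

end NCClosed
section NCPer
open Classical Finset

lemma dvd_small {N x : ℤ} (h : N ∣ x) (h1 : -N < x) (h2 : x < N) : x = 0 := by
  obtain ⟨j, rfl⟩ := h
  have hN : 0 < N := by linarith
  have : j = 0 := by
    by_contra hj
    rcases lt_or_gt_of_ne hj with h | h
    · have : N * j ≤ N * (-1) := by apply mul_le_mul_of_nonneg_left <;> omega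
      omega
    · have : N * 1 ≤ N * j := by apply mul_le_mul_of_nonneg_left <;> omega
      omega
  simp [this]

def pt {n : ℕ} (hn : 0 < n) (x : ℤ) : Fin (2 * n) :=
  ⟨(x % (2 * n : ℕ)).toNat, by
    have h1 := Int.emod_nonneg x (show ((2 * n : ℕ) : ℤ) ≠ 0 by omega)
    have h2 := Int.emod_lt_of_pos x (show (0 : ℤ) < ((2 * n : ℕ) : ℤ) by omega)
    omega⟩

variable {n : ℕ} (hn : 0 < n)

lemma pt_eq_iff {x y : ℤ} : pt hn x = pt hn y ↔ (2 * n : ℤ) ∣ x - y := by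
  have h1 := Int.emod_nonneg x (show ((2 * n : ℕ) : ℤ) ≠ 0 by omega)
  have h2 := Int.emod_nonneg y (show ((2 * n : ℕ) : ℤ) ≠ 0 by omega)
  rw [pt, pt, Fin.mk.injEq]
  have : (2 * n : ℤ) ∣ x - y ↔ x % (2 * n : ℕ) = y % (2 * n : ℕ) := by
    rw [Int.emod_eq_emod_iff_emod_sub_eq_zero, Int.dvd_iff_emod_eq_zero]; push_cast; rfl
  rw [this]
  omega

lemma pt_val {x : ℤ} (h0 : 0 ≤ x) (h1 : x < 2 * n) : ((pt hn x : Fin (2 * n)) : ℤ) = x := by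
  simp only [pt]
  rw [Int.emod_eq_of_lt h0 (by push_cast; exact h1)]
  omega

lemma pt_coe (i : Fin (2 * n)) : pt hn (i : ℤ) = i := by
  apply Fin.ext
  have := pt_val hn (x := (i : ℤ)) (by omega) (by have := i.2; omega)
  omega

lemma pt_add_two (x : ℤ) : pt hn (x + 2 * n) = pt hn x := by
  rw [pt_eq_iff]; exact ⟨1, by ring⟩

lemma pt_sub_two (x : ℤ) : pt hn (x - 2 * n) = pt hn x := by
  rw [pt_eq_iff]; exact ⟨-1, by ring⟩

lemma rot_pt (x : ℤ) : rotMap (2 * n) n (pt hn x) = pt hn (x + n) := by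
  rw [← pt_coe hn (rotMap (2 * n) n (pt hn x)), pt_eq_iff]
  have h1 := Int.emod_nonneg x (show ((2 * n : ℕ) : ℤ) ≠ 0 by omega)
  simp only [rotMap, pt]
  rw [Int.natCast_mod, Nat.cast_add, Int.toNat_of_nonneg h1, Int.emod_add_emod]
  have := Int.emod_add_mul_ediv (x + n) ((2 * n : ℕ) : ℤ)
  refine ⟨-((x + n) / ((2 * n : ℕ) : ℤ)), ?_⟩
  push_cast at this ⊢
  linarith

lemma pt_rep (x : ℤ) (i : Fin (2 * n)) : ∃ c : ℤ, x ≤ c ∧ c < x + 2 * n ∧ pt hn c = i := by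
  refine ⟨x + ((i : ℤ) - x) % (2 * n), ?_, ?_, ?_⟩
  · have := Int.emod_nonneg ((i : ℤ) - x) (show (2 * n : ℤ) ≠ 0 by omega)
    omega
  · have := Int.emod_lt_of_pos ((i : ℤ) - x) (show (0 : ℤ) < 2 * n by omega)
    omega
  · rw [← pt_coe hn i, pt_eq_iff, pt_coe]
    have := Int.emod_add_mul_ediv ((i : ℤ) - x) (2 * n)
    exact ⟨-(((i : ℤ) - x) / (2 * n)), by linarith⟩

/-- the periodic relation -/
def Ar (F : Finset (Sym2 (Fin (2 * n)))) (x y : ℤ) : Prop := s(pt hn x, pt hn y) ∈ F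

variable {F : Finset (Sym2 (Fin (2 * n)))}

lemma Ar_symm {x y : ℤ} (h : Ar hn F x y) : Ar hn F y x := by
  unfold Ar at *; rwa [Sym2.eq_swap]

lemma Ar_compl {x y : ℤ} (h : Ar hn F x y) : Ar hn F y (x + 2 * n) := by
  have := Ar_symm hn h
  unfold Ar at *; rwa [pt_add_two]

lemma Ar_compl' {x y : ℤ} (h : Ar hn F x y) : Ar hn F (y - 2 * n) x := by
  have := Ar_symm hn h
  unfold Ar at *; rwa [pt_sub_two]

lemma Ar_rot (hF : RotInv (2 * n) n F) {x y : ℤ} (h : Ar hn F x y) : Ar hn F (x + n) (y + n) := by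
  have := hF _ h
  rwa [Sym2.map_mk, rot_pt, rot_pt] at this

lemma Ar_rot' (hF : RotInv (2 * n) n F) {x y : ℤ} (h : Ar hn F x y) : Ar hn F (x - n) (y - n) := by
  have := Ar_rot hn hF h
  unfold Ar at *
  rw [← pt_sub_two, ← pt_sub_two hn (y + n)] at this
  rw [show x - n = x + n - 2 * n by ring, show y - n = y + n - 2 * n by ring]
  exact this

lemma Ar_shift (hF : RotInv (2 * n) n F) (t : ℤ) : ∀ {x y : ℤ}, Ar hn F x y →
    Ar hn F (x + t * n) (y + t * n) := by
  induction t using Int.induction_on with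
  | zero => intro x y h; simpa using h
  | succ i ih =>
    intro x y h
    have := Ar_rot hn hF (ih h)
    convert this using 1 <;> ring
  | pred i ih =>
    intro x y h
    have := Ar_rot' hn hF (ih h)
    convert this using 1 <;> ring

/-- short arcs do not interleave -/
def NCs (F : Finset (Sym2 (Fin (2 * n)))) : Prop :=
  ∀ a b c d : ℤ, Ar hn F a b → Ar hn F c d → b ≤ a + n → d ≤ c + n → ¬ (a < c ∧ c < b ∧ b < d)

def NoLoop (F : Finset (Sym2 (Fin (2 * n)))) : Prop := ∀ x : ℤ, ¬ Ar hn F x x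

lemma noLoop_iff : NoLoop hn F ↔ ∀ e ∈ F, ¬ e.IsDiag := by
  constructor
  · intro h e he hd
    induction e using Sym2.ind with
    | _ i j =>
      rw [Sym2.mk_isDiag_iff] at hd
      subst hd
      apply h (i : ℤ)
      rw [Ar, pt_coe]; exact he
  · intro h x hx
    exact h _ hx (by simp)

lemma crosses_of {a b c d : ℤ} (h0 : 0 ≤ a) (h1 : a < c) (h2 : c < b) (h3 : b < d) (h4 : d < 2 * n) :
    Crosses s(pt hn a, pt hn b) s(pt hn c, pt hn d) := by
  refine ⟨pt hn a, pt hn b, pt hn c, pt hn d, rfl, rfl, ?_, ?_, ?_⟩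
  · have e1 := pt_val hn (x := a) (by omega) (by omega)
    have e2 := pt_val hn (x := c) (by omega) (by omega)
    rw [Fin.lt_def]; omega
  · have e1 := pt_val hn (x := c) (by omega) (by omega)
    have e2 := pt_val hn (x := b) (by omega) (by omega)
    rw [Fin.lt_def]; omega
  · have e1 := pt_val hn (x := b) (by omega) (by omega)
    have e2 := pt_val hn (x := d) (by omega) (by omega)
    rw [Fin.lt_def]; omega

lemma nc_aux (h : ∀ e ∈ F, ∀ f ∈ F, ¬ Crosses e f) {a b c d : ℤ} (hab : Ar hn F a b)
    (hcd : Ar hn F c d) (h0 : 0 ≤ a) (h0' : a < 2 * n) (h1 : a < c) (h2 : c < b) (h3 : b < d)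
    (h4 : d < a + 2 * n) : False := by
  by_cases k1 : d < 2 * n
  · exact h _ hab _ hcd (crosses_of hn h0 h1 h2 h3 k1)
  by_cases k2 : b < 2 * n
  · exact h _ (Ar_compl' hn hcd) _ hab (crosses_of hn (by omega) (by omega) (by omega) (by omega) (by omega))
  by_cases k3 : c < 2 * n
  · exact h _ (Ar_compl' hn hab) _ (Ar_compl' hn hcd)
      (crosses_of hn (by omega) (by omega) (by omega) (by omega) (by omega))
  · have e : Ar hn F (c - 2 * n) (d - 2 * n) := by
      unfold Ar at *; rw [pt_sub_two, pt_sub_two]; exact hcd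
    exact h _ e _ (Ar_compl' hn hab)
      (crosses_of hn (by omega) (by omega) (by omega) (by omega) (by omega))

lemma isNC_to (h : IsNC F) : NCs hn F ∧ NoLoop hn F := by
  refine ⟨?_, (noLoop_iff hn).2 h.1⟩
  rintro a b c d hab hcd hb hd ⟨h1, h2, h3⟩
  have hN : (0 : ℤ) < 2 * n := by omega
  have e0 := Int.emod_nonneg a hN.ne'
  have e1 := Int.emod_lt_of_pos a hN
  have e2 := Int.emod_add_mul_ediv a (2 * n)
  obtain ⟨q, hq⟩ : ∃ q, q = 2 * (n : ℤ) * (a / (2 * n)) := ⟨_, rfl⟩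
  have hsh : ∀ x, pt hn (x - q) = pt hn x := fun x => by
    rw [pt_eq_iff, hq]; exact ⟨-(a / (2 * n)), by ring⟩
  have hsA : ∀ x y, Ar hn F x y → Ar hn F (x - q) (y - q) := fun x y h => by
    unfold Ar at *; rw [hsh, hsh]; exact h
  exact nc_aux hn h.2 (hsA _ _ hab) (hsA _ _ hcd) (by omega) (by omega) (by omega) (by omega)
    (by omega) (by omega)

lemma isNC_of (h : NCs hn F) (h' : NoLoop hn F) : IsNC F := by
  refine ⟨(noLoop_iff hn).1 h', ?_⟩
  rintro e he f hf ⟨a, b, c, d, rfl, rfl, h1, h2, h3⟩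
  have hab : Ar hn F (a : ℤ) (b : ℤ) := by rw [Ar, pt_coe, pt_coe]; exact he
  have hcd : Ar hn F (c : ℤ) (d : ℤ) := by rw [Ar, pt_coe, pt_coe]; exact hf
  rw [Fin.lt_def] at h1 h2 h3
  have hd := d.2
  by_cases k1 : (b : ℤ) ≤ a + n <;> by_cases k2 : (d : ℤ) ≤ c + n
  · exact h _ _ _ _ hab hcd k1 k2 (by omega)
  · exact h _ _ _ _ (Ar_compl' hn hcd) hab (by omega) k1 (by omega)
  · exact h _ _ _ _ hcd (Ar_compl hn hab) (by omega) (by omega) (by omega)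
  · exact h _ _ _ _ (Ar_compl hn hab) (Ar_compl hn hcd) (by omega) (by omega) (by omega)

def Vis (F : Finset (Sym2 (Fin (2 * n)))) (u : ℤ) : Prop :=
  ∀ a b : ℤ, Ar hn F a b → b ≤ a + n → ¬ (a < u ∧ u < b)

lemma Vis_shift (hF : RotInv (2 * n) n F) (t : ℤ) {u : ℤ} (h : Vis hn F u) :
    Vis hn F (u + t * n) := by
  intro a b hab hb hh
  have := Ar_shift hn hF (-t) hab
  exact h _ _ this (by omega) ⟨by linarith, by linarith⟩

lemma Vis_add (hF : RotInv (2 * n) n F) {u : ℤ} (h : Vis hn F u) : Vis hn F (u + n) := by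
  simpa using Vis_shift hn hF 1 h

lemma short_rep (hL : NoLoop hn F) {e : Sym2 (Fin (2 * n))} (he : e ∈ F) :
    ∃ a b : ℤ, a < b ∧ b ≤ a + n ∧ e = s(pt hn a, pt hn b) := by
  induction e using Sym2.ind with
  | _ i j =>
    obtain ⟨c, h1, h2, h3⟩ := pt_rep hn (i : ℤ) j
    have hne : c ≠ i := by
      rintro rfl
      rw [pt_coe] at h3; subst h3
      exact hL (i : ℤ) (by rw [Ar, pt_coe]; exact he)
    by_cases hc : c ≤ i + n
    · exact ⟨i, c, by omega, hc, by rw [pt_coe, h3]⟩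
    · exact ⟨c, i + 2 * n, by omega, by omega, by rw [pt_add_two, pt_coe, h3, Sym2.eq_swap]⟩

lemma subset_of_short {F' : Finset (Sym2 (Fin (2 * n)))} (hL : NoLoop hn F)
    (h : ∀ a b : ℤ, a < b → b ≤ a + n → Ar hn F a b → Ar hn F' a b) : F ⊆ F' := by
  intro e he
  obtain ⟨a, b, h1, h2, rfl⟩ := short_rep hn hL he
  exact h a b h1 h2 he

lemma exists_Vis (hL : NoLoop hn F) (hNC : NCs hn F) (hne : F.Nonempty) : ∃ u, Vis hn F u := by
  obtain ⟨e, he⟩ := hne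
  obtain ⟨a, b, h1, h2, rfl⟩ := short_rep hn hL he
  have hne : ((range (n + 1)).filter (fun L : ℕ => ∃ a : ℤ, Ar hn F a (a + L))).Nonempty := by
    refine ⟨(b - a).toNat, ?_⟩
    simp only [mem_filter, mem_range]
    refine ⟨by omega, a, ?_⟩
    rw [show a + ((b - a).toNat : ℤ) = b by omega]; exact he
  obtain ⟨L, hL1, hL2⟩ := exists_max_image _ id hne
  simp only [mem_filter, mem_range, id] at hL1 hL2
  obtain ⟨hLn, a', ha'⟩ := hL1
  refine ⟨a', fun c d hcd hd hh => ?_⟩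
  have k1 := hNC _ _ _ _ hcd ha' hd (by omega)
  have k2 := hL2 (d - c).toNat ⟨by omega, c, by rw [show c + ((d - c).toNat : ℤ) = d by omega]; exact hcd⟩
  have k3 : L ≠ 0 := by
    rintro rfl
    exact hL a' (by simpa using ha')
  omega

/-! ### from periodic graph to arcs on `[0,n]` -/

noncomputable def EE (v : ℤ) (F : Finset (Sym2 (Fin (2 * n)))) : Finset (ℕ × ℕ) :=
  (range (n + 1) ×ˢ range (n + 1)).filter (fun p => p.1 < p.2 ∧ Ar hn F (v + p.1) (v + p.2))

lemma mem_EE {v : ℤ} {a b : ℕ} : (a, b) ∈ EE hn v F ↔ a < b ∧ b ≤ n ∧ Ar hn F (v + a) (v + b) := by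
  simp only [EE, mem_filter, mem_product, mem_range]
  constructor
  · rintro ⟨⟨h1, h2⟩, h3, h4⟩; exact ⟨h3, by omega, h4⟩
  · rintro ⟨h1, h2, h3⟩; exact ⟨⟨by omega, by omega⟩, h1, h3⟩

lemma mem_EE_of {v a b : ℤ} (h1 : v ≤ a) (h2 : a < b) (h3 : b ≤ v + n) (h : Ar hn F a b) :
    ((a - v).toNat, (b - v).toNat) ∈ EE hn v F := by
  rw [mem_EE]
  refine ⟨by omega, by omega, ?_⟩
  rw [show v + ((a - v).toNat : ℤ) = a by omega, show v + ((b - v).toNat : ℤ) = b by omega]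
  exact h

lemma cut_of_connected (hC : (graphOf F).Connected) {x y : ℤ} (hxy : x ≤ y) (hy : y < x + 2 * n - 1) :
    ∃ a c : ℤ, x ≤ a ∧ a ≤ y ∧ y < c ∧ c < x + 2 * n ∧ Ar hn F a c := by
  by_contra hcon
  push Not at hcon
  have step : ∀ i j, (graphOf F).Adj i j → (∃ a : ℤ, x ≤ a ∧ a ≤ y ∧ pt hn a = i) →
      (∃ a : ℤ, x ≤ a ∧ a ≤ y ∧ pt hn a = j) := by
    rintro i j hij ⟨a, h1, h2, rfl⟩
    obtain ⟨c, k1, k2, rfl⟩ := pt_rep hn x j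
    rw [graphOf, SimpleGraph.fromEdgeSet_adj] at hij
    refine ⟨c, k1, ?_, rfl⟩
    by_contra hcy
    exact hcon a c h1 h2 (by omega) k2 (by exact_mod_cast hij.1)
  have reach : ∀ i j, (graphOf F).Reachable i j → (∃ a : ℤ, x ≤ a ∧ a ≤ y ∧ pt hn a = i) →
      (∃ a : ℤ, x ≤ a ∧ a ≤ y ∧ pt hn a = j) := by
    rintro i j ⟨w⟩
    induction w with
    | nil => exact id
    | cons h _ ih => exact fun hi => ih (step _ _ h hi)
  obtain ⟨a, h1, h2, h3⟩ := reach _ _ (hC.preconnected (pt hn x) (pt hn (y + 1))) ⟨x, le_rfl, hxy, rfl⟩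
  rw [pt_eq_iff] at h3
  have := dvd_small h3 (by omega) (by omega)
  omega

lemma EE_isC {v : ℤ} (hNC : NCs hn F) (hR : RotInv (2 * n) n F)
    (hC : (graphOf F).Connected) (hv : Vis hn F v) : IsC n (EE hn v F) := by
  have hv1 := Vis_add hn hR hv
  have hv2 := Vis_add hn hR hv1
  have cov : ∀ q : ℕ, q < n → ∃ a b, (a, b) ∈ EE hn v F ∧ a ≤ q ∧ q < b := by
    intro q hq
    obtain ⟨a, c, h1, h2, h3, h4, h5⟩ := cut_of_connected hn hC (x := v + q + 1) (y := v + q + n)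
      (by omega) (by omega)
    by_cases hs : c ≤ a + n
    · have k1 := hv1 _ _ h5 hs
      have k2 := hv2 _ _ h5 hs
      have h6 := Ar_rot' hn hR h5
      exact ⟨_, _, mem_EE_of hn (v := v) (by omega) (by omega) (by omega) h6, by omega, by omega⟩
    · have h6 := Ar_compl' hn h5
      have k0 := hv _ _ h6 (by omega)
      have k1 := hv1 _ _ h6 (by omega)
      exact ⟨_, _, mem_EE_of hn (v := v) (by omega) (by omega) (by omega) h6, by omega, by omega⟩
  refine ⟨?_, ?_, ?_⟩
  · intro a b hab
    rw [mem_EE] at hab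
    exact ⟨hab.1, hab.2.1⟩
  · intro a b c d hab hcd hh
    rw [mem_EE] at hab hcd
    exact hNC _ _ _ _ hab.2.2 hcd.2.2 (by omega) (by omega) (by omega)
  · intro p q hpq hq hpr
    by_cases hp0 : p = 0
    · obtain ⟨a, b, h1, h2, h3⟩ := cov q (by omega)
      exact ⟨a, b, h1, by omega⟩
    by_cases hqn : q = n
    · obtain ⟨a, b, h1, h2, h3⟩ := cov (p - 1) (by omega)
      have := (mem_EE hn).1 h1
      exact ⟨a, b, h1, by omega⟩
    · obtain ⟨a, c, h1, h2, h3, h4, h5⟩ := cut_of_connected hn hC (x := v + p) (y := v + q)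
        (by omega) (by omega)
      by_cases hs : c ≤ a + n
      · have k1 := hv1 _ _ h5 hs
        exact ⟨_, _, mem_EE_of hn (v := v) (by omega) (by omega) (by omega) h5, by omega⟩
      · have h6 := Ar_compl' hn h5
        have k0 := hv _ _ h6 (by omega)
        exact ⟨_, _, mem_EE_of hn (v := v) (by omega) (by omega) (by omega) h6, by omega⟩

lemma Vs_EE {v : ℤ} (hR : RotInv (2 * n) n F) (hv : Vis hn F v) (u : ℕ) :
    u ∈ Vs n (EE hn v F) ↔ u ≤ n ∧ Vis hn F (v + u) := by
  have hv1 := Vis_add hn hR hv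
  rw [mem_Vs]
  refine and_congr_right (fun hu => ?_)
  constructor
  · intro h a b hab hb hh
    have k0 := hv _ _ hab hb
    have k1 := hv1 _ _ hab hb
    exact h _ _ (mem_EE_of hn (v := v) (by omega) (by omega) (by omega) hab) (by omega)
  · intro h a b hab hh
    rw [mem_EE] at hab
    exact h _ _ hab.2.2 (by omega) (by omega)

noncomputable def mF (F : Finset (Sym2 (Fin (2 * n)))) : ℕ :=
  ((range n).filter (fun u : ℕ => Vis hn F u)).card

lemma card_Vs_EE {v : ℕ} (hR : RotInv (2 * n) n F) (hv : Vis hn F v) :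
    (Vs n (EE hn v F)).card = mF hn F + 1 := by
  have h1 : Vs n (EE hn v F) = insert n ((range n).filter (fun u : ℕ => Vis hn F ((v + u : ℕ) : ℤ))) := by
    ext u
    rw [Vs_EE hn hR hv, mem_insert, mem_filter, mem_range]
    push_cast
    constructor
    · rintro ⟨h1, h2⟩
      rcases Nat.lt_or_ge u n with h | h
      · exact Or.inr ⟨h, h2⟩
      · left; omega
    · rintro (rfl | ⟨h1, h2⟩)
      · exact ⟨le_rfl, Vis_add hn hR hv⟩
      · exact ⟨by omega, h2⟩
  rw [h1, card_insert_of_notMem (by simp)]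
  congr 1
  have hper : Function.Periodic (fun u : ℕ => Vis hn F (u : ℤ)) n := by
    intro u
    simp only [eq_iff_iff]
    push_cast
    constructor
    · intro h
      have := Vis_shift hn hR (-1) h
      convert this using 1
      ring
    · exact Vis_add hn hR
  have h2 := Nat.filter_Ico_card_eq_of_periodic v n (fun u : ℕ => Vis hn F (u : ℤ)) hper
  rw [mF]
  refine Eq.trans ?_ (h2.trans (Nat.count_eq_card_filter_range _ _))
  refine card_bij (fun u _ => v + u) ?_ (fun _ _ _ _ h => by omega) ?_
  · intro u hu
    simp only [mem_filter, mem_range, mem_Ico] at hu ⊢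
    exact ⟨by omega, hu.2⟩
  · intro u hu
    simp only [mem_filter, mem_range, mem_Ico] at hu
    refine ⟨u - v, ?_, by omega⟩
    simp only [mem_filter, mem_range]
    refine ⟨by omega, ?_⟩
    rw [show v + (u - v) = u by omega]
    exact hu.2

end NCPer
section NCFF
open Classical Finset

variable {n : ℕ} (hn : 0 < n)

noncomputable def FF (v : ℤ) (E : Finset (ℕ × ℕ)) : Finset (Sym2 (Fin (2 * n))) :=
  E.image (fun p => s(pt hn (v + p.1), pt hn (v + p.2))) ∪
    E.image (fun p => s(pt hn (v + n + p.1), pt hn (v + n + p.2)))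

lemma mem_FF {v : ℤ} {E : Finset (ℕ × ℕ)} {e : Sym2 (Fin (2 * n))} :
    e ∈ FF hn v E ↔ ∃ c d : ℕ, (c, d) ∈ E ∧ (e = s(pt hn (v + c), pt hn (v + d)) ∨
      e = s(pt hn (v + n + c), pt hn (v + n + d))) := by
  simp only [FF, mem_union, mem_image, Prod.exists]
  constructor
  · rintro (⟨c, d, h, rfl⟩ | ⟨c, d, h, rfl⟩)
    · exact ⟨c, d, h, Or.inl rfl⟩
    · exact ⟨c, d, h, Or.inr rfl⟩
  · rintro ⟨c, d, h, rfl | rfl⟩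
    · exact Or.inl ⟨c, d, h, rfl⟩
    · exact Or.inr ⟨c, d, h, rfl⟩

lemma RotInv_FF (v : ℤ) (E : Finset (ℕ × ℕ)) : RotInv (2 * n) n (FF hn v E) := by
  intro e he
  rw [mem_FF] at he ⊢
  obtain ⟨c, d, h, rfl | rfl⟩ := he
  · refine ⟨c, d, h, Or.inr ?_⟩
    rw [Sym2.map_mk, rot_pt, rot_pt]
    rw [show v + c + n = v + n + c by ring, show v + d + n = v + n + d by ring]
  · refine ⟨c, d, h, Or.inl ?_⟩
    rw [Sym2.map_mk, rot_pt, rot_pt]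
    rw [show v + n + c + n = v + c + 2 * n by ring, show v + n + d + n = v + d + 2 * n by ring,
      pt_add_two, pt_add_two]

lemma Ar_FF {v : ℤ} {E : Finset (ℕ × ℕ)} (hE : ∀ c d, (c, d) ∈ E → c < d ∧ d ≤ n) {a b : ℤ}
    (hab : a < b) (hb : b ≤ a + n) :
    Ar hn (FF hn v E) a b ↔ ∃ t : ℤ, ∃ c d : ℕ, (c, d) ∈ E ∧ a = v + c + t * n ∧ b = v + d + t * n := by
  constructor
  · intro h
    rw [Ar, mem_FF] at h
    obtain ⟨c, d, hcd, h⟩ := h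
    obtain ⟨s, h⟩ : ∃ s : ℤ, s(pt hn a, pt hn b) = s(pt hn (v + s * n + c), pt hn (v + s * n + d)) := by
      rcases h with h | h
      · exact ⟨0, by simpa using h⟩
      · exact ⟨1, by simpa using h⟩
    have := hE c d hcd
    rw [Sym2.eq_iff] at h
    simp only [pt_eq_iff] at h
    rcases h with ⟨h1, h2⟩ | ⟨h1, h2⟩
    · have h3 := dvd_small (dvd_sub h1 h2) (by omega) (by omega)
      obtain ⟨j, hj⟩ := h1
      refine ⟨s + 2 * j, c, d, hcd, ?_, ?_⟩ <;> linarith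
    · have h3 : b - a = n ∧ d = n ∧ c = 0 := by
        have h4 := dvd_sub h2 h1
        have h5 : (2 * n : ℤ) ∣ (b - (v + s * n + c) - (a - (v + s * n + d))) - 2 * n :=
          dvd_sub h4 dvd_rfl
        by_contra hcon
        have := dvd_small h5 (by omega) (by omega)
        omega
      obtain ⟨j, hj⟩ := h1
      obtain ⟨h3, rfl, rfl⟩ := h3
      refine ⟨s + 2 * j + 1, 0, d, hcd, ?_, ?_⟩ <;> push_cast at * <;> linarith
  · rintro ⟨t, c, d, hcd, rfl, rfl⟩
    apply Ar_shift hn (RotInv_FF hn v E)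
    rw [Ar, mem_FF]
    exact ⟨c, d, hcd, Or.inl rfl⟩

lemma NoLoop_FF {v : ℤ} {E : Finset (ℕ × ℕ)} (hE : ∀ c d, (c, d) ∈ E → c < d ∧ d ≤ n) :
    NoLoop hn (FF hn v E) := by
  intro x h
  rw [Ar, mem_FF] at h
  obtain ⟨c, d, hcd, h⟩ := h
  have := hE c d hcd
  have key : ∀ w : ℤ, s(pt hn x, pt hn x) = s(pt hn (w + c), pt hn (w + d)) → False := by
    intro w h
    rw [Sym2.eq_iff] at h
    simp only [pt_eq_iff] at h
    rcases h with ⟨h1, h2⟩ | ⟨h1, h2⟩ <;>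
    · have h3 := dvd_small (dvd_sub h1 h2) (by omega) (by omega)
      omega
  rcases h with h | h
  · exact key _ h
  · exact key _ h

lemma cell_lt {t s : ℤ} (h : t < s) : t * (n : ℤ) + n ≤ s * n := by
  have : (t + 1) * (n : ℤ) ≤ s * n := by
    apply mul_le_mul_of_nonneg_right <;> omega
  linarith

lemma NCs_FF {v : ℤ} {E : Finset (ℕ × ℕ)} (hE : IsC n E) : NCs hn (FF hn v E) := by
  rintro a b c d hab hcd hb hd ⟨h1, h2, h3⟩
  rw [Ar_FF hn hE.1 (by omega) hb] at hab
  rw [Ar_FF hn hE.1 (by omega) hd] at hcd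
  obtain ⟨t, p, q, hpq, rfl, rfl⟩ := hab
  obtain ⟨s, p', q', hpq', rfl, rfl⟩ := hcd
  have e1 := hE.1 _ _ hpq
  have e2 := hE.1 _ _ hpq'
  rcases lt_trichotomy t s with h | h | h
  · have := cell_lt (n := n) h
    omega
  · subst h
    exact hE.2.1 _ _ _ _ hpq hpq' (by omega)
  · have := cell_lt (n := n) h
    omega

lemma Vis_FF {v : ℤ} {E : Finset (ℕ × ℕ)} (hE : ∀ c d, (c, d) ∈ E → c < d ∧ d ≤ n) :
    Vis hn (FF hn v E) v := by
  rintro a b hab hb ⟨h1, h2⟩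
  rw [Ar_FF hn hE (by omega) hb] at hab
  obtain ⟨t, p, q, hpq, rfl, rfl⟩ := hab
  have := hE _ _ hpq
  rcases lt_trichotomy t 0 with h | h | h
  · have := cell_lt (n := n) h
    omega
  · subst h; omega
  · have := cell_lt (n := n) h
    omega

lemma EE_FF {v : ℤ} {E : Finset (ℕ × ℕ)} (hE : ∀ c d, (c, d) ∈ E → c < d ∧ d ≤ n) :
    EE hn v (FF hn v E) = E := by
  ext ⟨a, b⟩
  rw [mem_EE]
  constructor
  · rintro ⟨h1, h2, h3⟩
    rw [Ar_FF hn hE (by omega) (by omega)] at h3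
    obtain ⟨t, p, q, hpq, h4, h5⟩ := h3
    have := hE _ _ hpq
    rcases lt_trichotomy t 0 with h | h | h
    · have := cell_lt (n := n) h
      omega
    · subst h
      have : a = p := by omega
      have : b = q := by omega
      subst a b
      exact hpq
    · have := cell_lt (n := n) h
      omega
  · intro h
    have := hE _ _ h
    refine ⟨this.1, this.2, ?_⟩
    rw [Ar, mem_FF]
    exact ⟨a, b, h, Or.inl rfl⟩

lemma EE_lt {v : ℤ} {F : Finset (Sym2 (Fin (2 * n)))} :
    ∀ c d, (c, d) ∈ EE hn v F → c < d ∧ d ≤ n := by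
  intro c d h
  rw [mem_EE] at h
  exact ⟨h.1, h.2.1⟩

lemma FF_EE {v : ℤ} {F : Finset (Sym2 (Fin (2 * n)))} (hR : RotInv (2 * n) n F)
    (hL : NoLoop hn F) (hv : Vis hn F v) : FF hn v (EE hn v F) = F := by
  apply Subset.antisymm
  · apply subset_of_short hn (NoLoop_FF hn (EE_lt hn))
    intro a b h1 h2 h3
    rw [Ar_FF hn (EE_lt hn) h1 h2] at h3
    obtain ⟨t, p, q, hpq, rfl, rfl⟩ := h3
    exact Ar_shift hn hR t ((mem_EE hn).1 hpq).2.2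
  · apply subset_of_short hn hL
    intro a b h1 h2 h3
    rw [Ar_FF hn (EE_lt hn) h1 h2]
    have e0 := Int.emod_nonneg (a - v) (show (n : ℤ) ≠ 0 by omega)
    have e1 := Int.emod_lt_of_pos (a - v) (show (0 : ℤ) < n by omega)
    have e2 := Int.emod_add_mul_ediv (a - v) n
    obtain ⟨t, ht⟩ : ∃ t, t = (a - v) / n := ⟨_, rfl⟩
    rw [← ht] at e2
    have e3 : (n : ℤ) * t = t * n := by ring
    have k := Vis_shift hn hR (t + 1) hv _ _ h3 h2
    have e4 : (t + 1) * (n : ℤ) = t * n + n := by ring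
    rw [e4] at k
    have h4 := Ar_shift hn hR (-t) h3
    have e5 : -t * (n : ℤ) = - (t * n) := by ring
    rw [e5] at h4
    refine ⟨t, _, _, mem_EE_of hn (v := v) (by omega) (by omega) (by omega) h4, by omega, by omega⟩

lemma card_FF {v : ℤ} {E : Finset (ℕ × ℕ)} (hE : ∀ c d, (c, d) ∈ E → c < d ∧ d ≤ n) :
    (FF hn v E).card ≤ 2 * E.card ∧ 2 * E.card ≤ (FF hn v E).card + 1 := by
  have inj : ∀ w : ℤ, Set.InjOn (fun p : ℕ × ℕ => s(pt hn (w + p.1), pt hn (w + p.2))) (E : Set (ℕ × ℕ)) := by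
    rintro w ⟨a, b⟩ hab ⟨c, d⟩ hcd h
    have e1 := hE _ _ hab
    have e2 := hE _ _ hcd
    simp only [Sym2.eq_iff, pt_eq_iff] at h
    rcases h with ⟨h1, h2⟩ | ⟨h1, h2⟩
    · have h3 := dvd_small h1 (by omega) (by omega)
      have h4 := dvd_small h2 (by omega) (by omega)
      ext <;> simp <;> omega
    · have h3 := dvd_small h1 (by omega) (by omega)
      have h4 := dvd_small h2 (by omega) (by omega)
      omega
  have hu := card_union_add_card_inter (E.image (fun p => s(pt hn (v + p.1), pt hn (v + p.2))))
    (E.image (fun p => s(pt hn (v + n + p.1), pt hn (v + n + p.2))))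
  rw [card_image_of_injOn (inj v), card_image_of_injOn (inj (v + n))] at hu
  have hi : (E.image (fun p => s(pt hn (v + p.1), pt hn (v + p.2))) ∩
    E.image (fun p => s(pt hn (v + n + p.1), pt hn (v + n + p.2)))).card ≤ 1 := by
    rw [← card_singleton (s(pt hn v, pt hn (v + n)))]
    apply card_le_card
    intro e he
    simp only [mem_inter, mem_image, Prod.exists] at he
    obtain ⟨⟨a, b, hab, rfl⟩, c, d, hcd, h⟩ := he
    have e1 := hE _ _ hab
    have e2 := hE _ _ hcd
    simp only [Sym2.eq_iff, pt_eq_iff] at h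
    have : a = 0 ∧ b = n := by
      rcases h with ⟨h1, h2⟩ | ⟨h1, h2⟩
      · by_contra hcon
        have h3 := dvd_small (dvd_sub h2 h1) (by omega) (by omega)
        have h4 : (0:ℤ) ≤ (v + n + c - (v + a)) := by omega
        rcases Nat.lt_or_ge (n + c - a) (2 * n) with h5 | h5
        · have h6 := dvd_small h1 (by omega) (by omega)
          omega
        · omega
      · by_contra hcon
        have h6 := dvd_small h1 (by omega) (by omega)
        have h7 := dvd_small (dvd_sub h2 dvd_rfl) (by omega) (by omega)
        omega
    obtain ⟨rfl, rfl⟩ := this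
    simp
  rw [FF]
  omega

/-! ### connectivity -/

lemma IsC_reach {E : Finset (ℕ × ℕ)} (hE : IsC n E) : ∀ u, u ≤ n →
    Relation.ReflTransGen (fun a b => (a, b) ∈ E ∨ (b, a) ∈ E) 0 u := by
  set R : ℕ → ℕ → Prop := fun a b => (a, b) ∈ E ∨ (b, a) ∈ E with hR
  have hsym' : ∀ p q, Relation.ReflTransGen R p q → Relation.ReflTransGen R q p := by
    intro p q h
    induction h with
    | refl => exact Relation.ReflTransGen.refl
    | tail _ hs ih => exact Relation.ReflTransGen.head (Or.symm hs) ih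
  by_contra hcon
  push Not at hcon
  obtain ⟨hx1, hx2⟩ := Nat.find_spec hcon
  have hmin := fun m hm => Nat.find_min (m := m) hcon hm
  set x := Nat.find hcon with hx
  have hmin' : ∀ m, m < x → Relation.ReflTransGen R 0 m := by
    intro m hm
    by_contra h
    exact hmin m hm ⟨by omega, h⟩
  have hx0 : 0 < x := by
    rcases Nat.eq_zero_or_pos x with h | h
    · exfalso; apply hx2; rw [h]
    · exact h
  set K := (range (n + 1)).filter (fun u => Relation.ReflTransGen R x u) with hK
  have hxK : x ∈ K := by
    rw [hK, mem_filter, mem_range]; exact ⟨by omega, Relation.ReflTransGen.refl⟩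
  obtain ⟨y, hyK, hymax⟩ := exists_max_image K id ⟨x, hxK⟩
  simp only [id] at hymax
  have hge : ∀ u, Relation.ReflTransGen R x u → x ≤ u := by
    intro u hu
    by_contra h
    exact hx2 ((hmin' u (by omega)).trans (hsym' _ _ hu))
  rw [hK, mem_filter, mem_range] at hyK
  obtain ⟨a, b, hab, hc⟩ := hE.2.2 x y (hymax x hxK) (by omega) (Or.inl hx0)
  have hab' := hE.1 _ _ hab
  have hout : ¬ Relation.ReflTransGen R x a ∧ ¬ Relation.ReflTransGen R x b := by
    have hnot : ¬ (Relation.ReflTransGen R x a ∧ Relation.ReflTransGen R x b) := by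
      rintro ⟨h1, h2⟩
      have := hge _ h1
      have := hymax b (by rw [hK, mem_filter, mem_range]; exact ⟨by omega, h2⟩)
      omega
    refine ⟨fun h => hnot ⟨h, h.tail (Or.inl hab)⟩, fun h => hnot ⟨h.tail (Or.inr hab), h⟩⟩
  have side : ∀ u, Relation.ReflTransGen R x u → ((a < u ∧ u < b) ↔ (a < x ∧ x < b)) := by
    intro u hu
    induction hu with
    | refl => rfl
    | tail hu hstep ih =>
      rename_i p q
      rw [← ih]
      have hq := hu.tail hstep
      have n1 : p ≠ a := by rintro rfl; exact hout.1 hu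
      have n2 : p ≠ b := by rintro rfl; exact hout.2 hu
      have n3 : q ≠ a := by rintro rfl; exact hout.1 hq
      have n4 : q ≠ b := by rintro rfl; exact hout.2 hq
      rcases hstep with h | h
      · have m1 := hE.2.1 _ _ _ _ hab h
        have m2 := hE.2.1 _ _ _ _ h hab
        have m3 := hE.1 _ _ h
        omega
      · have m1 := hE.2.1 _ _ _ _ hab h
        have m2 := hE.2.1 _ _ _ _ h hab
        have m3 := hE.1 _ _ h
        omega
  have s1 := side y hyK.2
  have n1 : x ≠ a := by rintro rfl; exact hout.1 Relation.ReflTransGen.refl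
  have n2 : x ≠ b := by rintro rfl; exact hout.2 Relation.ReflTransGen.refl
  have n3 : y ≠ a := by rintro rfl; exact hout.1 hyK.2
  have n4 : y ≠ b := by rintro rfl; exact hout.2 hyK.2
  have := hymax x hxK
  omega

lemma FF_connected {v : ℤ} {E : Finset (ℕ × ℕ)} (hE : IsC n E) : (graphOf (FF hn v E)).Connected := by
  have hL := NoLoop_FF hn (v := v) hE.1
  have hR := RotInv_FF hn v E
  have lift : ∀ (t : ℤ) (u : ℕ), u ≤ n →
      (graphOf (FF hn v E)).Reachable (pt hn (v + t * n)) (pt hn (v + t * n + u)) := by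
    intro t u hu
    have := IsC_reach hE u hu
    clear hu
    induction this with
    | refl => simp
    | tail h1 hstep ih =>
      rename_i p q
      refine ih.trans (SimpleGraph.Adj.reachable ?_)
      have h3 : ∀ p q, (p, q) ∈ E → (graphOf (FF hn v E)).Adj (pt hn (v + t * n + p)) (pt hn (v + t * n + q)) := by
        intro p q h
        have h4 : Ar hn (FF hn v E) (v + t * n + p) (v + t * n + q) := by
          have e := hE.1 _ _ h
          rw [Ar_FF hn hE.1 (by omega) (by omega)]
          exact ⟨t, p, q, h, by ring, by ring⟩
        rw [graphOf, SimpleGraph.fromEdgeSet_adj]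
        refine ⟨by exact_mod_cast h4, fun h5 => ?_⟩
        rw [Ar, h5] at h4
        exact hL _ h4
      rcases hstep with h | h
      · exact h3 _ _ h
      · exact (h3 _ _ h).symm
  have all : ∀ i, (graphOf (FF hn v E)).Reachable (pt hn v) i := by
    intro i
    obtain ⟨c, h1, h2, rfl⟩ := pt_rep hn v i
    by_cases hc : c ≤ v + n
    · have := lift 0 (c - v).toNat (by omega)
      simp only [zero_mul, add_zero] at this
      rwa [show v + ((c - v).toNat : ℤ) = c by omega] at this
    · have h3 := lift 0 n le_rfl
      have h4 := lift 1 (c - v - n).toNat (by omega)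
      simp only [zero_mul, add_zero, one_mul] at h3 h4
      rw [show v + n + ((c - v - n).toNat : ℤ) = c by omega] at h4
      exact h3.trans h4
  have : Nonempty (Fin (2 * n)) := ⟨pt hn 0⟩
  exact ⟨fun i j => (all i).symm.trans (all j)⟩

lemma FF_IsNCC {v : ℤ} {E : Finset (ℕ × ℕ)} (hE : IsC n E) : IsNCC (FF hn v E) :=
  ⟨isNC_of hn (NCs_FF hn hE) (NoLoop_FF hn hE.1), FF_connected hn hE⟩

end NCFF
section NCFinal
open Classical Finset

variable {n : ℕ} (hn : 0 < n)

noncomputable def WW (n k : ℕ) : Finset (Finset (Sym2 (Fin (2 * n)))) :=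
  univ.filter (fun F => IsNCC F ∧ RotInv (2 * n) n F ∧ (F.card = 2 * k ∨ F.card = 2 * k - 1))

lemma nccRot_sum (k : ℕ) (hk : 1 ≤ k) :
    nccRot (2 * n) (2 * k) n + nccRot (2 * n) (2 * k - 1) n = (WW n k).card := by
  rw [nccRot, nccRot, Nat.card_eq_fintype_card, Nat.card_eq_fintype_card, Fintype.card_subtype,
    Fintype.card_subtype, ← card_union_of_disjoint]
  · congr 1
    ext F
    simp only [WW, mem_union, mem_filter, mem_univ, true_and]
    tauto
  · rw [disjoint_left]
    intro F h1 h2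
    simp only [mem_filter, mem_univ, true_and] at h1 h2
    omega

lemma card_WW_Vis (k : ℕ) (hk : 1 ≤ k) (m : ℕ) (v : ℕ) :
    ((WW n k).filter (fun F => mF hn F = m ∧ Vis hn F v)).card = Nm n k m := by
  rw [Nm]
  have mem : ∀ F, F ∈ (WW n k).filter (fun F => mF hn F = m ∧ Vis hn F v) ↔
      (IsNCC F ∧ RotInv (2 * n) n F ∧ (F.card = 2 * k ∨ F.card = 2 * k - 1)) ∧ mF hn F = m ∧
        Vis hn F v := by
    intro F; simp only [WW, mem_filter, mem_univ, true_and]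
  have mem2 : ∀ E, E ∈ Sm n k m ↔ (IsC n E ∧ E.card = k) ∧ (Vs n E).card = m + 1 := by
    intro E; rw [Sm, mem_filter, mem_Sall]
  refine card_bij' (fun F _ => EE hn v F) (fun E _ => FF hn v E) ?_ ?_ ?_ ?_
  · intro F hF
    rw [mem] at hF
    obtain ⟨⟨h1, h2, h3⟩, h4, h5⟩ := hF
    rw [mem2]
    have hN := isNC_to hn h1.1
    have hc := card_FF hn (v := v) (EE_lt hn (v := v) (F := F))
    rw [FF_EE hn h2 hN.2 h5] at hc
    exact ⟨⟨EE_isC hn hN.1 h2 h1.2 h5, by omega⟩, by rw [card_Vs_EE hn h2 h5, h4]⟩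
  · intro E hE
    rw [mem2] at hE
    obtain ⟨⟨h1, h2⟩, h3⟩ := hE
    rw [mem]
    have hc := card_FF hn (v := v) h1.1
    have hv := Vis_FF hn (v := v) h1.1
    have hr := RotInv_FF hn v E
    have hm := card_Vs_EE hn hr hv
    rw [EE_FF hn h1.1] at hm
    exact ⟨⟨FF_IsNCC hn h1, hr, by omega⟩, by omega, hv⟩
  · intro F hF
    rw [mem] at hF
    obtain ⟨⟨h1, h2, h3⟩, h4, h5⟩ := hF
    exact FF_EE hn h2 (isNC_to hn h1.1).2 h5
  · intro E hE
    rw [mem2] at hE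
    exact EE_FF hn hE.1.1.1

lemma double_count (k : ℕ) (hk : 1 ≤ k) (m : ℕ) :
    m * ((WW n k).filter (fun F => mF hn F = m)).card = n * Nm n k m := by
  have h := sum_card_bipartiteAbove_eq_sum_card_bipartiteBelow
    (s := (WW n k).filter (fun F => mF hn F = m)) (t := range n) (fun F (v : ℕ) => Vis hn F v)
  have e1 : ∀ F ∈ (WW n k).filter (fun F => mF hn F = m),
      ((range n).bipartiteAbove (fun F (v : ℕ) => Vis hn F v) F).card = m := by
    intro F hF
    rw [mem_filter] at hF
    rw [← hF.2, mF, bipartiteAbove]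
  have e2 : ∀ v ∈ range n, (((WW n k).filter (fun F => mF hn F = m)).bipartiteBelow
      (fun F (v : ℕ) => Vis hn F v) v).card = Nm n k m := by
    intro v _
    rw [bipartiteBelow, filter_filter]
    exact card_WW_Vis hn k hk m v
  rw [sum_congr rfl e1, sum_congr rfl e2] at h
  simp only [sum_const, card_range, smul_eq_mul] at h
  rw [mul_comm]; exact h

lemma mF_bounds {k : ℕ} (hk : 1 ≤ k) {F : Finset (Sym2 (Fin (2 * n)))} (hF : F ∈ WW n k) :
    1 ≤ mF hn F ∧ mF hn F ≤ n := by
  simp only [WW, mem_filter, mem_univ, true_and] at hF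
  obtain ⟨h1, h2, h3⟩ := hF
  have hN := isNC_to hn h1.1
  obtain ⟨u, hu⟩ := exists_Vis hn hN.2 hN.1 (card_pos.1 (by omega))
  constructor
  · rw [mF]
    apply card_pos.2
    have e0 := Int.emod_nonneg u (show (n : ℤ) ≠ 0 by omega)
    have e1 := Int.emod_lt_of_pos u (show (0 : ℤ) < n by omega)
    have e2 := Int.emod_add_mul_ediv u n
    refine ⟨(u % n).toNat, ?_⟩
    rw [mem_filter, mem_range]
    refine ⟨by omega, ?_⟩
    have := Vis_shift hn h2 (-(u / n)) hu
    rw [Int.toNat_of_nonneg e0]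
    convert this using 1
    linarith
  · rw [mF]
    exact (card_filter_le _ _).trans (by simp)

lemma card_Wm (k : ℕ) (hk : 1 ≤ k) (m : ℕ) (hm : 1 ≤ m) :
    ((WW n k).filter (fun F => mF hn F = m)).card =
      (k - 1).choose (n - 1) * (3 * n - 1 - m).choose (n + k - 1) := by
  have h := double_count hn k hk m
  obtain ⟨N, rfl⟩ : ∃ N, n = N + 1 := ⟨n - 1, by omega⟩
  obtain ⟨K, rfl⟩ : ∃ K, k = K + 1 := ⟨k - 1, by omega⟩
  have hc := Nm_closed K N m
  rw [cf] at hc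
  have h' : (m : ℚ) * (((WW (N + 1) (K + 1)).filter (fun F => mF hn F = m)).card : ℚ) =
      (N + 1) * (Nm (N + 1) (K + 1) m : ℚ) := by exact_mod_cast h
  rw [hc] at h'
  have hN : (N + 1 : ℚ) ≠ 0 := by positivity
  have hm' : (m : ℚ) ≠ 0 := by positivity
  have e : (N + 1 : ℚ) * (m * (K.choose N) * ((3 * N + 2 - m).choose (N + K + 1)) / (N + 1)) =
      m * ((K.choose N) * ((3 * N + 2 - m).choose (N + K + 1))) := by
    field_simp
  rw [e] at h'
  have := mul_left_cancel₀ hm' h'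
  rw [show N + 1 - 1 = N by omega, show K + 1 - 1 = K by omega,
    show 3 * (N + 1) - 1 - m = 3 * N + 2 - m by omega, show N + 1 + (K + 1) - 1 = N + K + 1 by omega]
  exact_mod_cast this

lemma hockey (A B : ℕ) : ∀ M, M ≤ A → (∑ m ∈ Icc 1 M, (A - m).choose B) + (A - M).choose (B + 1) =
    A.choose (B + 1) := by
  intro M
  induction M with
  | zero => intro _; simp
  | succ M ih =>
    intro hM
    rw [← ih (by omega), sum_Icc_succ_top (by omega), show A - M = (A - (M + 1)) + 1 by omega,
      Nat.choose_succ_succ]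
    ring

lemma card_WW (k : ℕ) (hk : 1 ≤ k) (hkn : n ≤ k + 1) (hn2 : 0 < n) :
    (WW n k).card = (3 * n - 1).choose (n + k) * (k - 1).choose (n - 1) := by
  have h1 : (WW n k).card = ∑ m ∈ Icc 1 n, ((WW n k).filter (fun F => mF hn2 F = m)).card := by
    apply card_eq_sum_card_fiberwise
    intro F hF
    have := mF_bounds hn2 hk hF
    simp only [coe_Icc, Set.mem_Icc]
    exact this
  rw [h1, sum_congr rfl (fun m hm => card_Wm hn2 k hk m (mem_Icc.1 hm).1), ← mul_sum]
  have h2 := hockey (3 * n - 1) (n + k - 1) n (by omega)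
  rw [show n + k - 1 + 1 = n + k by omega] at h2
  rcases Nat.lt_or_ge k n with h | h
  · rw [Nat.choose_eq_zero_of_lt (show k - 1 < n - 1 by omega)]; simp
  · rw [Nat.choose_eq_zero_of_lt (show 3 * n - 1 - n < n + k by omega), add_zero] at h2
    rw [h2, mul_comm]

end NCFinal

/-- For `n ≥ 1` and `n-1 ≤ k ≤ 2n-3`, the number of non-crossing connected graphs
on `2n` vertices with `2k` or `2k-1` edges invariant under rotation by `π`
(i.e. by `n` positions) equals `C(3n-1, n+k)·C(k-1, n-1)`. -/
theorem stmt11 (n k : ℕ) (hn : 1 ≤ n) (hnk : (n : ℤ) - 1 ≤ (k : ℤ))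
    (hk : (k : ℤ) ≤ 2 * (n : ℤ) - 3) :
    nccRot (2 * n) (2 * k) n + nccRot (2 * n) (2 * k - 1) n =
      Nat.choose (3 * n - 1) (n + k) * Nat.choose (k - 1) (n - 1) := by
  have hk1 : 1 ≤ k := by omega
  rw [nccRot_sum k hk1]
  exact card_WW k hk1 (by omega) hn
end

section
/- Let n be even and k odd with n-1 ≤ k ≤ 2n-3. Then the number of non-crossing connected graphs on n vertices with k edges invariant under rotation by π equals (n/2) * f_{n/2+1, (k+1)/2}, where f_{m,j} is the number of non-crossing connected graphs on m vertices with j edges containing the edge {1,m}. -/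
lemma rot_val {n t : ℕ} (ht : t ≤ n) (i : Fin n) :
    (rotMap n t i).val = if i.1 + t < n then i.1 + t else i.1 + t - n := by
  have := i.2
  unfold rotMap
  simp only
  split_ifs with h
  · exact Nat.mod_eq_of_lt h
  · rw [Nat.mod_eq_sub_mod (by omega), Nat.mod_eq_of_lt (by omega)]

/-- rotation as a permutation -/
def rotE (n t : ℕ) (ht : t ≤ n) : Equiv.Perm (Fin n) where
  toFun := rotMap n t
  invFun := rotMap n (n - t)
  left_inv i := by
    apply Fin.ext
    have := i.2
    rw [rot_val (by omega), rot_val ht]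
    split_ifs <;> omega
  right_inv i := by
    apply Fin.ext
    have := i.2
    rw [rot_val ht, rot_val (by omega)]
    split_ifs <;> omega

lemma isNC_iff {n : ℕ} (E : Finset (Sym2 (Fin n))) :
    IsNC E ↔ (∀ a, s(a, a) ∉ E) ∧
      ∀ a b c d : Fin n, a < c → c < b → b < d → s(a, b) ∈ E → s(c, d) ∉ E := by
  unfold IsNC
  constructor
  · rintro ⟨h1, h2⟩
    refine ⟨fun a ha => h1 _ ha (by simp), fun a b c d h h' h'' hab hcd => ?_⟩
    exact h2 _ hab _ hcd ⟨a, b, c, d, rfl, rfl, h, h', h''⟩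
  · rintro ⟨h1, h2⟩
    constructor
    · intro e
      induction e with | _ a b
      intro he hd
      simp only [Sym2.mk_isDiag_iff] at hd
      subst hd
      exact h1 _ he
    · rintro e he f hf ⟨a, b, c, d, rfl, rfl, h, h', h''⟩
      exact h2 a b c d h h' h'' he hf

lemma graphOf_adj {n : ℕ} (E : Finset (Sym2 (Fin n))) (a b : Fin n) :
    (graphOf E).Adj a b ↔ s(a, b) ∈ E ∧ a ≠ b := by
  simp [graphOf]

lemma reach_map {V W : Type*} {G : SimpleGraph V} {H : SimpleGraph W} (f : V → W)
    (h : ∀ a b, G.Adj a b → H.Reachable (f a) (f b)) {a b : V} (hr : G.Reachable a b) :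
    H.Reachable (f a) (f b) := by
  obtain ⟨w⟩ := hr
  induction w with
  | nil => exact SimpleGraph.Reachable.refl _
  | cons hadj _ ih => exact (h _ _ hadj).trans ih

lemma conn_map {V W : Type*} {G : SimpleGraph V} {H : SimpleGraph W} (f : V → W)
    (h : ∀ a b, G.Adj a b → H.Reachable (f a) (f b)) (hf : Function.Surjective f)
    (hG : G.Connected) : H.Connected := by
  have := hG.nonempty
  have : Nonempty W := ⟨f (Classical.arbitrary V)⟩
  refine SimpleGraph.Connected.mk ?_
  intro x y
  obtain ⟨a, rfl⟩ := hf x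
  obtain ⟨b, rfl⟩ := hf y
  exact reach_map f h (hG.preconnected a b)

/-- `E'` is the image of `E` under rotation by `t`. -/
def IsRot {n : ℕ} (t : ℕ) (E E' : Finset (Sym2 (Fin n))) : Prop :=
  ∀ a b, s(a, b) ∈ E ↔ s(rotMap n t a, rotMap n t b) ∈ E'

lemma IsRot.nc {n t : ℕ} (ht : t ≤ n) {E E' : Finset (Sym2 (Fin n))} (h : IsRot t E E')
    (hE' : IsNC E') : IsNC E := by
  rw [isNC_iff] at *
  obtain ⟨h1, h2⟩ := hE'
  refine ⟨fun a ha => h1 _ ((h a a).1 ha), fun a b c d hac hcb hbd hab hcd => ?_⟩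
  rw [h] at hab hcd
  have ea := rot_val ht a
  have eb := rot_val ht b
  have ec := rot_val ht c
  have ed := rot_val ht d
  have := a.2
  have := b.2
  have := c.2
  have := d.2
  have hba := hab
  have hdc := hcd
  rw [Sym2.eq_swap] at hba hdc
  rw [Fin.lt_def] at hac hcb hbd
  have key : ∀ x y z w : Fin n, x.1 < z.1 → z.1 < y.1 → y.1 < w.1 → s(x, y) ∈ E' →
    s(z, w) ∉ E' := h2
  by_cases hd' : d.1 + t < n
  · rw [if_pos (by omega)] at ea eb ec ed
    exact key _ _ _ _ (by omega) (by omega) (by omega) hab hcd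
  by_cases hb' : b.1 + t < n
  · rw [if_pos (by omega)] at ea eb ec
    rw [if_neg (by omega)] at ed
    exact key _ _ _ _ (by omega) (by omega) (by omega) hdc hab
  by_cases hc' : c.1 + t < n
  · rw [if_pos (by omega)] at ea ec
    rw [if_neg (by omega)] at eb ed
    exact key _ _ _ _ (by omega) (by omega) (by omega) hba hdc
  by_cases ha' : a.1 + t < n
  · rw [if_pos (by omega)] at ea
    rw [if_neg (by omega)] at eb ec ed
    exact key _ _ _ _ (by omega) (by omega) (by omega) hcd hba
  · rw [if_neg (by omega)] at ea eb ec ed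
    exact key _ _ _ _ (by omega) (by omega) (by omega) hab hcd

lemma IsRot.conn {n t : ℕ} (ht : t ≤ n) {E E' : Finset (Sym2 (Fin n))} (h : IsRot t E E')
    (hE : (graphOf E).Connected) : (graphOf E').Connected := by
  refine conn_map (rotE n t ht) (fun a b hab => ?_) (rotE n t ht).surjective hE
  apply SimpleGraph.Adj.reachable
  rw [graphOf_adj] at *
  exact ⟨(h a b).1 hab.1, fun hh => hab.2 ((rotE n t ht).injective hh)⟩

lemma IsRot.symm {n t : ℕ} (ht : t ≤ n) {E E' : Finset (Sym2 (Fin n))} (h : IsRot t E E') :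
    IsRot (n - t) E' E := by
  intro a b
  rw [h]
  have e : ∀ a, rotMap n t (rotMap n (n - t) a) = a := (rotE n t ht).right_inv
  rw [e, e]

lemma IsRot.ncc {n t : ℕ} (ht : t ≤ n) {E E' : Finset (Sym2 (Fin n))} (h : IsRot t E E') :
    IsNCC E ↔ IsNCC E' :=
  ⟨fun hE => ⟨(h.symm ht).nc (by omega) hE.1, h.conn ht hE.2⟩,
   fun hE => ⟨h.nc ht hE.1, (h.symm ht).conn (by omega) hE.2⟩⟩

/-- rotation on edges -/
def rotS (n t : ℕ) (ht : t ≤ n) : Sym2 (Fin n) ≃ Sym2 (Fin n) where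
  toFun := Sym2.map (rotE n t ht)
  invFun := Sym2.map (rotE n t ht).symm
  left_inv e := by simp [Sym2.map_map]
  right_inv e := by simp [Sym2.map_map]

/-- rotation on sets of edges -/
def rotF (n t : ℕ) (ht : t ≤ n) : Finset (Sym2 (Fin n)) ≃ Finset (Sym2 (Fin n)) :=
  (rotS n t ht).finsetCongr

lemma rotF_isRot {n t : ℕ} (ht : t ≤ n) (E : Finset (Sym2 (Fin n))) :
    IsRot t E (rotF n t ht E) := by
  intro a b
  have : s(rotMap n t a, rotMap n t b) = (rotS n t ht).toEmbedding s(a, b) := rfl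
  rw [this, rotF, Equiv.finsetCongr_apply, Finset.mem_map']

lemma rotF_card {n t : ℕ} (ht : t ≤ n) (E : Finset (Sym2 (Fin n))) :
    (rotF n t ht E).card = E.card := by
  simp [rotF]

lemma rotInv_iff {n m : ℕ} (E : Finset (Sym2 (Fin n))) :
    RotInv n m E ↔ ∀ a b, s(a, b) ∈ E → s(rotMap n m a, rotMap n m b) ∈ E := by
  constructor
  · intro h a b hab
    exact h _ hab
  · intro h e
    induction e with | _ a b
    exact h a b

lemma rot_comm {n m t : ℕ} (a : Fin n) :
    rotMap n m (rotMap n t a) = rotMap n t (rotMap n m a) := by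
  apply Fin.ext
  simp [rotMap]
  congr 1
  omega

lemma IsRot.rotInv {n t m : ℕ} (ht : t ≤ n) {E E' : Finset (Sym2 (Fin n))} (h : IsRot t E E')
    (hinv : RotInv n m E') : RotInv n m E := by
  rw [rotInv_iff] at *
  intro a b hab
  rw [h] at *
  rw [rot_comm (m := t) (t := m), rot_comm (m := t) (t := m)]
  exact hinv _ _ hab

/-- graphs containing the diameter at `i` -/
def Dia (m k i : ℕ) (E : Finset (Sym2 (Fin (2 * m)))) : Prop :=
  (IsNCC E ∧ E.card = k ∧ RotInv (2 * m) m E) ∧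
    ∃ a b : Fin (2 * m), a.1 = i ∧ b.1 = i + m ∧ s(a, b) ∈ E

lemma card_dia (m k i : ℕ) (hi : i < m) :
    Nat.card {E // Dia m k i E} = Nat.card {E // Dia m k 0 E} := by
  symm
  have ht : i ≤ 2 * m := by omega
  refine Nat.card_congr ((rotF (2 * m) i ht).subtypeEquiv fun E => ?_)
  have h := rotF_isRot ht E
  unfold Dia
  rw [h.ncc ht, rotF_card]
  have h1 : RotInv (2 * m) m E ↔ RotInv (2 * m) m (rotF (2 * m) i ht E) :=
    ⟨fun hh => (h.symm ht).rotInv (by omega) hh, fun hh => h.rotInv ht hh⟩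
  rw [h1]
  refine and_congr_right fun _ => ?_
  constructor
  · rintro ⟨a, b, ha, hb, hab⟩
    refine ⟨rotMap _ i a, rotMap _ i b, ?_, ?_, (h a b).1 hab⟩
    · rw [rot_val ht, if_pos (by omega)]; omega
    · rw [rot_val ht, if_pos (by omega)]; omega
  · rintro ⟨a, b, ha, hb, hab⟩
    refine ⟨rotMap _ (2 * m - i) a, rotMap _ (2 * m - i) b, ?_, ?_, (h.symm ht a b).1 hab⟩
    · rw [rot_val (by omega), if_neg (by omega)]; omega
    · rw [rot_val (by omega), if_neg (by omega)]; omega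

lemma rot_rot {m : ℕ} (a : Fin (2 * m)) : rotMap (2 * m) m (rotMap (2 * m) m a) = a := by
  apply Fin.ext
  have := a.2
  rw [rot_val (by omega), rot_val (by omega)]
  split_ifs <;> omega

lemma rot_ne {m : ℕ} (a : Fin (2 * m)) : rotMap (2 * m) m a ≠ a := by
  intro h
  have h := congrArg Fin.val h
  have := a.2
  rw [rot_val (by omega)] at h
  split_ifs at h <;> omega

lemma exists_dia {m : ℕ} {E : Finset (Sym2 (Fin (2 * m)))} (hE : IsNC E)
    (ho : Odd E.card) (hr : RotInv (2 * m) m E) :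
    ∃ i : Fin m, ∃ a b : Fin (2 * m), a.1 = i.1 ∧ b.1 = i.1 + m ∧ s(a, b) ∈ E := by
  have hfix : ∃ e ∈ E, Sym2.map (rotMap (2 * m) m) e = e := by
    by_contra! hcon
    have : ∑ e ∈ E, (1 : ZMod 2) = 0 := by
      refine Finset.sum_involution (fun e _ => Sym2.map (rotMap (2 * m) m) e) ?_ ?_ ?_ ?_
      · intros; decide
      · intro e he _; exact hcon e he
      · intro e he; exact hr e he
      · intro e he
        have : rotMap (2 * m) m ∘ rotMap (2 * m) m = id := funext rot_rot
        rw [Sym2.map_map, this, Sym2.map_id, id]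
    simp only [Finset.sum_const, nsmul_eq_mul, mul_one] at this
    rw [ZMod.natCast_eq_zero_iff_even] at this
    exact (Nat.not_even_iff_odd.2 ho) this
  obtain ⟨e, he, hfe⟩ := hfix
  induction e with | _ a b
  rw [Sym2.map_mk, Sym2.eq_iff] at hfe
  have hab : rotMap (2 * m) m a = b := by
    rcases hfe with h | h
    · exact absurd h.1 (rot_ne a)
    · exact h.1
  have hv := congrArg Fin.val hab
  have := a.2
  rw [rot_val (by omega)] at hv
  split_ifs at hv with hlt
  · exact ⟨⟨a.1, by omega⟩, a, b, rfl, by simp; omega, he⟩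
  · refine ⟨⟨b.1, by omega⟩, b, a, rfl, by simp; omega, ?_⟩
    rwa [Sym2.eq_swap]

lemma dia_unique {m : ℕ} {E : Finset (Sym2 (Fin (2 * m)))} (hE : IsNC E) {i j : Fin m}
    (hi : ∃ a b : Fin (2 * m), a.1 = i.1 ∧ b.1 = i.1 + m ∧ s(a, b) ∈ E)
    (hj : ∃ a b : Fin (2 * m), a.1 = j.1 ∧ b.1 = j.1 + m ∧ s(a, b) ∈ E) : i = j := by
  obtain ⟨a, b, ha, hb, hab⟩ := hi
  obtain ⟨c, d, hc, hd, hcd⟩ := hj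
  have := i.2
  have := j.2
  rw [isNC_iff] at hE
  rcases lt_trichotomy i.1 j.1 with h | h | h
  · exact absurd hcd (hE.2 a b c d (by rw [Fin.lt_def]; omega) (by rw [Fin.lt_def]; omega)
      (by rw [Fin.lt_def]; omega) hab)
  · exact Fin.ext h
  · exact absurd hab (hE.2 c d a b (by rw [Fin.lt_def]; omega) (by rw [Fin.lt_def]; omega)
      (by rw [Fin.lt_def]; omega) hcd)

lemma card_step1 (m k : ℕ) (hk : Odd k) :
    nccRot (2 * m) k m = m * Nat.card {E // Dia m k 0 E} := by
  classical
  unfold nccRot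
  have hex : ∀ x : {E : Finset (Sym2 (Fin (2 * m))) // IsNCC E ∧ E.card = k ∧ RotInv (2 * m) m E},
      ∃ i : Fin m, ∃ a b : Fin (2 * m), a.1 = i.1 ∧ b.1 = i.1 + m ∧ s(a, b) ∈ x.1 := by
    rintro ⟨E, h1, h2, h3⟩
    exact exists_dia h1.1 (h2 ▸ hk) h3
  choose f hf using hex
  rw [← Nat.card_congr (Equiv.sigmaFiberEquiv f), Nat.card_sigma]
  have : ∀ i : Fin m, Nat.card {x // f x = i} = Nat.card {E // Dia m k 0 E} := by
    intro i
    rw [← card_dia m k i.1 i.2]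
    refine Nat.card_congr ((Equiv.subtypeEquivRight fun x => ?_).trans
      (Equiv.subtypeSubtypeEquivSubtypeInter _ _))
    exact ⟨fun h => h ▸ hf x, fun h => dia_unique x.2.1.1 (hf x) h⟩
  rw [Finset.sum_congr rfl fun i _ => this i]
  simp

/-- inclusion of the half circle -/
def inc {m : ℕ} (hm : 1 ≤ m) (a : Fin (m + 1)) : Fin (2 * m) := ⟨a.1, by omega⟩

lemma inc_val {m : ℕ} (hm : 1 ≤ m) (a : Fin (m + 1)) : (inc hm a).1 = a.1 := rfl

lemma inc_inj {m : ℕ} (hm : 1 ≤ m) : Function.Injective (inc hm) := by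
  intro a b h
  have := congrArg Fin.val h
  exact Fin.ext this

lemma rot_inj {m : ℕ} : Function.Injective (rotMap (2 * m) m) := by
  intro a b h
  rw [← rot_rot a, h, rot_rot]

lemma exists_inc {m : ℕ} (hm : 1 ≤ m) (x : Fin (2 * m)) (hx : x.1 ≤ m) :
    ∃ a, x = inc hm a := ⟨⟨x.1, by omega⟩, rfl⟩

/-- unfolding -/
def unf {m : ℕ} (hm : 1 ≤ m) (F : Finset (Sym2 (Fin (m + 1)))) : Finset (Sym2 (Fin (2 * m))) :=
  F.image (Sym2.map (inc hm)) ∪ F.image (Sym2.map (rotMap (2 * m) m ∘ inc hm))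

/-- folding -/
def fol {m : ℕ} (hm : 1 ≤ m) (E : Finset (Sym2 (Fin (2 * m)))) : Finset (Sym2 (Fin (m + 1))) :=
  Finset.univ.filter fun e => Sym2.map (inc hm) e ∈ E

lemma mem_image_sym2 {V W : Type*} [DecidableEq W] (f : V → W) (F : Finset (Sym2 V)) (x y : W) :
    s(x, y) ∈ F.image (Sym2.map f) ↔ ∃ a b, s(a, b) ∈ F ∧ x = f a ∧ y = f b := by
  rw [Finset.mem_image]
  constructor
  · rintro ⟨e, he, h⟩
    induction e with | _ a b
    rw [Sym2.map_mk, Sym2.eq_iff] at h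
    rcases h with ⟨h1, h2⟩ | ⟨h1, h2⟩
    · exact ⟨a, b, he, h1.symm, h2.symm⟩
    · exact ⟨b, a, by rwa [Sym2.eq_swap], h2.symm, h1.symm⟩
  · rintro ⟨a, b, h, rfl, rfl⟩
    exact ⟨_, h, rfl⟩

lemma mem_unf {m : ℕ} (hm : 1 ≤ m) (F : Finset (Sym2 (Fin (m + 1)))) (x y : Fin (2 * m)) :
    s(x, y) ∈ unf hm F ↔ (∃ a b, s(a, b) ∈ F ∧ x = inc hm a ∧ y = inc hm b) ∨
      (∃ a b, s(a, b) ∈ F ∧ x = rotMap _ m (inc hm a) ∧ y = rotMap _ m (inc hm b)) := by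
  unfold unf
  rw [Finset.mem_union, mem_image_sym2, mem_image_sym2]
  rfl

/-- `E` is the double of `F` -/
structure Dbl {m : ℕ} (hm : 1 ≤ m) (E : Finset (Sym2 (Fin (2 * m))))
    (F : Finset (Sym2 (Fin (m + 1)))) : Prop where
  nd : ∀ a, s(a, a) ∉ F
  mem : ∀ a b, s(a, b) ∈ F ↔ s(inc hm a, inc hm b) ∈ E
  inv : ∀ a b, s(a, b) ∈ E → s(rotMap (2 * m) m a, rotMap (2 * m) m b) ∈ E
  dia : s(0, Fin.last m) ∈ F
  sep : ∀ x y, s(x, y) ∈ E → (x.1 ≤ m ∧ y.1 ≤ m) ∨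
    ((rotMap (2 * m) m x).1 ≤ m ∧ (rotMap (2 * m) m y).1 ≤ m)

lemma Dbl.fol_eq {m : ℕ} {hm : 1 ≤ m} {E : Finset (Sym2 (Fin (2 * m)))}
    {F : Finset (Sym2 (Fin (m + 1)))} (h : Dbl hm E F) : fol hm E = F := by
  ext e
  induction e with | _ a b
  simp only [fol, Finset.mem_filter, Finset.mem_univ, true_and, Sym2.map_mk]
  exact (h.mem a b).symm

lemma Dbl.unf_eq {m : ℕ} {hm : 1 ≤ m} {E : Finset (Sym2 (Fin (2 * m)))}
    {F : Finset (Sym2 (Fin (m + 1)))} (h : Dbl hm E F) : unf hm F = E := by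
  ext e
  induction e with | _ x y
  rw [mem_unf]
  constructor
  · rintro (⟨a, b, hab, rfl, rfl⟩ | ⟨a, b, hab, rfl, rfl⟩)
    · exact (h.mem a b).1 hab
    · exact h.inv _ _ ((h.mem a b).1 hab)
  · intro hxy
    rcases h.sep x y hxy with ⟨hx, hy⟩ | ⟨hx, hy⟩
    · left
      obtain ⟨a, rfl⟩ := exists_inc hm x hx
      obtain ⟨b, rfl⟩ := exists_inc hm y hy
      exact ⟨a, b, (h.mem a b).2 hxy, rfl, rfl⟩
    · right
      obtain ⟨a, ha⟩ := exists_inc hm _ hx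
      obtain ⟨b, hb⟩ := exists_inc hm _ hy
      refine ⟨a, b, (h.mem a b).2 ?_, ?_, ?_⟩
      · rw [← ha, ← hb]; exact h.inv _ _ hxy
      · rw [← ha, rot_rot]
      · rw [← hb, rot_rot]

/-- if `rot (inc a)` is in the half circle then `a` is an end -/
lemma rot_inc_ends {m : ℕ} (hm : 1 ≤ m) (a c : Fin (m + 1))
    (h : rotMap (2 * m) m (inc hm a) = inc hm c) :
    (a = 0 ∧ c = Fin.last m) ∨ (a = Fin.last m ∧ c = 0) := by
  have h := congrArg Fin.val h
  rw [rot_val (by omega), inc_val, inc_val] at h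
  have := a.2
  have := c.2
  simp only [Fin.ext_iff, Fin.val_zero, Fin.val_last]
  split_ifs at h <;> omega

lemma rot_edge_ends {m : ℕ} (hm : 1 ≤ m) {F : Finset (Sym2 (Fin (m + 1)))}
    (nd : ∀ a, s(a, a) ∉ F) {a b c d : Fin (m + 1)} (hab : s(a, b) ∈ F)
    (hc : rotMap (2 * m) m (inc hm a) = inc hm c)
    (hd : rotMap (2 * m) m (inc hm b) = inc hm d) : s(c, d) = s(0, Fin.last m) := by
  rcases rot_inc_ends hm a c hc with ⟨rfl, rfl⟩ | ⟨rfl, rfl⟩ <;>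
  rcases rot_inc_ends hm b d hd with ⟨rfl, rfl⟩ | ⟨rfl, rfl⟩
  · exact absurd hab (nd _)
  · exact Sym2.eq_swap
  · rfl
  · exact absurd hab (nd _)

lemma rot_inc_zero {m : ℕ} (hm : 1 ≤ m) :
    rotMap (2 * m) m (inc hm 0) = inc hm (Fin.last m) := by
  apply Fin.ext
  rw [rot_val (by omega), inc_val, inc_val, if_pos (by simp; omega)]
  simp

lemma rot_inc_last {m : ℕ} (hm : 1 ≤ m) :
    rotMap (2 * m) m (inc hm (Fin.last m)) = inc hm 0 := by
  rw [← rot_inc_zero hm, rot_rot]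

lemma dbl_unf {m : ℕ} (hm : 1 ≤ m) {F : Finset (Sym2 (Fin (m + 1)))} (nd : ∀ a, s(a, a) ∉ F)
    (dia : s(0, Fin.last m) ∈ F) : Dbl hm (unf hm F) F where
  nd := nd
  dia := dia
  mem a b := by
    rw [mem_unf]
    constructor
    · intro h
      exact Or.inl ⟨a, b, h, rfl, rfl⟩
    · rintro (⟨c, d, hcd, hc, hd⟩ | ⟨c, d, hcd, hc, hd⟩)
      · rwa [inc_inj hm hc, inc_inj hm hd]
      · rw [rot_edge_ends hm nd hcd hc.symm hd.symm]
        exact dia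
  inv x y h := by
    rw [mem_unf] at *
    rcases h with ⟨c, d, hcd, rfl, rfl⟩ | ⟨c, d, hcd, rfl, rfl⟩
    · exact Or.inr ⟨c, d, hcd, rfl, rfl⟩
    · exact Or.inl ⟨c, d, hcd, rot_rot _, rot_rot _⟩
  sep x y h := by
    rw [mem_unf] at h
    rcases h with ⟨c, d, hcd, rfl, rfl⟩ | ⟨c, d, hcd, rfl, rfl⟩
    · left
      have := c.2
      have := d.2
      rw [inc_val, inc_val]
      omega
    · right
      have := c.2
      have := d.2
      rw [rot_rot, rot_rot, inc_val, inc_val]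
      omega

lemma dbl_fol {m k : ℕ} (hm : 1 ≤ m) {E : Finset (Sym2 (Fin (2 * m)))} (h : Dia m k 0 E) :
    Dbl hm E (fol hm E) := by
  obtain ⟨⟨⟨hnc, -⟩, -, hr⟩, u, v, hu, hv, huv⟩ := h
  rw [isNC_iff] at hnc
  have hmem : ∀ a b, s(a, b) ∈ fol hm E ↔ s(inc hm a, inc hm b) ∈ E := by
    intro a b
    simp [fol]
  have key : ∀ x y : Fin (2 * m), x.1 < y.1 → s(x, y) ∈ E → (x.1 ≤ m ∧ y.1 ≤ m) ∨
      ((rotMap (2 * m) m x).1 ≤ m ∧ (rotMap (2 * m) m y).1 ≤ m) := by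
    intro x y hlt hxy
    have := x.2
    have := y.2
    by_cases hy : y.1 ≤ m
    · left; omega
    right
    have hx : x.1 = 0 ∨ m ≤ x.1 := by
      by_contra! hcon
      exact hnc.2 u v x y (by rw [Fin.lt_def]; omega) (by rw [Fin.lt_def]; omega)
        (by rw [Fin.lt_def]; omega) huv hxy
    rw [rot_val (by omega), rot_val (by omega)]
    split_ifs <;> omega
  refine ⟨fun a ha => hnc.1 _ ((hmem a a).1 ha), hmem, (rotInv_iff E).1 hr, ?_, ?_⟩
  · rw [hmem]
    have e1 : inc hm 0 = u := Fin.ext (by simp [inc, hu])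
    have e2 : inc hm (Fin.last m) = v := Fin.ext (by simp [inc, hv])
    rwa [e1, e2]
  · intro x y hxy
    rcases lt_trichotomy x.1 y.1 with h | h | h
    · exact key x y h hxy
    · exact absurd hxy (by rw [Fin.ext h]; exact hnc.1 y)
    · exact (key y x h (by rwa [Sym2.eq_swap])).imp And.symm And.symm

lemma Dbl.card {m : ℕ} {hm : 1 ≤ m} {E : Finset (Sym2 (Fin (2 * m)))}
    {F : Finset (Sym2 (Fin (m + 1)))} (h : Dbl hm E F) : E.card + 1 = 2 * F.card := by
  have h1 : (F.image (Sym2.map (inc hm)) ∩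
      F.image (Sym2.map (rotMap (2 * m) m ∘ inc hm))) = {s(inc hm 0, inc hm (Fin.last m))} := by
    ext e
    induction e with | _ x y
    rw [Finset.mem_inter, mem_image_sym2, mem_image_sym2, Finset.mem_singleton]
    constructor
    · rintro ⟨⟨a, b, hab, rfl, rfl⟩, c, d, hcd, hc, hd⟩
      have := rot_edge_ends hm h.nd hcd hc.symm hd.symm
      rw [← Sym2.map_mk, this, Sym2.map_mk]
    · intro he
      have e1 : s(x, y) ∈ F.image (Sym2.map (inc hm)) := by
        rw [he, ← Sym2.map_mk]; exact Finset.mem_image_of_mem _ h.dia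
      have e2 : s(x, y) ∈ F.image (Sym2.map (rotMap (2 * m) m ∘ inc hm)) := by
        have : s(x, y) = Sym2.map (rotMap (2 * m) m ∘ inc hm) s(0, Fin.last m) := by
          rw [he, Sym2.map_mk, Function.comp, Function.comp, rot_inc_zero, rot_inc_last,
            Sym2.eq_swap]
        rw [this]; exact Finset.mem_image_of_mem _ h.dia
      rw [mem_image_sym2] at e1 e2
      exact ⟨e1, e2⟩
  have h2 := Finset.card_union_add_card_inter (F.image (Sym2.map (inc hm)))
    (F.image (Sym2.map (rotMap (2 * m) m ∘ inc hm)))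
  rw [h1, Finset.card_singleton,
    Finset.card_image_of_injective _ (Sym2.map.injective (inc_inj hm)),
    Finset.card_image_of_injective _ (Sym2.map.injective (rot_inj.comp (inc_inj hm)))] at h2
  have h3 := h.unf_eq
  unfold unf at h3
  rw [h3] at h2
  omega

lemma Dbl.nc {m : ℕ} {hm : 1 ≤ m} {E : Finset (Sym2 (Fin (2 * m)))}
    {F : Finset (Sym2 (Fin (m + 1)))} (h : Dbl hm E F) : IsNC E ↔ IsNC F := by
  rw [isNC_iff, isNC_iff]
  constructor
  · rintro ⟨-, h2⟩
    refine ⟨h.nd, fun a b c d h1 h3 h4 hab hcd => ?_⟩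
    exact h2 (inc hm a) (inc hm b) (inc hm c) (inc hm d) h1 h3 h4
      ((h.mem _ _).1 hab) ((h.mem _ _).1 hcd)
  · rintro ⟨-, h2⟩
    have h2' : ∀ a b c d : Fin (m + 1), a.1 < c.1 → c.1 < b.1 → b.1 < d.1 → s(a, b) ∈ F →
      s(c, d) ∉ F := h2
    have key : ∀ x y : Fin (2 * m), s(x, y) ∈ E →
        (∃ a b, s(a, b) ∈ F ∧ x.1 = a.1 ∧ y.1 = b.1) ∨
        (∃ a b, s(a, b) ∈ F ∧ (x.1 = a.1 + m ∨ (x.1 = 0 ∧ a.1 = m)) ∧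
          (y.1 = b.1 + m ∨ (y.1 = 0 ∧ b.1 = m))) := by
      intro x y hxy
      rw [← h.unf_eq, mem_unf] at hxy
      have aux : ∀ a : Fin (m + 1), (rotMap (2 * m) m (inc hm a)).1 = a.1 + m ∨
          ((rotMap (2 * m) m (inc hm a)).1 = 0 ∧ a.1 = m) := by
        intro a
        have := a.2
        rw [rot_val (by omega), inc_val]
        split_ifs <;> omega
      rcases hxy with ⟨c, d, hcd, rfl, rfl⟩ | ⟨c, d, hcd, rfl, rfl⟩
      · exact Or.inl ⟨c, d, hcd, rfl, rfl⟩
      · exact Or.inr ⟨c, d, hcd, aux c, aux d⟩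
    constructor
    · intro x hx
      rcases key x x hx with ⟨a, b, hab, h3, h4⟩ | ⟨a, b, hab, h3, h4⟩
      · have : a = b := Fin.ext (by omega)
        exact h.nd a (by rwa [← this] at hab)
      · have : a = b := Fin.ext (by omega)
        exact h.nd a (by rwa [← this] at hab)
    · intro x y z w h3 h4 h5 hxy hzw
      rw [Fin.lt_def] at h3 h4 h5
      rcases key x y hxy with ⟨a, b, hab, ha, hb⟩ | ⟨a, b, hab, ha, hb⟩ <;>
      rcases key z w hzw with ⟨c, d, hcd, hc, hd⟩ | ⟨c, d, hcd, hc, hd⟩ <;>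
      have := a.2 <;> have := b.2 <;> have := c.2 <;> have := d.2
      · exact h2' a b c d (by omega) (by omega) (by omega) hab hcd
      · omega
      · omega
      · rcases ha with ha | ha
        · exact h2' a b c d (by omega) (by omega) (by omega) hab hcd
        · rw [Sym2.eq_swap] at hab
          exact h2' c d b a (by omega) (by omega) (by omega) hcd hab

lemma Dbl.conn {m : ℕ} {hm : 1 ≤ m} {E : Finset (Sym2 (Fin (2 * m)))}
    {F : Finset (Sym2 (Fin (m + 1)))} (h : Dbl hm E F) :
    (graphOf E).Connected ↔ (graphOf F).Connected := by
  constructor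
  · intro hE
    have hd : (graphOf F).Reachable 0 (Fin.last m) := by
      apply SimpleGraph.Adj.reachable
      rw [graphOf_adj]
      refine ⟨h.dia, fun hh => ?_⟩
      have := congrArg Fin.val hh
      simp at this
      omega
    let f : Fin (2 * m) → Fin (m + 1) := fun x =>
      ⟨if x.1 ≤ m then x.1 else x.1 - m, by split_ifs <;> omega⟩
    have fv : ∀ x, (f x).1 = if x.1 ≤ m then x.1 else x.1 - m := fun x => rfl
    have f1 : ∀ a, f (inc hm a) = a := by
      intro a
      have := a.2
      apply Fin.ext
      rw [fv, inc_val, if_pos (by omega)]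
    have f2 : ∀ a, (graphOf F).Reachable (f (rotMap (2 * m) m (inc hm a))) a := by
      intro a
      by_cases h0 : a = 0
      · subst h0
        rw [rot_inc_zero, f1]
        exact hd.symm
      by_cases hl : a = Fin.last m
      · subst hl
        rw [rot_inc_last, f1]
        exact hd
      · have : f (rotMap (2 * m) m (inc hm a)) = a := by
          simp only [Fin.ext_iff, Fin.val_zero, Fin.val_last] at h0 hl
          have := a.2
          have hv : (rotMap (2 * m) m (inc hm a)).1 = a.1 + m := by
            rw [rot_val (by omega), inc_val, if_pos (by omega)]
          apply Fin.ext
          rw [fv, hv, if_neg (by omega)]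
          omega
        rw [this]
    refine conn_map f ?_ (fun a => ⟨_, f1 a⟩) hE
    intro x y hxy
    rw [graphOf_adj, ← h.unf_eq, mem_unf] at hxy
    have hadj : ∀ a b, s(a, b) ∈ F → (graphOf F).Reachable a b := by
      intro a b hab
      apply SimpleGraph.Adj.reachable
      rw [graphOf_adj]
      refine ⟨hab, ?_⟩
      rintro rfl
      exact h.nd _ hab
    rcases hxy.1 with ⟨a, b, hab, rfl, rfl⟩ | ⟨a, b, hab, rfl, rfl⟩
    · rw [f1, f1]; exact hadj a b hab
    · exact ((f2 a).trans (hadj a b hab)).trans (f2 b).symm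
  · intro hF
    have r1 : ∀ a b, (graphOf E).Reachable (inc hm a) (inc hm b) := by
      intro a b
      refine reach_map (inc hm) (fun a b hab => ?_) (hF.preconnected a b)
      apply SimpleGraph.Adj.reachable
      rw [graphOf_adj] at *
      exact ⟨(h.mem a b).1 hab.1, fun hh => hab.2 (inc_inj hm hh)⟩
    have r2 : ∀ x y, (graphOf E).Reachable x y →
        (graphOf E).Reachable (rotMap (2 * m) m x) (rotMap (2 * m) m y) := by
      intro x y hxy
      refine reach_map (rotMap (2 * m) m) (fun a b hab => ?_) hxy
      apply SimpleGraph.Adj.reachable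
      rw [graphOf_adj] at *
      exact ⟨h.inv a b hab.1, fun hh => hab.2 (rot_inj hh)⟩
    have r3 : ∀ x, (graphOf E).Reachable x (inc hm 0) := by
      intro x
      by_cases hx : x.1 ≤ m
      · obtain ⟨a, rfl⟩ := exists_inc hm x hx
        exact r1 _ _
      · have hx' : (rotMap (2 * m) m x).1 ≤ m := by
          have := x.2
          rw [rot_val (by omega)]
          split_ifs <;> omega
        obtain ⟨a, ha⟩ := exists_inc hm _ hx'
        have := r2 _ _ (r1 a (Fin.last m))
        rwa [← ha, rot_rot, rot_inc_last] at this
    have : Nonempty (Fin (2 * m)) := ⟨inc hm 0⟩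
    exact SimpleGraph.Connected.mk fun x y => (r3 x).trans (r3 y).symm

lemma hasEdge_iff {m : ℕ} (F : Finset (Sym2 (Fin (m + 1)))) :
    HasEdge1n F ↔ s(0, Fin.last m) ∈ F := by
  constructor
  · rintro ⟨a, b, ha, hb, hab⟩
    have e1 : a = 0 := Fin.ext (by simpa using ha)
    have e2 : b = Fin.last m := Fin.ext (by simpa using hb)
    rwa [e1, e2] at hab
  · intro h
    exact ⟨0, Fin.last m, by simp, by simp, h⟩

lemma card_step2 (m k : ℕ) (hm : 1 ≤ m) (hk : Odd k) :
    Nat.card {E // Dia m k 0 E} = nccEdge (m + 1) ((k + 1) / 2) := by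
  unfold nccEdge
  obtain ⟨j, rfl⟩ := hk
  refine Nat.card_congr
    { toFun := fun E => ⟨fol hm E.1, ?_⟩
      invFun := fun F => ⟨unf hm F.1, ?_⟩
      left_inv := ?_
      right_inv := ?_ }
  · have h := dbl_fol hm E.2
    have hc := h.card
    refine ⟨⟨h.nc.1 E.2.1.1.1, h.conn.1 E.2.1.1.2⟩, ?_, (hasEdge_iff _).2 h.dia⟩
    rw [E.2.1.2.1] at hc
    omega
  · have h := dbl_unf hm ((isNC_iff _).1 F.2.1.1).1 ((hasEdge_iff _).1 F.2.2.2)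
    have hc := h.card
    rw [F.2.2.1] at hc
    refine ⟨⟨⟨h.nc.2 F.2.1.1, h.conn.2 F.2.1.2⟩, by omega, (rotInv_iff _).2 h.inv⟩,
      inc hm 0, inc hm (Fin.last m), by simp [inc], by simp [inc], (h.mem _ _).1 h.dia⟩
  · intro E
    exact Subtype.ext (dbl_fol hm E.2).unf_eq
  · intro F
    exact Subtype.ext
      (dbl_unf hm ((isNC_iff _).1 F.2.1.1).1 ((hasEdge_iff _).1 F.2.2.2)).fol_eq

/-- For `n` even, `k` odd, `n-1 ≤ k ≤ 2n-3`: the number of non-crossing connected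
graphs on `n` vertices with `k` edges invariant under rotation by `π` equals
`(n/2)·f_{n/2+1, (k+1)/2}`. -/
theorem stmt13 (n k : ℕ) (hne : Even n) (hko : Odd k)
    (hnk : (n : ℤ) - 1 ≤ (k : ℤ)) (hk : (k : ℤ) ≤ 2 * (n : ℤ) - 3) :
    nccRot n k (n / 2) = (n / 2) * nccEdge (n / 2 + 1) ((k + 1) / 2) := by
  obtain ⟨m, rfl⟩ := hne
  have e : m + m = 2 * m := by omega
  have e2 : (m + m) / 2 = m := by omega
  rw [e2, e, card_step1 m k hko, card_step2 m k (by omega) hko]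
end

section
/- Let d ≥ 3 divide n and let d divide k, with n' = n/d, k' = k/d. Then the number of non-crossing connected graphs on n vertices with k edges invariant under rotation by 2π/d equals n' * f_{n'+1, k'} + s_2(2n', 2k'), where f_{m,j} counts non-crossing connected graphs on m vertices with j edges containing edge {1,m}, and s_2(2n',2k') counts non-crossing connected graphs on 2n' vertices with 2k' edges invariant under rotation by π. -/
namespace NCR

open Relation

/-- Projection of the integer line to the circle with `n` vertices. -/
def pr (n : ℕ) [NeZero n] (x : ℤ) : Fin n :=
  ⟨(x % n).toNat, by
    have hn : (0 : ℤ) < n := by exact_mod_cast Nat.pos_of_ne_zero (NeZero.ne n)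
    have h1 := Int.emod_nonneg x hn.ne'
    have h2 := Int.emod_lt_of_pos x hn
    omega⟩

lemma npos (n : ℕ) [NeZero n] : (0 : ℤ) < n := by
  exact_mod_cast Nat.pos_of_ne_zero (NeZero.ne n)

lemma pr_val (n : ℕ) [NeZero n] (x : ℤ) : (((pr n x : Fin n) : ℕ) : ℤ) = x % n := by
  have h1 := Int.emod_nonneg x (npos n).ne'
  simp [pr, h1]

lemma pr_eq_iff (n : ℕ) [NeZero n] (x y : ℤ) : pr n x = pr n y ↔ ∃ t : ℤ, y = x + t * n := by
  rw [Fin.ext_iff, ← Nat.cast_inj (R := ℤ), pr_val, pr_val]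
  constructor
  · intro h
    refine ⟨y / n - x / n, ?_⟩
    have h1 := Int.emod_add_mul_ediv x n
    have h2 := Int.emod_add_mul_ediv y n
    linear_combination h1 - h2 - h
  · rintro ⟨t, rfl⟩
    simp

lemma pr_cast (n : ℕ) [NeZero n] (u : Fin n) : pr n ((u : ℕ) : ℤ) = u := by
  rw [Fin.ext_iff, ← Nat.cast_inj (R := ℤ), pr_val]
  exact Int.emod_eq_of_lt (by positivity) (by exact_mod_cast u.2)

lemma pr_add_mul (n : ℕ) [NeZero n] (x t : ℤ) : pr n (x + t * n) = pr n x :=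
  ((pr_eq_iff n x _).2 ⟨t, rfl⟩).symm

lemma pr_small (n : ℕ) [NeZero n] (x : ℤ) (h0 : 0 ≤ x) (h1 : x < n) :
    (((pr n x : Fin n) : ℕ) : ℤ) = x := by
  rw [pr_val]; exact Int.emod_eq_of_lt h0 h1

lemma rot_pr (n m : ℕ) [NeZero n] (x : ℤ) : rotMap n m (pr n x) = pr n (x + m) := by
  rw [Fin.ext_iff, ← Nat.cast_inj (R := ℤ), pr_val]
  simp [rotMap, pr_val]

lemma mul_window {n q : ℤ} (h1 : -n < q * n) (h2 : q * n < n) : q = 0 := by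
  have hn : 0 < n := by linarith
  have : q < 1 := by nlinarith
  have : -1 < q := by nlinarith
  omega

lemma pr_unique (n : ℕ) [NeZero n] {M a b a' b' : ℤ} (hM : 2 * M < n)
    (h1 : a < b) (h2 : b ≤ a + M) (h1' : a' < b') (h2' : b' ≤ a' + M)
    (h : s(pr n a, pr n b) = s(pr n a', pr n b')) :
    ∃ t : ℤ, a' = a + t * n ∧ b' = b + t * n := by
  rw [Sym2.eq_iff] at h
  rcases h with ⟨ha, hb⟩ | ⟨ha, hb⟩
  · obtain ⟨t, ht⟩ := (pr_eq_iff n _ _).1 ha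
    obtain ⟨s, hs⟩ := (pr_eq_iff n _ _).1 hb
    have : s - t = 0 := by
      apply mul_window (n := n) <;> nlinarith
    have : s = t := by omega
    subst this
    exact ⟨s, ht, hs⟩
  · obtain ⟨t, ht⟩ := (pr_eq_iff n _ _).1 ha
    obtain ⟨s, hs⟩ := (pr_eq_iff n _ _).1 hb
    exfalso
    have h3 : (t - s) * n = (b - a) + (b' - a') := by linarith
    have : t - s = 0 := by
      apply mul_window (n := n) <;> nlinarith
    rw [this] at h3
    linarith

/-- Periodic connected non-crossing families of arcs on the integer line. -/
structure PX (N : ℕ) (M : ℤ) (L : ℤ → ℤ → Prop) : Prop where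
  len : ∀ a b, L a b → a < b ∧ b ≤ a + M
  per : ∀ a b, L a b ↔ L (a + N) (b + N)
  nc : ∀ a b c e, L a b → L c e → a < c → c < b → b < e → False
  conn : ∀ x y, EqvGen L x y

/-- Arcs starting in the fundamental window. -/
def win (N : ℕ) (L : ℤ → ℤ → Prop) : Set (ℤ × ℤ) := {p | 0 ≤ p.1 ∧ p.1 < N ∧ L p.1 p.2}

lemma per_mul {N : ℕ} {L : ℤ → ℤ → Prop} (hp : ∀ a b, L a b ↔ L (a + N) (b + N)) (t : ℤ)
    (a b : ℤ) : L a b ↔ L (a + t * N) (b + t * N) := by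
  induction t using Int.induction_on with
  | zero => simp
  | succ i ih =>
    rw [ih, hp]
    ring_nf
  | pred i ih =>
    rw [ih, hp (a + (-(i : ℤ) - 1) * N)]
    ring_nf

lemma cross_set {L : ℤ → ℤ → Prop} (S : Set ℤ) {x y : ℤ} (h : EqvGen L x y) :
    ¬ (x ∈ S ↔ y ∈ S) → ∃ r s, (L r s ∨ L s r) ∧ r ∈ S ∧ s ∉ S ∧ EqvGen L x r := by
  induction h with
  | rel x y h =>
    intro hn
    by_cases hx : x ∈ S
    · exact ⟨x, y, Or.inl h, hx, by tauto, EqvGen.refl _⟩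
    · exact ⟨y, x, Or.inr h, by tauto, hx, EqvGen.rel _ _ h⟩
  | refl x => intro hn; tauto
  | symm x y h ih =>
    intro hn
    obtain ⟨r, s, h1, h2, h3, h4⟩ := ih (by tauto)
    exact ⟨r, s, h1, h2, h3, (h.symm).trans _ _ _ h4⟩
  | trans x y z h1 h2 ih1 ih2 =>
    intro hn
    by_cases hxy : x ∈ S ↔ y ∈ S
    · obtain ⟨r, s, h3, h4, h5, h6⟩ := ih2 (by tauto)
      exact ⟨r, s, h3, h4, h5, h1.trans _ _ _ h6⟩
    · exact ih1 hxy

lemma nc_inside {L : ℤ → ℤ → Prop} (hlt : ∀ a b, L a b → a < b)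
    (nc : ∀ a b c e, L a b → L c e → a < c → c < b → b < e → False)
    {p q x y : ℤ} (hpq : L p q) (hx : p < x ∧ x < q) (hy : ¬ (p < y ∧ y < q))
    (h : EqvGen L x y) : EqvGen L x p := by
  obtain ⟨r, s, h1, h2, h3, h4⟩ := cross_set (Set.Ioo p q) h (by simp only [Set.mem_Ioo]; tauto)
  simp only [Set.mem_Ioo] at h2 h3
  have hrs : EqvGen L r s := by
    rcases h1 with h1 | h1
    · exact EqvGen.rel _ _ h1
    · exact (EqvGen.rel _ _ h1).symm
  have hxs := h4.trans _ _ _ hrs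
  by_cases hsp : s = p
  · exact hsp ▸ hxs
  by_cases hsq : s = q
  · subst hsq
    exact hxs.trans _ _ _ ((EqvGen.rel _ _ hpq).symm)
  exfalso
  rcases h1 with h1 | h1
  · have := hlt _ _ h1
    exact nc p q r s hpq h1 (by omega) (by omega) (by omega)
  · have := hlt _ _ h1
    exact nc s r p q h1 hpq (by omega) (by omega) (by omega)

lemma nc_cross {L : ℤ → ℤ → Prop} (hlt : ∀ a b, L a b → a < b)
    (nc : ∀ a b c e, L a b → L c e → a < c → c < b → b < e → False)
    {a b c d : ℤ} (hab : a < b) (hbc : b < c) (hcd : c < d)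
    (h1 : EqvGen L a c) (h2 : EqvGen L b d) : EqvGen L a b := by
  obtain ⟨r, s, h3, hr, hs, h4⟩ := cross_set (Set.Ioo b d) h1
    (by simp only [Set.mem_Ioo]; omega)
  simp only [Set.mem_Ioo] at hr hs
  have hrs : EqvGen L r s := by
    rcases h3 with h3 | h3
    · exact EqvGen.rel _ _ h3
    · exact (EqvGen.rel _ _ h3).symm
  have hs' := h4.trans _ _ _ hrs
  by_cases hsb : s = b
  · exact hsb ▸ hs'
  by_cases hsd : s = d
  · subst hsd
    exact hs'.trans _ _ _ h2.symm
  rcases h3 with h3 | h3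
  · have := hlt _ _ h3
    have := nc_inside hlt nc (x := d) (y := b) h3 (by omega) (by omega) h2.symm
    exact (h4.trans _ _ _ this.symm).trans _ _ _ h2.symm
  · have := hlt _ _ h3
    have := nc_inside hlt nc (x := b) (y := d) h3 (by omega) (by omega) h2
    exact hs'.trans _ _ _ this.symm

/-- shift invariance of the equivalence -/
lemma eqv_shift {N : ℕ} {L : ℤ → ℤ → Prop} (hp : ∀ a b, L a b ↔ L (a + N) (b + N)) (t : ℤ)
    {x y : ℤ} (h : EqvGen L x y) : EqvGen L (x + t * N) (y + t * N) := by
  induction h with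
  | rel x y h => exact EqvGen.rel _ _ ((per_mul hp t _ _).1 h)
  | refl x => exact EqvGen.refl _
  | symm x y h ih => exact ih.symm
  | trans x y z h1 h2 ih1 ih2 => exact ih1.trans _ _ _ ih2

lemma eqv_step {N : ℕ} (hN : 0 < N) {L : ℤ → ℤ → Prop}
    (hp : ∀ a b, L a b ↔ L (a + N) (b + N)) (hlt : ∀ a b, L a b → a < b)
    (nc : ∀ a b c e, L a b → L c e → a < c → c < b → b < e → False)
    (v m : ℤ) (hm : m ≠ 0) (h : EqvGen L v (v + m * N)) : EqvGen L v (v + N) := by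
  have hN' : (0 : ℤ) < N := by exact_mod_cast hN
  have key : ∀ m : ℤ, 0 < m → EqvGen L v (v + m * N) → EqvGen L v (v + N) := by
    intro m hm h
    by_cases h1 : m = 1
    · subst h1; simpa using h
    have h2 := eqv_shift hp 1 h
    simp only [one_mul] at h2
    exact nc_cross hlt nc (by linarith) (by nlinarith [show 2 ≤ m by omega]) (by linarith) h h2
  rcases lt_or_gt_of_ne hm with h1 | h1
  · apply key (-m) (by omega)
    have := eqv_shift hp (-m) h
    have h3 : v + m * N + -m * N = v := by ring
    rw [h3] at this
    exact this.symm
  · exact key m h1 h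

lemma eqv_all {N : ℕ} {L : ℤ → ℤ → Prop}
    (hp : ∀ a b, L a b ↔ L (a + N) (b + N)) (v : ℤ) (h : EqvGen L v (v + N)) (t : ℤ) :
    EqvGen L v (v + t * N) := by
  induction t using Int.induction_on with
  | zero => simpa using EqvGen.refl _
  | succ i ih =>
    have := eqv_shift hp i h
    refine ih.trans _ _ _ ?_
    convert this using 1
    ring
  | pred i ih =>
    have := eqv_shift hp (-(i : ℤ) - 1) h
    refine ih.trans _ _ _ (EqvGen.symm _ _ ?_)
    convert this using 1
    ring

end NCR
namespace NCR

open Relation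

/-- The edge set on the circle with `n` vertices obtained from a family of arcs. -/
noncomputable def toE (n : ℕ) [NeZero n] (L : ℤ → ℤ → Prop) : Finset (Sym2 (Fin n)) :=
  (Set.toFinite {e | ∃ a b, L a b ∧ e = s(pr n a, pr n b)}).toFinset

lemma mem_toE {n : ℕ} [NeZero n] {L : ℤ → ℤ → Prop} {e : Sym2 (Fin n)} :
    e ∈ toE n L ↔ ∃ a b, L a b ∧ e = s(pr n a, pr n b) := by
  simp [toE]

section
variable {n N d : ℕ} [NeZero n] {M : ℤ} {L : ℤ → ℤ → Prop}

lemma per_n (hn : n = d * N) (hp : ∀ a b, L a b ↔ L (a + N) (b + N)) (t a b : ℤ) :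
    L a b ↔ L (a + t * n) (b + t * n) := by
  rw [per_mul hp (t * d) a b]
  subst hn
  push_cast
  simp only [mul_assoc]

lemma mem_pr (hn : n = d * N) (hM : 2 * M < n) (hL : PX N M L) {a b : ℤ}
    (h1 : a < b) (h2 : b ≤ a + M) : s(pr n a, pr n b) ∈ toE n L ↔ L a b := by
  rw [mem_toE]
  constructor
  · rintro ⟨a', b', h, he⟩
    obtain ⟨h1', h2'⟩ := hL.len _ _ h
    obtain ⟨t, rfl, rfl⟩ := pr_unique n hM h1 h2 h1' h2' he
    exact (per_n hn hL.per t _ _).2 h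
  · intro h
    exact ⟨a, b, h, rfl⟩

lemma pair_lift (hn : n = d * N) (hM : 2 * M < n) (hL : PX N M L) {u v : Fin n}
    (huv : u < v) (h : s(u, v) ∈ toE n L) :
    L (u : ℕ) (v : ℕ) ∨ L (v : ℕ) ((u : ℕ) + n) := by
  obtain ⟨a, b, hab, he⟩ := mem_toE.1 h
  obtain ⟨h1, h2⟩ := hL.len _ _ hab
  have hu := u.2
  have hv := v.2
  rw [Fin.lt_def] at huv
  have hu' : ((u : ℕ) : ℤ) < n := by exact_mod_cast hu
  have hv' : ((v : ℕ) : ℤ) < n := by exact_mod_cast hv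
  have huv' : ((u : ℕ) : ℤ) < (v : ℕ) := by exact_mod_cast huv
  have hu0 : (0 : ℤ) ≤ (u : ℕ) := by positivity
  rw [← pr_cast n u, ← pr_cast n v, Sym2.eq_iff] at he
  rcases he with ⟨ha, hb⟩ | ⟨hb, ha⟩
  · left
    obtain ⟨t, ht⟩ := (pr_eq_iff n _ _).1 ha
    obtain ⟨s, hs⟩ := (pr_eq_iff n _ _).1 hb
    have : s - t = 0 := by apply mul_window (n := n) <;> linarith
    have : s = t := by omega
    subst this
    rw [per_n hn hL.per s, ← ht, ← hs]
    exact hab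
  · right
    obtain ⟨t, ht⟩ := (pr_eq_iff n _ _).1 ha
    obtain ⟨s, hs⟩ := (pr_eq_iff n _ _).1 hb
    have : s - t - 1 = 0 := by apply mul_window (n := n) <;> linarith
    have : s = t + 1 := by omega
    subst this
    rw [per_n hn hL.per t, ← ht]
    convert hab using 1
    rw [hs]; ring

lemma toE_nc (hn : n = d * N) (hM : 2 * M < n) (hL : PX N M L) : IsNC (toE n L) := by
  constructor
  · intro e he hd
    obtain ⟨a, b, hab, rfl⟩ := mem_toE.1 he
    obtain ⟨h1, h2⟩ := hL.len _ _ hab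
    rw [Sym2.mk_isDiag_iff] at hd
    obtain ⟨t, ht⟩ := (pr_eq_iff n _ _).1 hd
    have : t = 0 := by apply mul_window (n := n) <;> linarith
    subst this
    linarith
  · rintro e he f hf ⟨a, b, c, k, rfl, rfl, hac, hcb, hbk⟩
    have h1 := pair_lift hn hM hL (hac.trans hcb) he
    have h2 := pair_lift hn hM hL (hcb.trans hbk) hf
    have hk := k.2
    rw [Fin.lt_def] at hac hcb hbk
    rcases h1 with h1 | h1 <;> rcases h2 with h2 | h2
    · exact hL.nc _ _ _ _ h1 h2 (by omega) (by omega) (by omega)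
    · rw [per_n hn hL.per (-1)] at h2
      exact hL.nc _ _ _ _ h2 h1 (by omega) (by omega) (by omega)
    · exact hL.nc _ _ _ _ h2 h1 (by omega) (by omega) (by omega)
    · exact hL.nc _ _ _ _ h1 h2 (by omega) (by omega) (by omega)

lemma pr_wrap (x : ℤ) (h0 : (n : ℤ) ≤ x) (h1 : x < 2 * n) :
    (((pr n x : Fin n) : ℕ) : ℤ) = x - n := by
  have := pr_small n (x - n) (by linarith) (by linarith)
  rw [← pr_add_mul n (x - n) 1] at this
  simpa using this

lemma nc_lift0 {E : Finset (Sym2 (Fin n))} (hE : IsNC E) {a b c e : ℤ}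
    (h0 : 0 ≤ a) (h0' : a < n) (h1 : a < c) (h2 : c < b) (h3 : b < e) (h4 : e < a + n)
    (hab : s(pr n a, pr n b) ∈ E) (hce : s(pr n c, pr n e) ∈ E) : False := by
  have ha := pr_small n a h0 h0'
  have key : ∀ x : ℤ, 0 ≤ x → x < 2 * n → 
      (x < n ∧ (((pr n x : Fin n) : ℕ) : ℤ) = x) ∨ 
      ((n : ℤ) ≤ x ∧ (((pr n x : Fin n) : ℕ) : ℤ) = x - n) := by
    intro x hx hx'
    by_cases h : x < n
    · exact Or.inl ⟨h, pr_small n x hx h⟩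
    · exact Or.inr ⟨by omega, pr_wrap x (by omega) hx'⟩
  have hb := key b (by omega) (by omega)
  have hc := key c (by omega) (by omega)
  have he := key e (by omega) (by omega)
  have e1 : s(pr n a, pr n b) = s(pr n b, pr n a) := Sym2.eq_swap
  have e2 : s(pr n c, pr n e) = s(pr n e, pr n c) := Sym2.eq_swap
  by_cases he' : e < n
  · exact hE.2 _ hab _ hce ⟨_, _, _, _, rfl, rfl, by rw [Fin.lt_def]; omega,
      by rw [Fin.lt_def]; omega, by rw [Fin.lt_def]; omega⟩
  by_cases hb' : b < n
  · exact hE.2 _ hce _ hab ⟨_, _, _, _, e2, rfl, by rw [Fin.lt_def]; omega,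
      by rw [Fin.lt_def]; omega, by rw [Fin.lt_def]; omega⟩
  by_cases hc' : c < n
  · exact hE.2 _ hab _ hce ⟨_, _, _, _, e1, e2, by rw [Fin.lt_def]; omega,
      by rw [Fin.lt_def]; omega, by rw [Fin.lt_def]; omega⟩
  · exact hE.2 _ hce _ hab ⟨_, _, _, _, rfl, e1, by rw [Fin.lt_def]; omega,
      by rw [Fin.lt_def]; omega, by rw [Fin.lt_def]; omega⟩

lemma nc_lift {E : Finset (Sym2 (Fin n))} (hE : IsNC E) {a b c e : ℤ}
    (h1 : a < c) (h2 : c < b) (h3 : b < e) (h4 : e < a + n)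
    (hab : s(pr n a, pr n b) ∈ E) (hce : s(pr n c, pr n e) ∈ E) : False := by
  have ha := Int.emod_nonneg a (npos n).ne'
  have ha' := Int.emod_lt_of_pos a (npos n)
  have hq := Int.emod_add_mul_ediv a n
  have e0 : a + (-(a / n)) * n = a % n := by linarith
  apply nc_lift0 hE (a := a + (-(a / n)) * n) (b := b + (-(a / n)) * n)
    (c := c + (-(a / n)) * n) (e := e + (-(a / n)) * n)
  · rw [e0]; exact ha
  · rw [e0]; exact ha'
  · linarith
  · linarith
  · linarith
  · linarith
  · simpa only [pr_add_mul] using hab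
  · simpa only [pr_add_mul] using hce

lemma toE_conn (hn : n = d * N) (hM : 2 * M < n) (hL : PX N M L) :
    (graphOf (toE n L)).Connected := by
  have key : ∀ x y, EqvGen L x y → (graphOf (toE n L)).Reachable (pr n x) (pr n y) := by
    intro x y h
    induction h with
    | rel x y h =>
      apply SimpleGraph.Adj.reachable
      rw [graphOf, SimpleGraph.fromEdgeSet_adj]
      have hm : s(pr n x, pr n y) ∈ toE n L := mem_toE.2 ⟨x, y, h, rfl⟩
      refine ⟨hm, ?_⟩
      have := (toE_nc hn hM hL).1 _ hm
      rwa [Sym2.mk_isDiag_iff] at this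
    | refl x => exact SimpleGraph.Reachable.refl _
    | symm x y h ih => exact ih.symm
    | trans x y z h1 h2 ih1 ih2 => exact ih1.trans ih2
  have : Nonempty (Fin n) := ⟨pr n 0⟩
  refine SimpleGraph.Connected.mk ?_
  intro u v
  have := key (u : ℕ) (v : ℕ) (hL.conn _ _)
  rwa [pr_cast, pr_cast] at this

lemma toE_rot (hL : PX N M L) : RotInv n N (toE n L) := by
  intro e he
  obtain ⟨a, b, hab, rfl⟩ := mem_toE.1 he
  rw [Sym2.map_mk, rot_pr, rot_pr]
  exact mem_toE.2 ⟨_, _, (hL.per _ _).1 hab, rfl⟩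

lemma toE_card (hN : 0 < N) (hn : n = d * N) (hM : 2 * M < n) (hL : PX N M L) :
    (toE n L).card = d * (win N L).ncard := by
  have hN' : (0 : ℤ) < N := by exact_mod_cast hN
  have hn' : (n : ℤ) = d * N := by rw [hn]; push_cast; rfl
  have hd : (0 : ℤ) < d := by
    have := npos n
    rw [hn'] at this
    exact pos_of_mul_pos_left this hN'.le
  let F : ℕ × (ℤ × ℤ) → Sym2 (Fin n) := fun q => s(pr n (q.2.1 + q.1 * N), pr n (q.2.2 + q.1 * N))
  have himg : (↑(toE n L) : Set (Sym2 (Fin n))) = F '' ((↑(Finset.range d) : Set ℕ) ×ˢ win N L) := by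
    ext e
    simp only [Finset.mem_coe, mem_toE, Set.mem_image, Set.mem_prod, Finset.mem_range, win,
      Set.mem_ofPred_eq, Prod.exists, F]
    constructor
    · rintro ⟨a, b, hab, rfl⟩
      have q1 := Int.emod_add_mul_ediv a N
      have q2 := Int.emod_add_mul_ediv (a / N) d
      have r1 := Int.emod_nonneg a hN'.ne'
      have r2 := Int.emod_lt_of_pos a hN'
      have r3 := Int.emod_nonneg (a / N) hd.ne'
      have r4 := Int.emod_lt_of_pos (a / N) hd
      have hj : (((a / N % d).toNat : ℕ) : ℤ) = a / N % d := Int.toNat_of_nonneg r3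
      refine ⟨(a / N % d).toNat, a % N, b + (-(a / N)) * N, ⟨by omega, r1, r2, ?_⟩, ?_⟩
      · have := (per_mul hL.per (-(a / N)) a b).1 hab
        convert this using 1
        linarith
      · rw [hj]
        have t1 : a % N + a / N % d * N = a + (-(a / N / d)) * n := by
          rw [hn']; linear_combination q1 + N * q2
        have t2 : b + (-(a / N)) * N + a / N % d * N = b + (-(a / N / d)) * n := by
          rw [hn']; linear_combination N * q2
        rw [t1, t2, pr_add_mul, pr_add_mul]
    · rintro ⟨j, a, b, ⟨-, -, -, h⟩, rfl⟩
      exact ⟨_, _, (per_mul hL.per j _ _).1 h, rfl⟩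
  have hinj : Set.InjOn F ((↑(Finset.range d) : Set ℕ) ×ˢ win N L) := by
    rintro ⟨j, a, b⟩ h ⟨j', a', b'⟩ h' he
    simp only [Set.mem_prod, Finset.coe_range, Set.mem_Iio, win, Set.mem_ofPred_eq] at h h'
    obtain ⟨hj, ha0, haN, hl⟩ := h
    obtain ⟨hj', ha0', haN', hl'⟩ := h'
    have hj1 : (j : ℤ) + 1 ≤ d := by exact_mod_cast hj
    have hj1' : (j' : ℤ) + 1 ≤ d := by exact_mod_cast hj'
    have hj0 : (0 : ℤ) ≤ j := by positivity
    have hj0' : (0 : ℤ) ≤ j' := by positivity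
    obtain ⟨l1, l2⟩ := hL.len _ _ hl
    obtain ⟨l1', l2'⟩ := hL.len _ _ hl'
    obtain ⟨t, t1, t2⟩ := pr_unique n hM (by linarith) (by linarith) (by linarith) (by linarith) he
    have m1 := mul_le_mul_of_nonneg_right hj1 hN'.le
    have m1' := mul_le_mul_of_nonneg_right hj1' hN'.le
    have m2 := mul_nonneg hj0 hN'.le
    have m2' := mul_nonneg hj0' hN'.le
    have ht : t = 0 := by
      apply mul_window (n := n) <;> linarith
    subst ht
    have hjj : (j' : ℤ) - j = 0 := by
      apply mul_window (n := N) <;> linarith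
    have hjj' : j' = j := by omega
    subst hjj'
    have : a = a' := by linarith
    have : b = b' := by linarith
    subst a' b'
    rfl
  rw [← Set.ncard_coe_finset, himg, hinj.ncard_image, Set.ncard_prod,
    Set.ncard_coe_finset, Finset.card_range]

/-- Every edge spans an arc of length at most `M`. -/
def Short (n : ℕ) [NeZero n] (M : ℤ) (E : Finset (Sym2 (Fin n))) : Prop :=
  ∀ e ∈ E, ∃ a b : ℤ, a < b ∧ b ≤ a + M ∧ e = s(pr n a, pr n b)

/-- The lift of an edge set to the line. -/
def lift (n : ℕ) [NeZero n] (M : ℤ) (E : Finset (Sym2 (Fin n))) (a b : ℤ) : Prop :=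
  a < b ∧ b ≤ a + M ∧ s(pr n a, pr n b) ∈ E

lemma toE_lift {E : Finset (Sym2 (Fin n))} (h : Short n M E) : toE n (lift n M E) = E := by
  ext e
  rw [mem_toE]
  constructor
  · rintro ⟨a, b, ⟨-, -, h⟩, rfl⟩
    exact h
  · intro he
    obtain ⟨a, b, h1, h2, rfl⟩ := h e he
    exact ⟨a, b, ⟨h1, h2, he⟩, rfl⟩

lemma lift_rot1 {E : Finset (Sym2 (Fin n))} (h : RotInv n N E) (a b : ℤ) (t : ℕ)
    (hab : lift n M E a b) : lift n M E (a + t * N) (b + t * N) := by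
  induction t with
  | zero => simpa using hab
  | succ t ih =>
    obtain ⟨h1, h2, h3⟩ := ih
    have := h _ h3
    rw [Sym2.map_mk, rot_pr, rot_pr] at this
    have e1 : a + t * N + N = a + ((t + 1 : ℕ) : ℤ) * N := by push_cast; ring
    have e2 : b + t * N + N = b + ((t + 1 : ℕ) : ℤ) * N := by push_cast; ring
    rw [← e1, ← e2]
    exact ⟨by linarith, by linarith, this⟩

lemma lift_per (hd : 0 < d) (hn : n = d * N) {E : Finset (Sym2 (Fin n))} (h : RotInv n N E)
    (a b : ℤ) : lift n M E a b ↔ lift n M E (a + N) (b + N) := by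
  constructor
  · intro hab
    simpa using lift_rot1 h a b 1 hab
  · intro hab
    obtain ⟨h1, h2, h3⟩ := lift_rot1 h _ _ (d - 1) hab
    have hn' : (n : ℤ) = d * N := by rw [hn]; push_cast; rfl
    have e : ∀ x : ℤ, x + N + ((d - 1 : ℕ) : ℤ) * N = x + 1 * n := by
      intro x
      rw [hn', Nat.cast_sub (by omega)]
      push_cast
      ring
    rw [e, e] at h1 h2
    rw [e, e, pr_add_mul, pr_add_mul] at h3
    exact ⟨by linarith, by linarith, h3⟩

lemma lift_PX (hN : 0 < N) (hd : 2 ≤ d) (hn : n = d * N) (hM : 2 * M < n)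
    {E : Finset (Sym2 (Fin n))} (hE : IsNCC E) (hrot : RotInv n N E) (hs : Short n M E) :
    PX N M (lift n M E) := by
  have hn' : (n : ℤ) = d * N := by rw [hn]; push_cast; rfl
  have hper := lift_per (M := M) (by omega) hn hrot
  have hlt : ∀ a b, lift n M E a b → a < b := fun a b h => h.1
  have hnc : ∀ a b c e, lift n M E a b → lift n M E c e → a < c → c < b → b < e → False := by
    rintro a b c e ⟨h1, h2, h3⟩ ⟨h4, h5, h6⟩ h7 h8 h9
    exact nc_lift hE.1 h7 h8 h9 (by linarith) h3 h6
  have hwalk : ∀ u v : Fin n, (graphOf E).Reachable u v → ∀ x : ℤ, pr n x = u →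
      ∃ y : ℤ, pr n y = v ∧ EqvGen (lift n M E) x y := by
    rintro u v ⟨w⟩
    induction w with
    | nil => intro x hx; exact ⟨x, hx, EqvGen.refl _⟩
    | @cons u v w hadj p ih =>
      intro x hx
      rw [graphOf, SimpleGraph.fromEdgeSet_adj] at hadj
      have huv : s(u, v) ∈ E := hadj.1
      obtain ⟨a, b, h1, h2, h3⟩ := hs _ huv
      have hab : lift n M E a b := ⟨h1, h2, h3 ▸ huv⟩
      have step : ∃ z : ℤ, pr n z = v ∧ EqvGen (lift n M E) x z := by
        rw [Sym2.eq_iff] at h3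
        rcases h3 with ⟨h3, h4⟩ | ⟨h3, h4⟩
        · obtain ⟨t, rfl⟩ := (pr_eq_iff n a x).1 (by rw [hx, h3])
          refine ⟨b + t * n, by rw [pr_add_mul, h4], EqvGen.rel _ _ ?_⟩
          exact (per_n hn hper t _ _).1 hab
        · obtain ⟨t, rfl⟩ := (pr_eq_iff n b x).1 (by rw [hx, h3])
          refine ⟨a + t * n, by rw [pr_add_mul, h4], EqvGen.symm _ _ (EqvGen.rel _ _ ?_)⟩
          exact (per_n hn hper t _ _).1 hab
      obtain ⟨z, hz, hxz⟩ := step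
      obtain ⟨y, hy, hzy⟩ := ih z hz
      exact ⟨y, hy, hxz.trans _ _ _ hzy⟩
  refine ⟨fun a b h => ⟨h.1, h.2.1⟩, hper, hnc, ?_⟩
  intro x y
  have hstep : ∀ v : ℤ, EqvGen (lift n M E) v (v + N) := by
    intro v
    obtain ⟨y, hy, hvy⟩ := hwalk (pr n v) (pr n (v + N)) (hE.2.preconnected _ _) v rfl
    obtain ⟨t, ht⟩ := (pr_eq_iff n _ _).1 hy.symm
    apply eqv_step hN hper hlt hnc v (1 + t * d)
    · intro h0
      have h1 : t * (d : ℤ) = -1 := by linarith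
      have h2 : (d : ℤ) ∣ 1 := ⟨-t, by linarith⟩
      have h3 := Int.le_of_dvd (by norm_num) h2
      omega
    · convert hvy using 1
      rw [ht, hn']; ring
  obtain ⟨z, hz, hxz⟩ := hwalk (pr n x) (pr n y) (hE.2.preconnected _ _) x rfl
  obtain ⟨t, ht⟩ := (pr_eq_iff n _ _).1 hz.symm
  have := eqv_all hper y (hstep y) (t * d)
  have e : y + t * d * N = z := by rw [ht, hn']; ring
  rw [e] at this
  exact hxz.trans _ _ _ this.symm

lemma lift_toE (hn : n = d * N) (hM : 2 * M < n) (hL : PX N M L) : lift n M (toE n L) = L := by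
  funext a b
  apply propext
  constructor
  · rintro ⟨h1, h2, h3⟩
    exact (mem_pr hn hM hL h1 h2).1 h3
  · intro h
    obtain ⟨h1, h2⟩ := hL.len _ _ h
    exact ⟨h1, h2, (mem_pr hn hM hL h1 h2).2 h⟩

lemma toE_short (hL : PX N M L) : Short n M (toE n L) := by
  intro e he
  obtain ⟨a, b, hab, rfl⟩ := mem_toE.1 he
  obtain ⟨h1, h2⟩ := hL.len _ _ hab
  exact ⟨a, b, h1, h2, rfl⟩

/-- Symmetric short graphs correspond to periodic families. -/
noncomputable def equivA (hN : 0 < N) (hd : 2 ≤ d) (hn : n = d * N) (hM : 2 * M < n) (K : ℕ) :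
    {E : Finset (Sym2 (Fin n)) // (IsNCC E ∧ E.card = d * K ∧ RotInv n N E) ∧ Short n M E} ≃
    {L : ℤ → ℤ → Prop // PX N M L ∧ (win N L).ncard = K} where
  toFun E := ⟨lift n M E.1, by
    obtain ⟨E, ⟨h1, h2, h3⟩, h4⟩ := E
    have hp := lift_PX hN hd hn hM h1 h3 h4
    refine ⟨hp, ?_⟩
    have := toE_card hN hn hM hp
    rw [toE_lift h4, h2] at this
    exact (Nat.eq_of_mul_eq_mul_left (by omega) this).symm⟩
  invFun L := ⟨toE n L.1, by
    obtain ⟨L, h1, h2⟩ := L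
    exact ⟨⟨⟨toE_nc hn hM h1, toE_conn hn hM h1⟩, by rw [toE_card hN hn hM h1, h2], toE_rot h1⟩,
      toE_short h1⟩⟩
  left_inv E := Subtype.ext (toE_lift E.2.2)
  right_inv L := Subtype.ext (lift_toE hn hM L.2.1)

end

end NCR
namespace NCR

open Relation

section
variable {n N d : ℕ} [NeZero n] {M : ℤ}

lemma half_arc {E : Finset (Sym2 (Fin n))} (hE : IsNC E) (e : Sym2 (Fin n)) (he : e ∈ E) :
    ∃ a b : ℤ, a < b ∧ 2 * (b - a) ≤ n ∧ e = s(pr n a, pr n b) := by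
  have key : ∀ u v : Fin n, u < v →
      ∃ a b : ℤ, a < b ∧ 2 * (b - a) ≤ n ∧ s(u, v) = s(pr n a, pr n b) := by
    intro u v huv
    rw [Fin.lt_def] at huv
    have hv := v.2
    by_cases h : 2 * (((v : ℕ) : ℤ) - (u : ℕ)) ≤ n
    · exact ⟨(u : ℕ), (v : ℕ), by omega, h, by rw [pr_cast, pr_cast]⟩
    · refine ⟨(v : ℕ), (u : ℕ) + 1 * n, by omega, by omega, ?_⟩
      rw [pr_add_mul, pr_cast, pr_cast]
      exact Sym2.eq_swap
  induction e using Sym2.ind with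
  | _ u v =>
    have hne : u ≠ v := by
      have := hE.1 _ he
      rwa [Sym2.mk_isDiag_iff] at this
    rcases lt_or_gt_of_ne hne with h | h
    · exact key u v h
    · rw [Sym2.eq_swap]
      exact key v u h

lemma short3 (hN : 0 < N) (hd : 3 ≤ d) (hn : n = d * N) {E : Finset (Sym2 (Fin n))}
    (hE : IsNC E) (hr : RotInv n N E) : Short n N E := by
  intro e he
  obtain ⟨a, b, h1, h2, rfl⟩ := half_arc hE e he
  refine ⟨a, b, h1, ?_, rfl⟩
  by_contra hlt
  have hr' := hr _ he
  rw [Sym2.map_mk, rot_pr, rot_pr] at hr'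
  have h3 : 3 * N ≤ n := by rw [hn]; exact Nat.mul_le_mul_right _ hd
  exact nc_lift hE (by omega) (by omega) (by omega) (by omega) he hr'

lemma rot_rot (hn : n = 2 * N) (e : Sym2 (Fin n)) :
    Sym2.map (rotMap n N) (Sym2.map (rotMap n N) e) = e := by
  have key : ∀ u : Fin n, rotMap n N (rotMap n N u) = u := by
    intro u
    rw [← pr_cast n u, rot_pr, rot_pr, pr_eq_iff]
    exact ⟨-1, by push_cast [hn]; ring⟩
  induction e using Sym2.ind with
  | _ u v => rw [Sym2.map_mk, Sym2.map_mk, key, key]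

lemma diam_shift (hn : n = 2 * N) (x t : ℤ) :
    s(pr n (x + t * N), pr n (x + t * N + N)) = s(pr n x, pr n (x + N)) := by
  have hn' : (n : ℤ) = 2 * N := by rw [hn]; push_cast; rfl
  rcases Int.even_or_odd' t with ⟨k, rfl | rfl⟩
  · have e1 : x + 2 * k * N = x + k * n := by rw [hn']; ring
    have e2 : x + k * n + N = x + N + k * n := by ring
    rw [e1, e2, pr_add_mul, pr_add_mul]
  · have e1 : x + (2 * k + 1) * N = x + N + k * n := by rw [hn']; ring
    have e2 : x + N + k * n + N = x + (k + 1) * n := by rw [hn']; ring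
    rw [e1, e2, pr_add_mul, pr_add_mul]
    exact Sym2.eq_swap

lemma short2 (hN : 0 < N) (hn : n = 2 * N) {E : Finset (Sym2 (Fin n))}
    (hE : IsNC E) (hr : RotInv n N E) (K : ℕ) (hK : E.card = 2 * K) : Short n (N - 1) E := by
  have hn' : (n : ℤ) = 2 * N := by rw [hn]; push_cast; rfl
  intro e he
  obtain ⟨a, b, h1, h2, rfl⟩ := half_arc hE e he
  refine ⟨a, b, h1, ?_, rfl⟩
  by_contra hlt
  have hb : b = a + N := by omega
  subst hb
  exfalso
  -- a symmetric edge is the diameter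
  have hfix : ∀ e ∈ E, Sym2.map (rotMap n N) e = e → e = s(pr n a, pr n (a + N)) := by
    intro e he' hf
    obtain ⟨x, y, g1, g2, rfl⟩ := half_arc hE e he'
    rw [Sym2.map_mk, rot_pr, rot_pr, Sym2.eq_iff] at hf
    have hy : y = x + N := by
      rcases hf with ⟨hf, -⟩ | ⟨hf, -⟩
      · obtain ⟨t, ht⟩ := (pr_eq_iff n _ _).1 hf
        exfalso
        have h3 : (2 * t + 1) * N = 0 := by rw [hn'] at ht; linarith
        rcases mul_eq_zero.1 h3 with h | h <;> omega
      · obtain ⟨t, ht⟩ := (pr_eq_iff n _ _).1 hf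
        have h3 : (2 * t + 1) * N = y - x := by rw [hn'] at ht; linarith
        have h4 : 0 < 2 * t + 1 := by
          by_contra hc
          nlinarith
        have h5 : 2 * t + 1 < 2 := by
          by_contra hc
          nlinarith
        have h6 : t = 0 := by omega
        subst h6
        linarith
    subst hy
    have hN' : (0 : ℤ) < N := by exact_mod_cast hN
    have q := Int.emod_add_mul_ediv (x - a) N
    have r1 := Int.emod_nonneg (x - a) hN'.ne'
    have r2 := Int.emod_lt_of_pos (x - a) hN'
    rw [← diam_shift hn x (-((x - a) / N))] at he' ⊢
    have e0 : x + -((x - a) / N) * N = a + (x - a) % N := by linarith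
    rw [e0] at he' ⊢
    by_cases h0 : (x - a) % N = 0
    · rw [h0]; simp
    · exfalso
      exact nc_lift hE (by omega) (by omega) (by omega) (by omega) he he'
  set D := s(pr n a, pr n (a + N)) with hD
  have hDfix : Sym2.map (rotMap n N) D = D := by
    rw [hD, Sym2.map_mk, rot_pr, rot_pr]
    simpa using diam_shift hn a 1
  have hsum : ∑ _e ∈ E.erase D, (1 : ZMod 2) = 0 := by
    apply Finset.sum_involution (fun e _ => Sym2.map (rotMap n N) e)
    · intro e _; decide
    · intro e he' _ hf
      rw [Finset.mem_erase] at he'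
      exact he'.1 (hfix e he'.2 hf)
    · intro e he'
      rw [Finset.mem_erase] at he' ⊢
      refine ⟨?_, hr _ he'.2⟩
      intro hc
      apply he'.1
      rw [← rot_rot hn e, hc, hDfix]
    · intro e he'
      exact rot_rot hn e
  rw [Finset.sum_const, nsmul_one, Finset.card_erase_of_mem he, hK] at hsum
  have hpos : 0 < E.card := Finset.card_pos.2 ⟨_, he⟩
  rw [ZMod.natCast_eq_zero_iff] at hsum
  omega

end

/-- Clamp an integer to `0, …, N`. -/
def cl (N : ℕ) (x : ℤ) : Fin (N + 1) := ⟨min x.toNat N, by omega⟩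

lemma cl_val {N : ℕ} {x : ℤ} (h0 : 0 ≤ x) (h1 : x ≤ N) : (((cl N x : Fin (N + 1)) : ℕ) : ℤ) = x := by
  simp only [cl]; omega

lemma cl_cast {N : ℕ} (u : Fin (N + 1)) : cl N ((u : ℕ) : ℤ) = u := by
  apply Fin.ext
  have := u.2
  simp only [cl]; omega

lemma cl_low {N : ℕ} {x : ℤ} (h : x ≤ 0) : cl N x = cl N 0 := by
  apply Fin.ext
  simp only [cl]; omega

lemma cl_high {N : ℕ} {x : ℤ} (h : N ≤ x) : cl N x = cl N N := by
  apply Fin.ext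
  simp only [cl]; omega

lemma cl_lt {N : ℕ} {x y : ℤ} (h0 : 0 ≤ x) (h1 : x < y) (h2 : y ≤ N) : cl N x < cl N y := by
  rw [Fin.lt_def]
  simp only [cl]; omega

lemma cl_pair {N : ℕ} {p q p' q' : ℤ} (h0 : 0 ≤ p) (h1 : p < q) (h2 : q ≤ N)
    (h0' : 0 ≤ p') (h1' : p' < q') (h2' : q' ≤ N)
    (h : s(cl N p, cl N q) = s(cl N p', cl N q')) : p = p' ∧ q = q' := by
  have a1 := cl_val (N := N) h0 (by omega)
  have a2 := cl_val (N := N) (x := q) (by omega) (by omega)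
  have a3 := cl_val (N := N) h0' (by omega)
  have a4 := cl_val (N := N) (x := q') (by omega) (by omega)
  rw [Sym2.eq_iff, Fin.ext_iff, Fin.ext_iff, Fin.ext_iff, Fin.ext_iff] at h
  omega

/-- Periodic family obtained by repeating a graph on a block `[v, v+N]`. -/
def fromF (N : ℕ) (v : ℤ) (F : Finset (Sym2 (Fin (N + 1)))) (a b : ℤ) : Prop :=
  a < b ∧ (a - v) % N + (b - a) ≤ N ∧ s(cl N ((a - v) % N), cl N ((a - v) % N + (b - a))) ∈ F

/-- The block `[v, v+N]` of a periodic family. -/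
noncomputable def toF (N : ℕ) (v : ℤ) (L : ℤ → ℤ → Prop) : Finset (Sym2 (Fin (N + 1))) :=
  (Set.toFinite {e | ∃ a b, v ≤ a ∧ b ≤ v + N ∧ L a b ∧ e = s(cl N (a - v), cl N (b - v))}).toFinset

section
variable {N : ℕ} {v : ℤ} {F : Finset (Sym2 (Fin (N + 1)))} {L : ℤ → ℤ → Prop}

lemma fromF_block {a b j : ℤ} (h1 : v + j * N ≤ a) (h2 : a < v + j * N + N) :
    fromF N v F a b ↔ a < b ∧ b ≤ v + j * N + N ∧
      s(cl N (a - (v + j * N)), cl N (b - (v + j * N))) ∈ F := by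
  have e : (a - v) % N = a - (v + j * N) := by
    have : a - v = (a - (v + j * N)) + j * N := by ring
    rw [this, Int.add_mul_emod_self_right]
    exact Int.emod_eq_of_lt (by linarith) (by linarith)
  have e2 : a - (v + j * N) + (b - a) = b - (v + j * N) := by ring
  rw [fromF, e, e2]
  constructor
  · rintro ⟨h3, h4, h5⟩
    exact ⟨h3, by linarith, h5⟩
  · rintro ⟨h3, h4, h5⟩
    exact ⟨h3, by linarith, h5⟩

lemma exists_block (hN : 0 < N) (v a : ℤ) : ∃ j : ℤ, v + j * N ≤ a ∧ a < v + j * N + N := by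
  have hN' : (0 : ℤ) < N := by exact_mod_cast hN
  have q := Int.emod_add_mul_ediv (a - v) N
  have r1 := Int.emod_nonneg (a - v) hN'.ne'
  have r2 := Int.emod_lt_of_pos (a - v) hN'
  exact ⟨(a - v) / N, by linarith, by linarith⟩

lemma hasEdge_iff : HasEdge1n F ↔ s(cl N 0, cl N N) ∈ F := by
  constructor
  · rintro ⟨a, b, h1, h2, h3⟩
    rw [← cl_cast a, ← cl_cast b, h1, h2] at h3
    simpa using h3
  · intro h
    exact ⟨_, _, by simp [cl], by simp [cl], h⟩

lemma fromF_per (a b : ℤ) : fromF N v F a b ↔ fromF N v F (a + N) (b + N) := by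
  have e : (a + N - v) % N = (a - v) % N := by
    have : a + N - v = (a - v) + 1 * N := by ring
    rw [this, Int.add_mul_emod_self_right]
  have e2 : b + N - (a + N) = b - a := by ring
  rw [fromF, fromF, e, e2]
  simp

lemma fromF_long (hN : 0 < N) (h : HasEdge1n F) : fromF N v F v (v + N) := by
  rw [fromF_block (j := 0) (by simp) (by simpa using hN)]
  refine ⟨by simpa using hN, by simp, ?_⟩
  simpa using hasEdge_iff.1 h

lemma fromF_PX (hN : 0 < N) (hF : IsNCC F) (h : HasEdge1n F) : PX N N (fromF N v F) := by
  have hN' : (0 : ℤ) < N := by exact_mod_cast hN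
  refine ⟨?_, fromF_per, ?_, ?_⟩
  · rintro a b ⟨h1, h2, -⟩
    have r1 := Int.emod_nonneg (a - v) hN'.ne'
    exact ⟨h1, by linarith⟩
  · intro a b c e hab hce h1 h2 h3
    obtain ⟨j, j1, j2⟩ := exists_block hN v a
    obtain ⟨-, b1, b2⟩ := (fromF_block j1 j2).1 hab
    obtain ⟨-, c1, c2⟩ := (fromF_block (j := j) (by linarith) (by linarith)).1 hce
    exact hF.1.2 _ b2 _ c2 ⟨_, _, _, _, rfl, rfl, cl_lt (by linarith) (by linarith) (by linarith),
      cl_lt (by linarith) (by linarith) (by linarith),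
      cl_lt (by linarith) (by linarith) (by linarith)⟩
  · have hw : ∀ u w : Fin (N + 1), (graphOf F).Reachable u w →
        EqvGen (fromF N v F) (v + (u : ℕ)) (v + (w : ℕ)) := by
      rintro u w ⟨p⟩
      induction p with
      | nil => exact EqvGen.refl _
      | @cons u w z hadj p ih =>
        refine EqvGen.trans _ _ _ ?_ ih
        rw [graphOf, SimpleGraph.fromEdgeSet_adj] at hadj
        have huw : s(u, w) ∈ F := hadj.1
        have key : ∀ u w : Fin (N + 1), u < w → s(u, w) ∈ F →
            fromF N v F (v + (u : ℕ)) (v + (w : ℕ)) := by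
          intro u w h1 h2
          rw [Fin.lt_def] at h1
          have := w.2
          rw [fromF_block (j := 0) (by simp) (by simp only [zero_mul]; omega)]
          refine ⟨by omega, by simp only [zero_mul]; omega, ?_⟩
          have e1 : ∀ x : ℤ, v + x - (v + 0 * N) = x := by intro x; ring
          rw [e1, e1, cl_cast, cl_cast]
          exact h2
        rcases lt_or_gt_of_ne hadj.2 with h | h
        · exact EqvGen.rel _ _ (key _ _ h huw)
        · exact EqvGen.symm _ _ (EqvGen.rel _ _ (key _ _ h (Sym2.eq_swap ▸ huw)))
    have h0 : ∀ x : ℤ, 0 ≤ x → x ≤ N → EqvGen (fromF N v F) v (v + x) := by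
      intro x hx hx'
      have := hw (cl N 0) (cl N x) (hF.2.preconnected _ _)
      rw [cl_val hx hx', cl_val le_rfl hN'.le] at this
      simpa using this
    have hall : ∀ x, EqvGen (fromF N v F) v x := by
      intro x
      obtain ⟨j, j1, j2⟩ := exists_block hN v x
      have a1 := h0 (x - (v + j * N)) (by linarith) (by linarith)
      have a2 := eqv_shift fromF_per j a1
      have a3 := eqv_all fromF_per v (h0 N hN'.le le_rfl) j
      have := a3.trans _ _ _ a2
      convert this using 1
      ring
    exact fun x y => (hall x).symm.trans _ _ _ (hall y)

lemma fromF_card (hN : 0 < N) (hF : IsNC F) : (win N (fromF N v F)).ncard = F.card := by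
  have hN' : (0 : ℤ) < N := by exact_mod_cast hN
  let G : ℤ × ℤ → Sym2 (Fin (N + 1)) := fun p =>
    s(cl N ((p.1 - v) % N), cl N ((p.1 - v) % N + (p.2 - p.1)))
  have himg : (↑F : Set (Sym2 (Fin (N + 1)))) = G '' win N (fromF N v F) := by
    ext e
    simp only [Finset.mem_coe, Set.mem_image, win, Set.mem_ofPred_eq, Prod.exists, G]
    constructor
    · have key : ∀ u w : Fin (N + 1), u < w → s(u, w) ∈ F → ∃ a b : ℤ,
          (0 ≤ a ∧ a < N ∧ fromF N v F a b) ∧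
          s(cl N ((a - v) % N), cl N ((a - v) % N + (b - a))) = s(u, w) := by
        intro u w h1 h2
        rw [Fin.lt_def] at h1
        have hw := w.2
        have hr : ((v + (u : ℕ)) % N - v) % N = (u : ℕ) := by
          rw [Int.emod_sub_emod]
          rw [add_sub_cancel_left]
          exact Int.emod_eq_of_lt (by positivity) (by omega)
        have hw' : (((u : ℕ) : ℤ) + ((v + (u : ℕ)) % N + ((w : ℕ) - (u : ℕ)) - (v + (u : ℕ)) % N))
          = (w : ℕ) := by ring
        refine ⟨(v + (u : ℕ)) % N, (v + (u : ℕ)) % N + ((w : ℕ) - (u : ℕ)),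
          ⟨Int.emod_nonneg _ hN'.ne', Int.emod_lt_of_pos _ hN', ?_⟩, ?_⟩
        · rw [fromF, hr, hw', cl_cast, cl_cast]
          exact ⟨by omega, by omega, h2⟩
        · rw [hr, hw', cl_cast, cl_cast]
      intro he
      induction e using Sym2.ind with
      | _ u w =>
        have hne : u ≠ w := by
          have := hF.1 _ he
          rwa [Sym2.mk_isDiag_iff] at this
        rcases lt_or_gt_of_ne hne with h | h
        · exact key u w h he
        · rw [Sym2.eq_swap] at he ⊢
          exact key w u h he
    · rintro ⟨a, b, ⟨-, -, -, -, h⟩, rfl⟩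
      exact h
  have hinj : Set.InjOn G (win N (fromF N v F)) := by
    rintro ⟨a, b⟩ ⟨h1, h2, h3, h4, -⟩ ⟨a', b'⟩ ⟨h1', h2', h3', h4', -⟩ he
    simp only at h1 h2 h3 h4 h1' h2' h3' h4'
    have r1 := Int.emod_nonneg (a - v) hN'.ne'
    have r1' := Int.emod_nonneg (a' - v) hN'.ne'
    obtain ⟨e1, e2⟩ := cl_pair r1 (by linarith) h4 r1' (by linarith) h4' he
    have q := Int.emod_add_mul_ediv (a - v) N
    have q' := Int.emod_add_mul_ediv (a' - v) N
    have : (a - v) / N - (a' - v) / N = 0 := by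
      apply mul_window (n := N) <;> linarith
    have hq : (a - v) / N = (a' - v) / N := by omega
    rw [hq] at q
    have ha : a = a' := by linarith
    subst ha
    have hb : b = b' := by linarith
    subst hb
    rfl
  rw [← Set.ncard_coe_finset, himg, hinj.ncard_image]

lemma mem_toF (hlt : ∀ a b, L a b → a < b) {p q : ℤ} (h0 : 0 ≤ p) (h1 : p < q) (h2 : q ≤ N) :
    s(cl N p, cl N q) ∈ toF N v L ↔ L (v + p) (v + q) := by
  simp only [toF, Set.Finite.mem_toFinset, Set.mem_ofPred_eq]
  constructor
  · rintro ⟨a, b, h3, h4, h5, h6⟩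
    have := hlt _ _ h5
    obtain ⟨rfl, rfl⟩ := cl_pair h0 h1 h2 (by linarith) (by linarith) (by linarith) h6
    simpa using h5
  · intro h
    exact ⟨v + p, v + q, by linarith, by linarith, h, by simp⟩

lemma mem_toF' (hlt : ∀ a b, L a b → a < b) {u w : Fin (N + 1)} (h : u < w) :
    s(u, w) ∈ toF N v L ↔ L (v + (u : ℕ)) (v + (w : ℕ)) := by
  have hw := w.2
  rw [Fin.lt_def] at h
  rw [← mem_toF (N := N) (p := (u : ℕ)) (q := (w : ℕ)) hlt (by positivity) (by omega) (by omega),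
    cl_cast, cl_cast]

lemma block_of (hL : PX N N L) (hv : L v (v + N)) {a b j : ℤ} (hab : L a b)
    (h1 : v + j * N ≤ a) (h2 : a < v + j * N + N) : b ≤ v + j * N + N := by
  by_contra hc
  have hj := (per_mul hL.per j _ _).1 hv
  have := (hL.len _ _ hab).2
  have : a ≠ v + j * N := by rintro rfl; linarith
  exact hL.nc _ _ _ _ hj hab (by omega) (by linarith) (by linarith)

lemma toF_nc (hL : PX N N L) : IsNC (toF N v L) := by
  have hlt : ∀ a b, L a b → a < b := fun a b h => (hL.len a b h).1
  constructor
  · intro e he hd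
    simp only [toF, Set.Finite.mem_toFinset, Set.mem_ofPred_eq] at he
    obtain ⟨a, b, h3, h4, h5, rfl⟩ := he
    rw [Sym2.mk_isDiag_iff] at hd
    have := hlt _ _ h5
    exact absurd hd (cl_lt (by linarith) (by linarith) (by linarith)).ne
  · rintro e he f hf ⟨a, b, c, k, rfl, rfl, hac, hcb, hbk⟩
    rw [mem_toF' hlt (hac.trans hcb)] at he
    rw [mem_toF' hlt (hcb.trans hbk)] at hf
    rw [Fin.lt_def] at hac hcb hbk
    exact hL.nc _ _ _ _ he hf (by omega) (by omega) (by omega)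

lemma toF_conn (hL : PX N N L) (hv : L v (v + N)) : (graphOf (toF N v L)).Connected := by
  have hlt : ∀ a b, L a b → a < b := fun a b h => (hL.len a b h).1
  have key : ∀ x y, EqvGen L x y →
      (graphOf (toF N v L)).Reachable (cl N (x - v)) (cl N (y - v)) := by
    intro x y h
    induction h with
    | rel x y h =>
      obtain ⟨l1, l2⟩ := hL.len _ _ h
      by_cases h1 : x < v
      · have hy : y ≤ v := by
          by_contra hc
          have hj := (per_mul hL.per (-1) _ _).1 hv
          exact hL.nc _ _ _ _ hj h (by linarith) (by linarith) (by linarith)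
        rw [cl_low (x := x - v) (by linarith), cl_low (x := y - v) (by linarith)]
      by_cases h2 : v + N ≤ x
      · rw [cl_high (x := x - v) (by linarith), cl_high (x := y - v) (by linarith)]
      have h3 := block_of hL hv (j := 0) h (by linarith) (by linarith)
      apply SimpleGraph.Adj.reachable
      rw [graphOf, SimpleGraph.fromEdgeSet_adj]
      refine ⟨?_, (cl_lt (by linarith) (by linarith) (by linarith)).ne⟩
      have := (mem_toF (v := v) hlt (p := x - v) (q := y - v) (N := N) (by linarith) (by linarith)
        (by linarith)).2 (by simpa using h)
      exact this
    | refl x => exact SimpleGraph.Reachable.refl _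
    | symm x y h ih => exact ih.symm
    | trans x y z h1 h2 ih1 ih2 => exact ih1.trans ih2
  have : Nonempty (Fin (N + 1)) := ⟨0⟩
  refine SimpleGraph.Connected.mk ?_
  intro u w
  have := key (v + (u : ℕ)) (v + (w : ℕ)) (hL.conn _ _)
  rwa [add_sub_cancel_left, add_sub_cancel_left, cl_cast, cl_cast] at this

lemma toF_edge (hN : 0 < N) (hL : PX N N L) (hv : L v (v + N)) : HasEdge1n (toF N v L) := by
  have hlt : ∀ a b, L a b → a < b := fun a b h => (hL.len a b h).1
  rw [hasEdge_iff, mem_toF hlt le_rfl (by exact_mod_cast hN) le_rfl]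
  simpa using hv

lemma fromF_toF (hN : 0 < N) (hL : PX N N L) (hv : L v (v + N)) :
    fromF N v (toF N v L) = L := by
  have hlt : ∀ a b, L a b → a < b := fun a b h => (hL.len a b h).1
  funext a b
  apply propext
  obtain ⟨j, j1, j2⟩ := exists_block hN v a
  rw [fromF_block j1 j2]
  have e : ∀ x : ℤ, v + (x - (v + j * N)) + j * N = x := by intro x; ring
  constructor
  · rintro ⟨h1, h2, h3⟩
    rw [mem_toF hlt (by linarith) (by linarith) (by linarith), per_mul hL.per j, e, e] at h3
    exact h3
  · intro h
    have h1 := hlt _ _ h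
    have h2 := block_of hL hv h j1 j2
    refine ⟨h1, h2, ?_⟩
    rw [mem_toF hlt (by linarith) (by linarith) (by linarith), per_mul hL.per j, e, e]
    exact h

lemma sym2_ext {E F : Finset (Sym2 (Fin N))} (hE : IsNC E) (hF : IsNC F)
    (h : ∀ u w : Fin N, u < w → (s(u, w) ∈ E ↔ s(u, w) ∈ F)) : E = F := by
  ext e
  induction e using Sym2.ind with
  | _ u w =>
    rcases lt_trichotomy u w with h1 | rfl | h1
    · exact h u w h1
    · constructor
      · intro h2
        exact absurd (Sym2.mk_isDiag_iff.2 rfl) (hE.1 _ h2)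
      · intro h2
        exact absurd (Sym2.mk_isDiag_iff.2 rfl) (hF.1 _ h2)
    · rw [Sym2.eq_swap]
      exact h w u h1

lemma toF_fromF (hN : 0 < N) (hF : IsNCC F) (he : HasEdge1n F) : toF N v (fromF N v F) = F := by
  have hp := fromF_PX (v := v) hN hF he
  have hlt : ∀ a b, fromF N v F a b → a < b := fun a b h => (hp.len a b h).1
  apply sym2_ext (toF_nc hp) hF.1
  intro u w h
  have hw := w.2
  rw [mem_toF' hlt h]
  rw [Fin.lt_def] at h
  rw [fromF_block (j := 0) (by simp) (by simp only [zero_mul]; omega)]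
  have e1 : ∀ x : ℤ, v + x - (v + 0 * N) = x := by intro x; ring
  rw [e1, e1, cl_cast, cl_cast]
  constructor
  · exact fun h => h.2.2
  · exact fun h' => ⟨by omega, by simp only [zero_mul]; omega, h'⟩

end

lemma card_long {N : ℕ} (hN : 0 < N) (K : ℕ) :
    Nat.card {L : ℤ → ℤ → Prop // (PX N N L ∧ (win N L).ncard = K) ∧ ∃ a, L a (a + N)} =
      N * nccEdge (N + 1) K := by
  have hN' : (0 : ℤ) < N := by exact_mod_cast hN
  let Φ : Fin N × {E : Finset (Sym2 (Fin (N + 1))) // IsNCC E ∧ E.card = K ∧ HasEdge1n E} →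
      {L : ℤ → ℤ → Prop // (PX N N L ∧ (win N L).ncard = K) ∧ ∃ a, L a (a + N)} :=
    fun p => ⟨fromF N (p.1 : ℕ) p.2.1, ⟨fromF_PX hN p.2.2.1 p.2.2.2.2,
      by rw [fromF_card hN p.2.2.1.1, p.2.2.2.1]⟩, _, fromF_long hN p.2.2.2.2⟩
  have hΦ : Function.Bijective Φ := by
    constructor
    · rintro ⟨i, F, h1, h2, h3⟩ ⟨i', F', h1', h2', h3'⟩ he
      have he' : fromF N (i : ℕ) F = fromF N (i' : ℕ) F' := congrArg Subtype.val he
      have l1 : fromF N (i : ℕ) F _ _ := fromF_long hN h3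
      have l2 : fromF N (i' : ℕ) F' _ _ := fromF_long hN h3'
      rw [← he'] at l2
      have hp := fromF_PX (v := (i : ℕ)) hN h1 h3
      have hi := i.2
      have hi' := i'.2
      have hii : i = i' := by
        rcases lt_trichotomy i i' with h | h | h
        · rw [Fin.lt_def] at h
          exact (hp.nc _ _ _ _ l1 l2 (by omega) (by omega) (by omega)).elim
        · exact h
        · rw [Fin.lt_def] at h
          exact (hp.nc _ _ _ _ l2 l1 (by omega) (by omega) (by omega)).elim
      subst hii
      have hFF : F = F' := by
        rw [← toF_fromF (v := (i : ℕ)) hN h1 h3, he', toF_fromF hN h1' h3']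
      subst hFF
      rfl
    · rintro ⟨L, ⟨hL, hK⟩, a, ha⟩
      obtain ⟨j, j1, j2⟩ := exists_block hN 0 a
      have hv : L (a + (-j) * N) (a + N + (-j) * N) := (per_mul hL.per (-j) _ _).1 ha
      have hi : (((a + (-j) * N).toNat : ℕ) : ℤ) = a + (-j) * N :=
        Int.toNat_of_nonneg (by linarith)
      have hi2 : (a + (-j) * N).toNat < N := by
        have : (((a + (-j) * N).toNat : ℕ) : ℤ) < N := by rw [hi]; linarith
        exact_mod_cast this
      have e : a + N + (-j) * N = a + (-j) * N + N := by ring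
      rw [e, ← hi] at hv
      have hft := fromF_toF hN hL hv
      refine ⟨⟨⟨_, hi2⟩, ⟨toF N _ L, ⟨toF_nc hL, toF_conn hL hv⟩, ?_, toF_edge hN hL hv⟩⟩, ?_⟩
      · rw [← fromF_card (v := (((a + (-j) * N).toNat : ℕ) : ℤ)) hN (toF_nc hL), hft, hK]
      · exact Subtype.ext hft
  rw [← Nat.card_congr (Equiv.ofBijective Φ hΦ), Nat.card_prod, Nat.card_fin]
  rfl

lemma rot_zero (k m : ℕ) : nccRot 0 k m = 0 := by
  have : IsEmpty {E : Finset (Sym2 (Fin 0)) // IsNCC E ∧ E.card = k ∧ RotInv 0 m E} := by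
    constructor
    rintro ⟨E, ⟨-, h⟩, -⟩
    obtain ⟨x⟩ := h.nonempty
    exact x.elim0
  rw [nccRot, Nat.card_of_isEmpty]

lemma short_PX_iff {N : ℕ} {L : ℤ → ℤ → Prop} :
    PX N (N - 1) L ↔ PX N N L ∧ ¬ ∃ a, L a (a + N) := by
  constructor
  · intro h
    refine ⟨⟨fun a b hab => ?_, h.per, h.nc, h.conn⟩, ?_⟩
    · have := h.len a b hab
      omega
    · rintro ⟨a, ha⟩
      have := h.len _ _ ha
      omega
  · rintro ⟨h, h2⟩
    refine ⟨fun a b hab => ?_, h.per, h.nc, h.conn⟩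
    have := h.len a b hab
    have : b ≠ a + N := by
      rintro rfl
      exact h2 ⟨a, hab⟩
    omega

lemma main (N K d : ℕ) (hN : 0 < N) (hd : 3 ≤ d) :
    nccRot (d * N) (d * K) N = N * nccEdge (N + 1) K + nccRot (2 * N) (2 * K) N := by
  have : NeZero (d * N) := ⟨by positivity⟩
  have : NeZero (2 * N) := ⟨by positivity⟩
  have h3 : 3 * N ≤ d * N := Nat.mul_le_mul_right _ hd
  let e1 := equivA (n := d * N) (M := N) hN (by omega) rfl (by omega) K
  let e2 := equivA (n := 2 * N) (M := N - 1) hN le_rfl rfl (by push_cast; omega) K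
  have c1 : nccRot (d * N) (d * K) N =
      Nat.card {L : ℤ → ℤ → Prop // PX N N L ∧ (win N L).ncard = K} := by
    rw [← Nat.card_congr e1, nccRot]
    apply Nat.card_congr
    apply Equiv.subtypeEquivRight
    intro E
    exact ⟨fun h => ⟨h, short3 hN hd rfl h.1.1 h.2.2⟩, fun h => h.1⟩
  have c2 : nccRot (2 * N) (2 * K) N =
      Nat.card {L : ℤ → ℤ → Prop // (PX N N L ∧ (win N L).ncard = K) ∧ ¬ ∃ a, L a (a + N)} := by
    have : ∀ L : ℤ → ℤ → Prop, ((PX N N L ∧ (win N L).ncard = K) ∧ ¬ ∃ a, L a (a + N)) ↔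
        (PX N (N - 1) L ∧ (win N L).ncard = K) := by
      intro L
      rw [short_PX_iff]
      tauto
    rw [Nat.card_congr (Equiv.subtypeEquivRight this), ← Nat.card_congr e2, nccRot]
    apply Nat.card_congr
    apply Equiv.subtypeEquivRight
    intro E
    exact ⟨fun h => ⟨h, short2 hN rfl h.1.1 h.2.2 K h.2.1⟩, fun h => h.1⟩
  have hfin : Finite {L : ℤ → ℤ → Prop // PX N N L ∧ (win N L).ncard = K} := Finite.of_equiv _ e1
  rw [c1, c2, ← card_long hN K]
  classical
  let P : (ℤ → ℤ → Prop) → Prop := fun L => PX N N L ∧ (win N L).ncard = K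
  let Q : {L // P L} → Prop := fun L => ∃ a, L.1 a (a + N)
  have hfin' : Finite {L // P L} := hfin
  have f1 := Nat.card_congr (Equiv.subtypeSubtypeEquivSubtypeInter P (fun L => ∃ a, L a (a + N)))
  have f2 := Nat.card_congr (Equiv.subtypeSubtypeEquivSubtypeInter P (fun L => ¬ ∃ a, L a (a + N)))
  have f3 := Nat.card_congr (Equiv.sumCompl Q)
  rw [Nat.card_sum] at f3
  rw [← f1, ← f2]
  exact f3.symm

end NCR

/-- For `d ≥ 3` dividing both `n` and `k`, with `n' = n/d`, `k' = k/d`: the number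
of non-crossing connected graphs on `n` vertices with `k` edges invariant under
rotation by `2π/d` equals `n'·f_{n'+1, k'} + s₂(2n', 2k')`. -/
theorem stmt14 (n k d : ℕ) (hd : 3 ≤ d) (hdn : d ∣ n) (hdk : d ∣ k) :
    nccRot n k (n / d) =
      (n / d) * nccEdge (n / d + 1) (k / d) +
        nccRot (2 * (n / d)) (2 * (k / d)) (n / d) := by
  obtain ⟨N, rfl⟩ := hdn
  obtain ⟨K, rfl⟩ := hdk
  have hd0 : 0 < d := by omega
  rw [Nat.mul_div_cancel_left _ hd0, Nat.mul_div_cancel_left _ hd0]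
  rcases Nat.eq_zero_or_pos N with rfl | hN
  · simp [NCR.rot_zero]
  · exact NCR.main N K d hN hd
end
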